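/- arXiv:2006.04020 — 6 statements merged into one kernel-verified Lean document; each statement's English description precedes it below -/
import Mathlib

section
/- Fix α > 0 and T > 0, and let g : [0,T] → ℂ be continuous. Define u(x,t) := t^α (L_t^α g)(x) for x > 0 and 0 < t < T. Then u is twice continuously differentiable on (0,∞)×(0,T) and satisfies: ∂_t u(x,t) = x^{2(α-1)/α} ∂_{xx} u(x,t) for all x > 0, 0 < t < T; for every t ∈ (0,T), u(x,t) → t^α g(t) as x → 0⁺ and u(x,t) → 0 as x → ∞; and for every x > 0, u(x,t) → 0 as t → 0⁺. -/
open MeasureTheory Filter Set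

/-- The kernel `K_α(x,t) = (α^α/(2^α Γ(α/2))) x t^{-(α/2+1)} exp(-α² x^{2/α}/(4t))`. -/
noncomputable def Kker (α x t : ℝ) : ℝ :=
  (α ^ α / (2 ^ α * Real.Gamma (α / 2))) * x * t ^ (-(α / 2 + 1)) *
    Real.exp (-(α ^ 2) * x ^ (2 / α) / (4 * t))

/-- The transform `(L_t^α g)(x) = t^{-α} ∫_0^t K_α(x,t-τ) g(τ) τ^α dτ`. -/
noncomputable def Lt (α t : ℝ) (g : ℝ → ℂ) (x : ℝ) : ℂ :=
  ((t ^ (-α) : ℝ) : ℂ) *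
    ∫ τ in Set.Ioo (0 : ℝ) t, (Kker α x (t - τ) : ℂ) * g τ * ((τ ^ α : ℝ) : ℂ)

/-!
Put `b = α² x^(2/α) / 4`. Then `K_α(x, s) = b⁻¹ φ(s / b)`, where `φ` is the inverse Gamma
probability density, proportional to `s^(-(α/2 + 1)) exp (-1/s)` on `s > 0`. Since `exp (-b/s)` is
flat at `s = 0`, the kernel extended by zero to `s ≤ 0` is smooth in `(x, s)` for `x > 0`, and
`t^α L_t^α g` becomes the convolution over `ℝ` of this extension with `τ^α g(τ)` cut off to
`(0, T)`. No boundary term arises at `τ = t`, so derivatives fall on the kernel, which solves the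
equation pointwise. As `x → 0⁺`, `b → 0` and the kernel is an approximate identity; as `x → ∞` it is
bounded by a multiple of `b⁻¹ → 0`. For fixed `x > 0` the convolution is continuous in `t ∈ ℝ` and,
by causality, vanishes at `t = 0`.
-/

open scoped Topology ContDiff

section ParametricIntegral

lemma integrable_smul_of_hasCompactSupport {X E : Type*} [TopologicalSpace X] [T2Space X]
    [MeasurableSpace X] [OpensMeasurableSpace X] [NormedAddCommGroup E] [NormedSpace ℝ E]
    {μ : Measure X} {h : X → ℝ} {f : X → E} (hh : Continuous h) (hf : Integrable f μ)
    (hcf : HasCompactSupport f) : Integrable (fun x => h x • f x) μ :=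
  (integrableOn_iff_integrable_of_support_subset
    ((Function.support_smul_subset_right h f).trans (subset_tsupport f))).1
    (hf.integrableOn.continuousOn_smul hh.continuousOn hcf)

variable {X E : Type*} [NormedAddCommGroup X] [NormedSpace ℝ X]
  [NormedAddCommGroup E] [NormedSpace ℝ E] {U : Set ℝ}

lemma contDiffOn_deriv_fst {H : ℝ → X → E} {m n : ℕ∞ω} (hU : IsOpen U) (hmn : m + 1 ≤ n)
    (hH : ContDiffOn ℝ n ↿H (U ×ˢ univ)) :
    ContDiffOn ℝ m ↿(fun p x => deriv (H · x) p) (U ×ˢ univ) := by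
  have hopen : IsOpen (U ×ˢ (univ : Set X)) := hU.prod isOpen_univ
  refine ((hH.fderiv_of_isOpen hopen hmn).clm_apply
    (contDiffOn_const (c := ((1 : ℝ), (0 : X))))).congr ?_
  rintro ⟨p, x⟩ hpx
  have hdiff : DifferentiableAt ℝ ↿H (p, x) :=
    ((hH.contDiffAt (hopen.mem_nhds hpx)).differentiableAt
      (one_ne_zero.bot_lt.trans_le (le_add_self.trans hmn)).ne')
  exact (hdiff.hasFDerivAt.comp_hasDerivAt p
    ((hasDerivAt_id p).prodMk (hasDerivAt_const p x))).deriv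

variable [MeasurableSpace X] [OpensMeasurableSpace X] {μ : Measure X} {f : X → E}

lemma hasDerivAt_integral_smul {H : ℝ → X → ℝ} (hU : IsOpen U)
    (hH : ContDiffOn ℝ 1 ↿H (U ×ˢ univ)) (hf : Integrable f μ) (hcf : HasCompactSupport f)
    {p : ℝ} (hp : p ∈ U) :
    HasDerivAt (fun p => ∫ x, H p x • f x ∂μ) (∫ x, deriv (H · x) p • f x ∂μ) p := by
  have hslice {F : ℝ → X → ℝ} (hF : ContinuousOn ↿F (U ×ˢ univ)) {q : ℝ} (hq : q ∈ U) :
      Integrable (fun x => F q x • f x) μ :=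
    integrable_smul_of_hasCompactSupport
      (hF.comp_continuous (f := fun x => (q, x)) (by fun_prop) fun x => ⟨hq, mem_univ x⟩) hf hcf
  have hH' := (contDiffOn_deriv_fst (m := 0) hU (by simp) hH).continuousOn
  obtain ⟨S, hS, hSU, hSc⟩ := local_compact_nhds (hU.mem_nhds hp)
  obtain ⟨C, hC⟩ := (hSc.prod hcf).exists_bound_of_continuousOn
    (hH'.mono (prod_mono hSU (subset_univ _)))
  refine (hasDerivAt_integral_of_dominated_loc_of_deriv_le (bound := fun x => C * ‖f x‖)
    (F' := fun p x => deriv (H · x) p • f x) hS ?_ (hslice hH.continuousOn hp)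
    (hslice hH' hp).1 ?_ (hf.norm.const_mul C) ?_).2
  · filter_upwards [hU.mem_nhds hp] with q hq using (hslice hH.continuousOn hq).1
  · refine Eventually.of_forall fun x q hq => ?_
    by_cases hx : x ∈ tsupport f
    · rw [norm_smul]
      exact mul_le_mul_of_nonneg_right (hC (q, x) ⟨hq, hx⟩) (norm_nonneg _)
    · simp [image_eq_zero_of_notMem_tsupport hx]
  · refine Eventually.of_forall fun x q hq => ?_
    have hHx : ContDiffAt ℝ 1 (H · x) q :=
      (hH.contDiffAt ((hU.prod isOpen_univ).mem_nhds ⟨hSU hq, mem_univ x⟩)).comp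
        (f := fun q => (q, x)) q (by fun_prop)
    exact (hHx.differentiableAt one_ne_zero).hasDerivAt.smul_const (f x)

lemma iteratedDeriv_integral_smul {H : ℝ → X → ℝ} {n : ℕ} (hU : IsOpen U)
    (hH : ContDiffOn ℝ n ↿H (U ×ˢ univ)) (hf : Integrable f μ) (hcf : HasCompactSupport f)
    {p : ℝ} (hp : p ∈ U) :
    iteratedDeriv n (fun p => ∫ x, H p x • f x ∂μ) p =
      ∫ x, iteratedDeriv n (H · x) p • f x ∂μ := by
  induction n generalizing H with
  | zero => simp only [iteratedDeriv_zero]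
  | succ n ih =>
    have hderiv : deriv (fun p => ∫ x, H p x • f x ∂μ) =ᶠ[𝓝 p]
        fun p => ∫ x, deriv (H · x) p • f x ∂μ := by
      filter_upwards [hU.mem_nhds hp] with q hq
      exact (hasDerivAt_integral_smul hU (hH.of_le (by simp)) hf hcf hq).deriv
    simp only [iteratedDeriv_succ']
    rw [hderiv.iteratedDeriv_eq n]
    exact ih (contDiffOn_deriv_fst hU (by simp) hH)

end ParametricIntegral

section Convolution

open scoped Convolution

variable {G P E E' F : Type*} [NormedAddCommGroup G] [NormedSpace ℝ G] [FiniteDimensional ℝ G]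
  [MeasurableSpace G] [BorelSpace G] {μ : Measure G}
  [NormedAddCommGroup P] [NormedSpace ℝ P] [NormedAddCommGroup E] [NormedSpace ℝ E]
  [NormedAddCommGroup E'] [NormedSpace ℝ E'] [NormedAddCommGroup F] [NormedSpace ℝ F]

-- Near a given point the compactly supported `f` only sees `g` on a fixed ball, so `g` may be
-- multiplied by a bump function.
lemma contDiffOn_convolution_with_param_of_hasCompactSupport_left {f : G → E} {g : P → G → E'}
    {s : Set P} {n : ℕ∞} (L : E →L[ℝ] E' →L[ℝ] F) (hs : IsOpen s) (hf : LocallyIntegrable f μ)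
    (hcf : HasCompactSupport f) (hg : ContDiffOn ℝ n ↿g (s ×ˢ univ)) :
    ContDiffOn ℝ n (fun q : P × G => (f ⋆[L, μ] g q.1) q.2) (s ×ˢ univ) := by
  obtain ⟨R, hR, hfR⟩ := hcf.isBounded.subset_closedBall_lt 0 0
  refine contDiffOn_of_locally_contDiffOn fun ⟨p₀, x₀⟩ _ => ?_
  have hr : 0 < R + (‖x₀‖ + 1) := by positivity
  let χ : ContDiffBump (0 : G) := ⟨R + (‖x₀‖ + 1), R + (‖x₀‖ + 1) + 1, hr, lt_add_one _⟩
  have hcut : ContDiffOn ℝ n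
      (fun q : P × G => (f ⋆[L, μ] fun y => χ y • g q.1 y) q.2) (s ×ˢ univ) := by
    refine contDiffOn_convolution_right_with_param L hs (g := fun p y => χ y • g p y)
      (isCompact_closedBall (0 : G) χ.rOut) (fun p y _ hy => ?_) hf
      ((χ.contDiff.comp contDiff_snd).contDiffOn.smul hg)
    rw [χ.zero_of_le_dist (not_le.1 hy).le, zero_smul]
  refine ⟨univ ×ˢ Metric.ball x₀ 1, isOpen_univ.prod Metric.isOpen_ball, by simp,
    (hcut.mono inter_subset_left).congr ?_⟩
  rintro ⟨p, x⟩ ⟨-, -, hx⟩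
  refine integral_congr_ae (Eventually.of_forall fun y => ?_)
  by_cases hy : y ∈ tsupport f
  · have hχ : χ (x - y) = 1 := by
      refine χ.one_of_mem_closedBall ?_
      rw [mem_closedBall_zero_iff]
      have hyR : ‖y‖ ≤ R := by simpa using hfR hy
      have hx₀ : ‖x - x₀‖ < 1 := by simpa [dist_eq_norm] using hx
      calc ‖x - y‖ ≤ ‖x‖ + ‖y‖ := norm_sub_le x y
        _ ≤ (‖x₀‖ + ‖x - x₀‖) + R := add_le_add (norm_le_norm_add_norm_sub' x x₀) hyR
        _ ≤ R + (‖x₀‖ + 1) := by linarith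
    simp [hχ]
  · simp [image_eq_zero_of_notMem_tsupport hy]

end Convolution

section RpowExpNegDiv

/-- The heat-type profile `s ↦ s ^ (-γ) * exp (-b / s)`, extended by zero to `s ≤ 0` so that for
`0 < b` it is smooth on the whole line. For `b = 1` it is the unnormalised density of an inverse
Gamma distribution. -/
noncomputable def rpowExpNegDiv (γ b : ℝ) : ℝ → ℝ :=
  (Ioi 0).indicator fun s => s ^ (-γ) * Real.exp (-b / s)

variable {γ b s : ℝ}

lemma rpowExpNegDiv_of_pos (hs : 0 < s) :
    rpowExpNegDiv γ b s = s ^ (-γ) * Real.exp (-b / s) :=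
  indicator_of_mem (mem_Ioi.2 hs) _

lemma rpowExpNegDiv_of_nonpos (hs : s ≤ 0) : rpowExpNegDiv γ b s = 0 :=
  indicator_of_notMem (notMem_Ioi.2 hs) _

lemma rpowExpNegDiv_nonneg : 0 ≤ rpowExpNegDiv γ b s :=
  indicator_nonneg (fun _ hs => mul_nonneg (Real.rpow_nonneg (le_of_lt hs) _) (Real.exp_nonneg _)) s

lemma mul_rpowExpNegDiv_add_one : s * rpowExpNegDiv (γ + 1) b s = rpowExpNegDiv γ b s := by
  rcases le_or_gt s 0 with hs | hs
  · simp only [rpowExpNegDiv_of_nonpos hs, mul_zero]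
  · rw [rpowExpNegDiv_of_pos hs, rpowExpNegDiv_of_pos hs, neg_add, ← sub_eq_add_neg,
      Real.rpow_sub_one hs.ne']
    field_simp

lemma rpowExpNegDiv_eq_rpow_mul (hb : 0 < b) :
    rpowExpNegDiv γ b s = b ^ (-γ) * rpowExpNegDiv γ 1 (b⁻¹ * s) := by
  rcases le_or_gt s 0 with hs | hs
  · rw [rpowExpNegDiv_of_nonpos hs, rpowExpNegDiv_of_nonpos
      (mul_nonpos_of_nonneg_of_nonpos (inv_nonneg.2 hb.le) hs), mul_zero]
  · rw [rpowExpNegDiv_of_pos hs, rpowExpNegDiv_of_pos (mul_pos (inv_pos.2 hb) hs), ← mul_assoc,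
      ← Real.mul_rpow hb.le (by positivity), mul_inv_cancel_left₀ hb.ne']
    congr 2
    field_simp

-- With `y = b / s` this is `y ^ γ * exp (-y) ≤ γ ^ γ`, which follows from `y / γ ≤ exp (y / γ)`.
lemma rpowExpNegDiv_le (hγ : 0 < γ) (hb : 0 < b) : rpowExpNegDiv γ b s ≤ (γ / b) ^ γ := by
  rcases le_or_gt s 0 with hs | hs
  · rw [rpowExpNegDiv_of_nonpos hs]
    positivity
  · have hbase : s⁻¹ ≤ γ / b * Real.exp (b / s / γ) := by
      have := (lt_add_one _).le.trans (Real.add_one_le_exp (b / s / γ))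
      calc s⁻¹ = γ / b * (b / s / γ) := by field_simp
        _ ≤ γ / b * Real.exp (b / s / γ) := by gcongr
    calc rpowExpNegDiv γ b s = s⁻¹ ^ γ * Real.exp (-b / s) := by
          rw [rpowExpNegDiv_of_pos hs, Real.rpow_neg hs.le, Real.inv_rpow hs.le]
      _ ≤ (γ / b * Real.exp (b / s / γ)) ^ γ * Real.exp (-b / s) := by gcongr
      _ = (γ / b) ^ γ := by
          rw [Real.mul_rpow (by positivity) (Real.exp_nonneg _), ← Real.exp_mul, mul_assoc,
            ← Real.exp_add, div_mul_cancel₀ _ hγ.ne', neg_div, add_neg_cancel, Real.exp_zero,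
            mul_one]

lemma tendsto_rpowExpNegDiv_nhds_zero (hb : 0 < b) :
    Tendsto (rpowExpNegDiv γ b) (𝓝 0) (𝓝 0) := by
  have hleft : Tendsto (rpowExpNegDiv γ b) (𝓝[≤] 0) (𝓝 0) := by
    refine tendsto_const_nhds.congr' ?_
    filter_upwards [self_mem_nhdsWithin] with s hs using (rpowExpNegDiv_of_nonpos hs).symm
  have hright : Tendsto (rpowExpNegDiv γ b) (𝓝[>] 0) (𝓝 0) := by
    refine ((tendsto_rpow_mul_exp_neg_mul_atTop_nhds_zero γ b hb).comp
      tendsto_inv_nhdsGT_zero).congr' ?_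
    filter_upwards [self_mem_nhdsWithin] with s (hs : 0 < s)
    rw [rpowExpNegDiv_of_pos hs, Function.comp_apply, Real.inv_rpow hs.le, Real.rpow_neg hs.le,
      div_eq_mul_inv]
  simpa only [nhdsLE_sup_nhdsGT] using hleft.sup hright

lemma tendsto_rpowExpNegDiv_cobounded (hγ : 0 < γ) (hb : 0 ≤ b) :
    Tendsto (rpowExpNegDiv γ b) (Bornology.cobounded ℝ) (𝓝 0) := by
  rw [Metric.cobounded_eq_cocompact, cocompact_eq_atBot_atTop, tendsto_sup]
  constructor
  · refine tendsto_const_nhds.congr' ?_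
    filter_upwards [eventually_le_atBot 0] with s hs using (rpowExpNegDiv_of_nonpos hs).symm
  · refine squeeze_zero' (Eventually.of_forall fun _ => rpowExpNegDiv_nonneg) ?_
      (tendsto_rpow_neg_atTop hγ)
    filter_upwards [eventually_gt_atTop 0] with s hs
    rw [rpowExpNegDiv_of_pos hs]
    exact mul_le_of_le_one_right (Real.rpow_nonneg hs.le _)
      (Real.exp_le_one_iff.2 (div_nonpos_of_nonpos_of_nonneg (neg_nonpos.2 hb) hs.le))

lemma hasDerivAt_rpowExpNegDiv_scale :
    HasDerivAt (rpowExpNegDiv γ · s) (-rpowExpNegDiv (γ + 1) b s) b := by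
  rcases le_or_gt s 0 with hs | hs
  · simpa only [rpowExpNegDiv_of_nonpos hs, neg_zero] using hasDerivAt_const b (0 : ℝ)
  · simp only [rpowExpNegDiv_of_pos hs]
    refine ((((hasDerivAt_id b).neg.div_const s).exp).const_mul (s ^ (-γ))).congr_deriv ?_
    rw [neg_add, ← sub_eq_add_neg, Real.rpow_sub_one hs.ne', Pi.neg_apply, id]
    ring

lemma hasDerivAt_rpowExpNegDiv (hb : 0 < b) (γ s : ℝ) :
    HasDerivAt (rpowExpNegDiv γ b)
      (-γ * rpowExpNegDiv (γ + 1) b s + b * rpowExpNegDiv (γ + 2) b s) s := by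
  rcases lt_trichotomy s 0 with hs | rfl | hs
  · rw [rpowExpNegDiv_of_nonpos hs.le, rpowExpNegDiv_of_nonpos hs.le, mul_zero, mul_zero, add_zero]
    refine (hasDerivAt_const s (0 : ℝ)).congr_of_eventuallyEq ?_
    filter_upwards [Iio_mem_nhds hs] with r hr using rpowExpNegDiv_of_nonpos (le_of_lt hr)
  · rw [rpowExpNegDiv_of_nonpos le_rfl, rpowExpNegDiv_of_nonpos le_rfl, mul_zero, mul_zero,
      add_zero, hasDerivAt_iff_tendsto_slope]
    refine ((tendsto_rpowExpNegDiv_nhds_zero (γ := γ + 1) hb).mono_left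
      nhdsWithin_le_nhds).congr' ?_
    filter_upwards [self_mem_nhdsWithin] with s (hs : s ≠ 0)
    rw [slope_def_field, rpowExpNegDiv_of_nonpos le_rfl, sub_zero, sub_zero, eq_div_iff hs,
      mul_comm, mul_rpowExpNegDiv_add_one]
  · have hdiv : HasDerivAt (fun s => -b / s) (b / s ^ 2) s := by
      simpa [div_eq_mul_inv] using (hasDerivAt_inv hs.ne').const_mul (-b)
    have heq : rpowExpNegDiv γ b =ᶠ[𝓝 s] fun s => s ^ (-γ) * Real.exp (-b / s) := by
      filter_upwards [Ioi_mem_nhds hs] with r hr using rpowExpNegDiv_of_pos hr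
    refine (((Real.hasDerivAt_rpow_const (Or.inl hs.ne')).mul
      hdiv.exp).congr_of_eventuallyEq heq).congr_deriv ?_
    rw [rpowExpNegDiv_of_pos hs, rpowExpNegDiv_of_pos hs, neg_add, neg_add, ← sub_eq_add_neg,
      ← sub_eq_add_neg, Real.rpow_sub_one hs.ne', Real.rpow_sub hs, Real.rpow_two]
    ring

lemma contDiff_rpowExpNegDiv (hb : 0 < b) : ContDiff ℝ ∞ (rpowExpNegDiv γ b) := by
  refine contDiff_infty.2 fun n => ?_
  induction n generalizing γ with
  | zero =>
    exact contDiff_zero.2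
      (continuous_iff_continuousAt.2 fun s => (hasDerivAt_rpowExpNegDiv hb γ s).continuousAt)
  | succ n ih =>
    rw [Nat.cast_succ, contDiff_succ_iff_deriv]
    refine ⟨fun s => (hasDerivAt_rpowExpNegDiv hb γ s).differentiableAt, by simp, ?_⟩
    rw [funext fun s => (hasDerivAt_rpowExpNegDiv hb γ s).deriv]
    exact (contDiff_const.mul ih).add (contDiff_const.mul ih)

lemma contDiffOn_rpowExpNegDiv : ContDiffOn ℝ ∞ ↿(rpowExpNegDiv γ) (Ioi 0 ×ˢ univ) := by
  have hne : ∀ q ∈ Ioi (0 : ℝ) ×ˢ (univ : Set ℝ), q.1 ≠ 0 := fun q hq => (mem_Ioi.1 hq.1).ne'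
  exact ((contDiffOn_fst.rpow_const_of_ne hne).mul ((contDiff_rpowExpNegDiv one_pos).comp_contDiffOn
    ((contDiffOn_fst.inv hne).mul contDiffOn_snd))).congr
    fun q hq => rpowExpNegDiv_eq_rpow_mul hq.1

-- The substitution `w ↦ w⁻¹` turns this into Euler's integral for the Gamma function.
lemma integral_rpowExpNegDiv_add_one (hγ : 0 < γ) (hb : 0 < b) :
    ∫ s, rpowExpNegDiv (γ + 1) b s = (1 / b) ^ γ * Real.Gamma γ := by
  rw [← Real.integral_rpow_mul_exp_neg_mul_Ioi hγ hb, ← integral_comp_rpow_Ioi _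
    (neg_ne_zero.2 one_ne_zero), rpowExpNegDiv, integral_indicator measurableSet_Ioi]
  refine setIntegral_congr_fun measurableSet_Ioi fun s (hs : 0 < s) => ?_
  rw [abs_neg, abs_one, one_mul, smul_eq_mul, ← mul_assoc, ← Real.rpow_mul hs.le,
    ← Real.rpow_add hs, Real.rpow_neg_one, neg_div, div_eq_mul_inv]
  ring_nf

end RpowExpNegDiv

section Kernel

/-- The kernel `Kker α x`, extended by zero to nonpositive times, so that the integral over `(0, t)`
in `Lt` becomes a convolution over `ℝ`. -/
noncomputable def causalKker (α x : ℝ) : ℝ → ℝ :=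
  (Ioi 0).indicator (Kker α x)

/-- The time scale of `Kker α x`: up to the factor `(kkerScale α x)⁻¹`, the kernel is a fixed
profile evaluated at time divided by `kkerScale α x`. -/
noncomputable def kkerScale (α x : ℝ) : ℝ :=
  α ^ 2 / 4 * x ^ (2 / α)

variable {α x s : ℝ}

lemma kkerScale_pos (hα : 0 < α) (hx : 0 < x) : 0 < kkerScale α x :=
  mul_pos (div_pos (pow_pos hα 2) four_pos) (Real.rpow_pos_of_pos hx _)

lemma hasDerivAt_kkerScale (hx : x ≠ 0) :
    HasDerivAt (kkerScale α) (2 / α * kkerScale α x / x) x := by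
  refine ((Real.hasDerivAt_rpow_const (Or.inl hx)).const_mul (α ^ 2 / 4)).congr_deriv ?_
  rw [Real.rpow_sub_one hx, kkerScale]
  ring

lemma contDiffOn_kkerScale (α : ℝ) : ContDiffOn ℝ ∞ (kkerScale α) (Ioi 0) :=
  contDiffOn_const.mul (contDiffOn_id.rpow_const_of_ne fun _ hx => ne_of_gt hx)

lemma kkerScale_rpow_half (hα : 0 < α) (hx : 0 ≤ x) :
    kkerScale α x ^ (α / 2) = α ^ α / 2 ^ α * x := by
  rw [kkerScale, show α ^ 2 / 4 = (α / 2) ^ (2 : ℝ) by rw [Real.rpow_two]; ring,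
    Real.mul_rpow (by positivity) (by positivity), ← Real.rpow_mul (by positivity),
    ← Real.rpow_mul hx, mul_div_cancel₀ α two_ne_zero, div_mul_div_cancel₀' two_ne_zero,
    div_self hα.ne', Real.rpow_one, Real.div_rpow hα.le zero_le_two]

lemma tendsto_kkerScale_nhdsGT_zero (hα : 0 < α) :
    Tendsto (kkerScale α) (𝓝[>] 0) (𝓝[>] 0) := by
  refine tendsto_nhdsWithin_iff.2 ⟨?_, ?_⟩
  · have hcont : Continuous (kkerScale α) :=
      continuous_const.mul (Real.continuous_rpow_const (by positivity))
    have hzero : kkerScale α 0 = 0 := by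
      rw [kkerScale, Real.zero_rpow (by positivity), mul_zero]
    exact (hcont.tendsto' 0 0 hzero).mono_left nhdsWithin_le_nhds
  · filter_upwards [self_mem_nhdsWithin] with x hx using kkerScale_pos hα hx

lemma tendsto_kkerScale_atTop (hα : 0 < α) : Tendsto (kkerScale α) atTop atTop :=
  (tendsto_rpow_atTop (by positivity)).const_mul_atTop (by positivity)

lemma causalKker_of_nonpos (hs : s ≤ 0) : causalKker α x s = 0 :=
  indicator_of_notMem (notMem_Ioi.2 hs) _

lemma causalKker_of_pos (hs : 0 < s) : causalKker α x s = Kker α x s :=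
  indicator_of_mem (mem_Ioi.2 hs) _

lemma causalKker_eq_mul_rpowExpNegDiv (α x s : ℝ) :
    causalKker α x s = α ^ α / (2 ^ α * Real.Gamma (α / 2)) *
      (x * rpowExpNegDiv (α / 2 + 1) (kkerScale α x) s) := by
  rcases le_or_gt s 0 with hs | hs
  · rw [causalKker_of_nonpos hs, rpowExpNegDiv_of_nonpos hs, mul_zero, mul_zero]
  · rw [causalKker_of_pos hs, rpowExpNegDiv_of_pos hs, Kker, kkerScale, mul_assoc, mul_assoc]
    congr 4
    field_simp

lemma causalKker_eq_comp_scale (hα : 0 < α) (hx : 0 < x) (s : ℝ) :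
    causalKker α x s = (kkerScale α x)⁻¹ *
      ((Real.Gamma (α / 2))⁻¹ * rpowExpNegDiv (α / 2 + 1) 1 ((kkerScale α x)⁻¹ * s)) := by
  have hb := kkerScale_pos hα hx
  have hconst : α ^ α / (2 ^ α * Real.Gamma (α / 2)) * x =
      kkerScale α x ^ (α / 2) * (Real.Gamma (α / 2))⁻¹ := by
    rw [kkerScale_rpow_half hα hx.le]
    ring
  rw [causalKker_eq_mul_rpowExpNegDiv, rpowExpNegDiv_eq_rpow_mul hb, ← mul_assoc, hconst, neg_add,
    Real.rpow_add hb, Real.rpow_neg_one, Real.rpow_neg hb.le]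
  field_simp

lemma contDiffOn_causalKker (hα : 0 < α) :
    ContDiffOn ℝ ∞ ↿(causalKker α) (Ioi 0 ×ˢ univ) := by
  have hscale : ContDiffOn ℝ ∞ (fun q : ℝ × ℝ => (kkerScale α q.1, q.2)) (Ioi 0 ×ˢ univ) :=
    ((contDiffOn_kkerScale α).comp contDiffOn_fst fun _ hq => hq.1).prodMk contDiffOn_snd
  exact (contDiffOn_const.mul (contDiffOn_fst.mul (contDiffOn_rpowExpNegDiv.comp hscale
    fun q hq => ⟨kkerScale_pos hα hq.1, mem_univ _⟩))).congr
    fun q _ => causalKker_eq_mul_rpowExpNegDiv α q.1 q.2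

lemma causalKker_nonneg (hα : 0 < α) (hx : 0 < x) : 0 ≤ causalKker α x s := by
  rw [causalKker_eq_comp_scale hα hx]
  exact mul_nonneg (inv_nonneg.2 (kkerScale_pos hα hx).le)
    (mul_nonneg (inv_nonneg.2 (Real.Gamma_pos_of_pos (half_pos hα)).le) rpowExpNegDiv_nonneg)

lemma causalKker_le (hα : 0 < α) (hx : 0 < x) :
    causalKker α x s ≤
      (kkerScale α x)⁻¹ * ((Real.Gamma (α / 2))⁻¹ * (α / 2 + 1) ^ (α / 2 + 1)) := by
  have hb := kkerScale_pos hα hx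
  rw [causalKker_eq_comp_scale hα hx]
  gcongr
  simpa only [div_one] using rpowExpNegDiv_le (by positivity) one_pos

lemma hasDerivAt_rpowExpNegDiv_kkerScale (hx : x ≠ 0) (γ s : ℝ) :
    HasDerivAt (fun x => rpowExpNegDiv γ (kkerScale α x) s)
      (-rpowExpNegDiv (γ + 1) (kkerScale α x) s * (2 / α * kkerScale α x / x)) x :=
  hasDerivAt_rpowExpNegDiv_scale.comp x (hasDerivAt_kkerScale hx)

lemma deriv_causalKker_time (hα : 0 < α) (hx : 0 < x) (s : ℝ) :
    deriv (causalKker α x) s = α ^ α / (2 ^ α * Real.Gamma (α / 2)) *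
      (x * (-(α / 2 + 1) * rpowExpNegDiv (α / 2 + 2) (kkerScale α x) s +
        kkerScale α x * rpowExpNegDiv (α / 2 + 3) (kkerScale α x) s)) := by
  rw [funext (causalKker_eq_mul_rpowExpNegDiv α x), (((hasDerivAt_rpowExpNegDiv
    (kkerScale_pos hα hx) (α / 2 + 1) s).const_mul x).const_mul _).deriv]
  ring_nf

lemma deriv_causalKker_space (hx : 0 < x) (s : ℝ) :
    deriv (causalKker α · s) x = α ^ α / (2 ^ α * Real.Gamma (α / 2)) *
      (rpowExpNegDiv (α / 2 + 1) (kkerScale α x) s -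
        2 / α * kkerScale α x * rpowExpNegDiv (α / 2 + 2) (kkerScale α x) s) := by
  simp only [causalKker_eq_mul_rpowExpNegDiv]
  refine ((((hasDerivAt_id x).mul (hasDerivAt_rpowExpNegDiv_kkerScale hx.ne' (α / 2 + 1)
    s)).const_mul _).congr_deriv ?_).deriv
  simp only [id, add_assoc, one_add_one_eq_two]
  field_simp
  ring

lemma iteratedDeriv_two_causalKker (hx : 0 < x) (s : ℝ) :
    iteratedDeriv 2 (causalKker α · s) x = α ^ α / (2 ^ α * Real.Gamma (α / 2)) *
      (4 * kkerScale α x / (α ^ 2 * x) *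
        (-(α / 2 + 1) * rpowExpNegDiv (α / 2 + 2) (kkerScale α x) s +
          kkerScale α x * rpowExpNegDiv (α / 2 + 3) (kkerScale α x) s)) := by
  rw [iteratedDeriv_succ, iteratedDeriv_one, EventuallyEq.deriv_eq
    (eventually_of_mem (Ioi_mem_nhds hx) fun y hy => deriv_causalKker_space hy s)]
  refine ((((hasDerivAt_rpowExpNegDiv_kkerScale hx.ne' _ s).sub
    (((hasDerivAt_kkerScale hx.ne').const_mul (2 / α)).mul
      (hasDerivAt_rpowExpNegDiv_kkerScale hx.ne' _ s))).const_mul _).congr_deriv ?_).deriv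
  simp only [add_assoc, one_add_one_eq_two, two_add_one_eq_three]
  field_simp
  ring

lemma deriv_causalKker_eq_rpow_mul_iteratedDeriv (hα : 0 < α) (hx : 0 < x) (s : ℝ) :
    deriv (causalKker α x) s = x ^ (2 * (α - 1) / α) * iteratedDeriv 2 (causalKker α · s) x := by
  have hpow : x ^ (2 * (α - 1) / α) * (4 * kkerScale α x / (α ^ 2 * x)) = x := by
    rw [show 2 * (α - 1) / α = 2 - 2 / α by field_simp, Real.rpow_sub hx, Real.rpow_two, kkerScale]
    field_simp
  rw [deriv_causalKker_time hα hx, iteratedDeriv_two_causalKker hx, mul_left_comm (x ^ _),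
    ← mul_assoc (x ^ _), hpow]

end Kernel

section Potential

/-- The heat potential generated by `f`: the convolution in time of the kernel with `f`. -/
noncomputable def kkerPotential {E : Type*} [NormedAddCommGroup E] [NormedSpace ℝ E] (α : ℝ)
    (f : ℝ → E) (x t : ℝ) : E :=
  ∫ τ, causalKker α x (t - τ) • f τ

variable {E : Type*} [NormedAddCommGroup E] [NormedSpace ℝ E] {f : ℝ → E} {α x t : ℝ}

lemma contDiffOn_kkerPotential (hα : 0 < α) (hf : LocallyIntegrable f) (hcf : HasCompactSupport f) :
    ContDiffOn ℝ ∞ ↿(kkerPotential α f) (Ioi 0 ×ˢ univ) :=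
  contDiffOn_convolution_with_param_of_hasCompactSupport_left
    (ContinuousLinearMap.lsmul ℝ ℝ).flip isOpen_Ioi hf hcf (contDiffOn_causalKker hα)

lemma deriv_kkerPotential_eq_rpow_smul_iteratedDeriv (hα : 0 < α) (hf : Integrable f)
    (hcf : HasCompactSupport f) (hx : 0 < x) (t : ℝ) :
    deriv (kkerPotential α f x) t =
      x ^ (2 * (α - 1) / α) • iteratedDeriv 2 (kkerPotential α f · t) x := by
  have htime : ContDiffOn ℝ ∞ ↿(fun t τ => causalKker α x (t - τ)) (univ ×ˢ univ) :=
    (contDiffOn_causalKker hα).comp (f := fun q : ℝ × ℝ => (x, q.1 - q.2)) (by fun_prop)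
      fun _ _ => ⟨hx, mem_univ _⟩
  have hspace : ContDiffOn ℝ ∞ ↿(fun x τ => causalKker α x (t - τ)) (Ioi 0 ×ˢ univ) :=
    (contDiffOn_causalKker hα).comp (f := fun q : ℝ × ℝ => (q.1, t - q.2)) (by fun_prop)
      fun _ hq => ⟨hq.1, mem_univ _⟩
  calc deriv (kkerPotential α f x) t = ∫ τ, deriv (fun t => causalKker α x (t - τ)) t • f τ :=
        (hasDerivAt_integral_smul isOpen_univ (htime.of_le (by simp)) hf hcf (mem_univ t)).deriv
    _ = ∫ τ, x ^ (2 * (α - 1) / α) • iteratedDeriv 2 (causalKker α · (t - τ)) x • f τ := by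
        simp only [deriv_comp_sub_const, deriv_causalKker_eq_rpow_mul_iteratedDeriv hα hx,
          mul_smul]
    _ = x ^ (2 * (α - 1) / α) • iteratedDeriv 2 (kkerPotential α f · t) x := by
        rw [integral_smul]
        exact congrArg _ (iteratedDeriv_integral_smul isOpen_Ioi (contDiffOn_infty.1 hspace 2)
          hf hcf hx).symm

-- After rescaling time, `causalKker α x` is an approximate identity as `x → 0⁺`.
lemma tendsto_kkerPotential_nhdsGT_zero [CompleteSpace E] (hα : 0 < α) (hf : Integrable f)
    (hft : ContinuousAt f t) :
    Tendsto (kkerPotential α f · t) (𝓝[>] 0) (𝓝 (f t)) := by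
  have hΓ := Real.Gamma_pos_of_pos (half_pos hα)
  have hmass : ∫ s, (Real.Gamma (α / 2))⁻¹ * rpowExpNegDiv (α / 2 + 1) 1 s = 1 := by
    rw [integral_const_mul, integral_rpowExpNegDiv_add_one (half_pos hα) one_pos, div_one,
      Real.one_rpow, one_mul, inv_mul_cancel₀ hΓ.ne']
  have hdecay : Tendsto (fun s : ℝ => ‖s‖ ^ Module.finrank ℝ ℝ *
      ((Real.Gamma (α / 2))⁻¹ * rpowExpNegDiv (α / 2 + 1) 1 s)) (Bornology.cobounded ℝ) (𝓝 0) := by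
    have habs (s : ℝ) : ‖s‖ * rpowExpNegDiv (α / 2 + 1) 1 s = rpowExpNegDiv (α / 2) 1 s := by
      rcases le_or_gt s 0 with hs | hs
      · simp only [rpowExpNegDiv_of_nonpos hs, mul_zero]
      · rw [Real.norm_of_nonneg hs.le, mul_rpowExpNegDiv_add_one]
    simp only [Module.finrank_self, pow_one, mul_left_comm _ (Real.Gamma (α / 2))⁻¹, habs]
    simpa only [mul_zero] using
      (tendsto_rpowExpNegDiv_cobounded (half_pos hα) zero_le_one).const_mul
        (Real.Gamma (α / 2))⁻¹
  have hpeak := (tendsto_integral_comp_smul_smul_of_integrable' (μ := volume)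
    (fun s => mul_nonneg (inv_nonneg.2 hΓ.le) rpowExpNegDiv_nonneg) hmass hdecay hf hft).comp
      (tendsto_inv_nhdsGT_zero.comp (tendsto_kkerScale_nhdsGT_zero hα))
  refine hpeak.congr' ?_
  filter_upwards [self_mem_nhdsWithin] with x hx
  simp only [kkerPotential, causalKker_eq_comp_scale hα hx, Function.comp_apply,
    Module.finrank_self, pow_one, smul_eq_mul]

lemma tendsto_kkerPotential_atTop (hα : 0 < α) (hf : Integrable f) (t : ℝ) :
    Tendsto (kkerPotential α f · t) atTop (𝓝 0) := by
  have hbound : Tendsto (fun x => ((kkerScale α x)⁻¹ *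
      ((Real.Gamma (α / 2))⁻¹ * (α / 2 + 1) ^ (α / 2 + 1))) * ∫ τ, ‖f τ‖) atTop (𝓝 0) := by
    simpa only [zero_mul, Function.comp_apply] using
      ((tendsto_inv_atTop_zero.comp (tendsto_kkerScale_atTop hα)).mul_const _).mul_const _
  refine squeeze_zero_norm' ?_ hbound
  filter_upwards [eventually_gt_atTop 0] with x hx
  rw [← integral_const_mul]
  refine norm_integral_le_of_norm_le (hf.norm.const_mul _) (Eventually.of_forall fun τ => ?_)
  rw [norm_smul, Real.norm_of_nonneg (causalKker_nonneg hα hx)]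
  exact mul_le_mul_of_nonneg_right (causalKker_le hα hx) (norm_nonneg _)

lemma kkerPotential_zero (h0 : ∀ τ ≤ 0, f τ = 0) : kkerPotential α f x 0 = 0 := by
  refine integral_eq_zero_of_ae (Eventually.of_forall fun τ => ?_)
  rcases le_total τ 0 with hτ | hτ
  · simp only [h0 τ hτ, smul_zero, Pi.zero_apply]
  · simp only [causalKker_of_nonpos (sub_nonpos.2 hτ), zero_smul, Pi.zero_apply]

lemma tendsto_kkerPotential_time_zero (hα : 0 < α) (hf : LocallyIntegrable f)
    (hcf : HasCompactSupport f) (h0 : ∀ τ ≤ 0, f τ = 0) (hx : 0 < x) :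
    Tendsto (kkerPotential α f x) (𝓝 0) (𝓝 0) := by
  have hcont : Continuous (kkerPotential α f x) :=
    (contDiffOn_kkerPotential hα hf hcf).continuousOn.comp_continuous
      (f := fun t => (x, t)) (by fun_prop) fun _ => ⟨hx, mem_univ _⟩
  exact hcont.tendsto' 0 0 (kkerPotential_zero h0)

end Potential

section Source

/-- The density `τ ↦ τ ^ α * g τ` of the integral in `Lt`, cut off to `(0, T)`. By causality of the
kernel, the cutoff at `T` does not affect the potential at times before `T`. -/
noncomputable def kkerSource (α T : ℝ) (g : ℝ → ℂ) : ℝ → ℂ :=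
  (Ioo 0 T).indicator fun τ => ((τ ^ α : ℝ) : ℂ) * g τ

variable {α T t x : ℝ} {g : ℝ → ℂ}

lemma kkerSource_of_mem (ht : t ∈ Ioo 0 T) : kkerSource α T g t = ((t ^ α : ℝ) : ℂ) * g t :=
  indicator_of_mem ht _

lemma kkerSource_of_notMem (ht : t ∉ Ioo 0 T) : kkerSource α T g t = 0 :=
  indicator_of_notMem ht _

lemma hasCompactSupport_kkerSource : HasCompactSupport (kkerSource α T g) :=
  HasCompactSupport.intro isCompact_Icc fun _ hτ =>
    kkerSource_of_notMem fun h => hτ (Ioo_subset_Icc_self h)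

lemma continuousAt_kkerSource (ht : t ∈ Ioo 0 T) (hg : ContinuousAt g t) :
    ContinuousAt (kkerSource α T g) t := by
  have hpow : ContinuousAt (fun τ : ℝ => ((τ ^ α : ℝ) : ℂ)) t :=
    Complex.continuous_ofReal.continuousAt.comp
      (Real.continuousAt_rpow_const t α (Or.inl ht.1.ne'))
  refine (hpow.mul hg).congr ?_
  filter_upwards [Ioo_mem_nhds ht.1 ht.2] with τ hτ using (kkerSource_of_mem hτ).symm

lemma rpow_mul_Lt_eq_kkerPotential (ht : t ∈ Ioo 0 T) :
    ((t ^ α : ℝ) : ℂ) * Lt α t g x = kkerPotential α (kkerSource α T g) x t := by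
  rw [Lt, ← mul_assoc, ← Complex.ofReal_mul, ← Real.rpow_add ht.1, add_neg_cancel, Real.rpow_zero,
    Complex.ofReal_one, one_mul, ← integral_indicator measurableSet_Ioo, kkerPotential]
  congr 1 with τ
  rcases le_or_gt τ 0 with hτ | hτ
  · rw [indicator_of_notMem fun h => hτ.not_gt h.1, kkerSource_of_notMem fun h => hτ.not_gt h.1,
      smul_zero]
  rcases le_or_gt t τ with htτ | hτt
  · rw [indicator_of_notMem fun h => htτ.not_gt h.2, causalKker_of_nonpos (sub_nonpos.2 htτ),
      zero_smul]
  · rw [indicator_of_mem (show τ ∈ Ioo 0 t from ⟨hτ, hτt⟩),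
      kkerSource_of_mem ⟨hτ, hτt.trans ht.2⟩, causalKker_of_pos (sub_pos.2 hτt),
      Complex.real_smul, mul_assoc, mul_comm (g τ)]

end Source

theorem stmt6_general (α T : ℝ) (hα : 0 < α) (hT : 0 < T)
    (g : ℝ → ℂ) (hg : IntegrableOn (fun τ => ((τ ^ α : ℝ) : ℂ) * g τ) (Ioo 0 T))
    (u : ℝ → ℝ → ℂ) (hu : ∀ x t : ℝ, u x t = ((t ^ α : ℝ) : ℂ) * Lt α t g x) :
    ContDiffOn ℝ ∞ (fun p : ℝ × ℝ => u p.1 p.2) (Ioi 0 ×ˢ Ioo 0 T) ∧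
    (∀ x t : ℝ, 0 < x → 0 < t → t < T →
      deriv (fun s => u x s) t =
        (x ^ (2 * (α - 1) / α) : ℝ) * iteratedDeriv 2 (fun y => u y t) x) ∧
    (∀ t : ℝ, 0 < t → t < T → ContinuousAt g t →
      Tendsto (fun x => u x t) (𝓝[>] 0) (𝓝 (((t ^ α : ℝ) : ℂ) * g t))) ∧
    (∀ t : ℝ, 0 < t → t < T → Tendsto (fun x => u x t) atTop (𝓝 0)) ∧
    (∀ x : ℝ, 0 < x → Tendsto (fun t => u x t) (𝓝[>] 0) (𝓝 0)) := by
  have hf : Integrable (kkerSource α T g) := hg.integrable_indicator measurableSet_Ioo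
  have hcf : HasCompactSupport (kkerSource α T g) := hasCompactSupport_kkerSource
  have huf (x : ℝ) {t : ℝ} (ht : t ∈ Ioo 0 T) : u x t = kkerPotential α (kkerSource α T g) x t :=
    (hu x t).trans (rpow_mul_Lt_eq_kkerPotential ht)
  refine ⟨?_, fun x t hx ht htT => ?_, fun t ht htT hgt => ?_, fun t ht htT => ?_, fun x hx => ?_⟩
  · exact ((contDiffOn_kkerPotential hα hf.locallyIntegrable hcf).mono
      (prod_mono_right (subset_univ _))).congr fun p hp => huf p.1 hp.2
  · have htime : (fun s => u x s) =ᶠ[𝓝 t] kkerPotential α (kkerSource α T g) x := by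
      filter_upwards [Ioo_mem_nhds ht htT] with s hs using huf x hs
    rw [htime.deriv_eq, funext fun y => huf y ⟨ht, htT⟩]
    exact deriv_kkerPotential_eq_rpow_smul_iteratedDeriv hα hf hcf hx t
  · rw [funext fun x => huf x ⟨ht, htT⟩, ← kkerSource_of_mem ⟨ht, htT⟩]
    exact tendsto_kkerPotential_nhdsGT_zero hα hf (continuousAt_kkerSource ⟨ht, htT⟩ hgt)
  · rw [funext fun x => huf x ⟨ht, htT⟩]
    exact tendsto_kkerPotential_atTop hα hf t
  · refine ((tendsto_kkerPotential_time_zero hα hf.locallyIntegrable hcf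
      (fun τ hτ => kkerSource_of_notMem fun h => hτ.not_gt h.1) hx).mono_left
      nhdsWithin_le_nhds).congr' ?_
    filter_upwards [Ioo_mem_nhdsGT hT] with t ht using (huf x ht).symm

theorem stmt6 (α T : ℝ) (hα : 0 < α) (hT : 0 < T)
    (g : ℝ → ℂ) (hg : ContinuousOn g (Set.Icc 0 T))
    (u : ℝ → ℝ → ℂ) (hu : ∀ x t : ℝ, u x t = ((t ^ α : ℝ) : ℂ) * Lt α t g x) :
    ContDiffOn ℝ 2 (fun p : ℝ × ℝ => u p.1 p.2) (Set.Ioi 0 ×ˢ Set.Ioo 0 T) ∧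
    (∀ x t : ℝ, 0 < x → 0 < t → t < T →
      deriv (fun s => u x s) t =
        (x ^ (2 * (α - 1) / α) : ℝ) * iteratedDeriv 2 (fun y => u y t) x) ∧
    (∀ t : ℝ, 0 < t → t < T →
      Tendsto (fun x => u x t) (nhdsWithin 0 (Set.Ioi 0))
        (nhds (((t ^ α : ℝ) : ℂ) * g t))) ∧
    (∀ t : ℝ, 0 < t → t < T → Tendsto (fun x => u x t) atTop (nhds 0)) ∧
    (∀ x : ℝ, 0 < x →
      Tendsto (fun t => u x t) (nhdsWithin 0 (Set.Ioi 0)) (nhds 0)) := by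
  have hint : ContinuousOn (fun τ => ((τ ^ α : ℝ) : ℂ) * g τ) (Icc 0 T) :=
    (Complex.continuous_ofReal.comp (Real.continuous_rpow_const hα.le)).continuousOn.mul hg
  obtain ⟨hsmooth, hheat, hbdry, hrest⟩ := stmt6_general α T hα hT g
    (hint.integrableOn_Icc.mono_set Ioo_subset_Icc_self) u hu
  exact ⟨mod_cast contDiffOn_infty.1 hsmooth 2, hheat,
    fun t ht htT => hbdry t ht htT (hg.continuousAt (Icc_mem_nhds ht htT)), hrest⟩
end

section
/- Fix α > 0, T > 0, and an integer m ≥ 0, and let g : [0,T] → ℂ be m times continuously differentiable. Let D_x^α denote the operator sending a twice differentiable function w of x > 0 to (D_x^α w)(x) := x^{2(α-1)/α} w''(x). Then for every t ∈ (0,T), the m-fold iterate of D_x^α applied to x ↦ (T_t^α g)(x) satisfies lim_{x→0⁺} ((D_x^α)^m (T_t^α g))(x) = g^{(m)}(t), where g^{(m)} denotes the m-th derivative of g. -/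
open MeasureTheory Filter Set

/-- The transform `(T_t^α g)(x) = ∫_0^t K_α(x,t-τ) g(τ) dτ`. -/
noncomputable def Tt (α t : ℝ) (g : ℝ → ℂ) (x : ℝ) : ℂ :=
  ∫ τ in Set.Ioo (0 : ℝ) t, (Kker α x (t - τ) : ℂ) * g τ

/-- The degenerate elliptic operator `(D_x^α w)(x) = x^{2(α-1)/α} w''(x)`
for complex-valued functions of a real variable. -/
noncomputable def DxC (α : ℝ) (w : ℝ → ℂ) : ℝ → ℂ :=
  fun x => ((x ^ (2 * (α - 1) / α) : ℝ) : ℂ) * iteratedDeriv 2 w x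

/-!
In the variable `a = α² x^{2/α} / 4` the transform becomes, up to a constant, `x` times the
convolution `J_ν g (a) = ∫₀ᵗ s^{-ν} e^{-a/s} g(t - s) ds` with `ν = α/2 + 1`, and `D_x^α` becomes
the Bessel operator `L = a ∂² + ν ∂`. The kernel `s^{-ν} e^{-a/s}` solves `∂_s u = L u`, so an
integration by parts gives `L (J_ν g) = J_ν g' + (a function smooth up to a = 0)`. After `m` steps
the smooth remainder is killed by the factor `x`, while the kernel, normalized by
`a^{ν-1} / Γ(ν-1)`, is an approximate identity and yields `g^{(m)}(t)`.
-/

section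

open scoped Topology ContDiff

/-- The unnormalized inverse-gamma density `s ↦ s^{-ν} e^{-a/s}` of shape `ν - 1` and scale `a`; it
is the time profile of `Kker`. For `s = 0` and `ν ≠ 0` its value is `0`. -/
noncomputable def invGammaKernel (ν a s : ℝ) : ℝ :=
  s ^ (-ν) * Real.exp (-a / s)

section Kernel

variable {ν a b s t : ℝ}

lemma invGammaKernel_zero_right (hν : ν ≠ 0) : invGammaKernel ν a 0 = 0 := by
  rw [invGammaKernel, Real.zero_rpow (neg_ne_zero.2 hν), zero_mul]

lemma invGammaKernel_nonneg (hs : 0 ≤ s) : 0 ≤ invGammaKernel ν a s := by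
  unfold invGammaKernel; positivity

lemma invGammaKernel_le_of_le (hab : a ≤ b) (hs : 0 ≤ s) :
    invGammaKernel ν b s ≤ invGammaKernel ν a s := by
  unfold invGammaKernel; gcongr

lemma invGammaKernel_le_rpow_neg (hν : 0 ≤ ν) (ha : 0 ≤ a) (hb : 0 < b) (hbs : b ≤ s) :
    invGammaKernel ν a s ≤ b ^ (-ν) := by
  have hs : 0 < s := hb.trans_le hbs
  calc invGammaKernel ν a s ≤ invGammaKernel ν 0 s := invGammaKernel_le_of_le ha hs.le
    _ = s ^ (-ν) := by simp [invGammaKernel]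
    _ ≤ b ^ (-ν) := Real.rpow_le_rpow_of_nonpos hb hbs (neg_nonpos.2 hν)

lemma invGammaKernel_add_one (hs : 0 < s) :
    invGammaKernel (ν + 1) a s = invGammaKernel ν a s / s := by
  rw [invGammaKernel, neg_add, ← sub_eq_add_neg, Real.rpow_sub_one hs.ne', invGammaKernel]
  ring

lemma invGammaKernel_mul_right (ha : 0 < a) (hs : 0 ≤ s) :
    invGammaKernel ν a (a * s) = a ^ (-ν) * invGammaKernel ν 1 s := by
  have hexp : -a / (a * s) = -1 / s := by field_simp
  rw [invGammaKernel, invGammaKernel, Real.mul_rpow ha.le hs, hexp, mul_assoc]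

lemma hasDerivAt_invGammaKernel (hs : 0 < s) :
    HasDerivAt (invGammaKernel ν a)
      (a * invGammaKernel (ν + 2) a s - ν * invGammaKernel (ν + 1) a s) s := by
  have hrpow : HasDerivAt (fun s : ℝ => s ^ (-ν)) (-ν * s ^ (-ν - 1)) s :=
    Real.hasDerivAt_rpow_const (Or.inl hs.ne')
  have hexp : HasDerivAt (fun s : ℝ => Real.exp (-a / s)) (Real.exp (-a / s) * (a / s ^ 2)) s := by
    have := ((hasDerivAt_inv hs.ne').const_mul (-a)).exp
    simp only [← div_eq_mul_inv] at this
    exact this.congr_deriv (by ring)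
  refine (hrpow.mul hexp).congr_deriv ?_
  rw [show ν + 2 = ν + 1 + 1 by ring, invGammaKernel_add_one hs, invGammaKernel_add_one hs,
    Real.rpow_sub_one hs.ne', invGammaKernel]
  field_simp
  ring

lemma hasDerivAt_invGammaKernel_param (hs : 0 < s) :
    HasDerivAt (fun a => invGammaKernel ν a s) (-invGammaKernel (ν + 1) a s) a := by
  have hexp : HasDerivAt (fun a : ℝ => Real.exp (-a / s)) (Real.exp (-a / s) * (-1 / s)) a :=
    ((hasDerivAt_id a).neg.div_const s).exp
  refine (hexp.const_mul (s ^ (-ν))).congr_deriv ?_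
  rw [invGammaKernel_add_one hs, invGammaKernel]
  ring

lemma contDiff_invGammaKernel_param {n : WithTop ℕ∞} :
    ContDiff ℝ n (fun a => invGammaKernel ν a s) := by
  unfold invGammaKernel; fun_prop

lemma measurable_invGammaKernel : Measurable (invGammaKernel ν a) := by
  unfold invGammaKernel; fun_prop

lemma continuousOn_invGammaKernel (hν : ν ≠ 0) (ha : 0 < a) :
    ContinuousOn (invGammaKernel ν a) (Ici 0) := by
  intro s hs
  rcases (mem_Ici.1 hs).eq_or_lt with rfl | hs
  · rw [← Ioi_insert, continuousWithinAt_insert_self, ContinuousWithinAt,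
      invGammaKernel_zero_right hν]
    refine ((tendsto_rpow_mul_exp_neg_mul_atTop_nhds_zero ν a ha).comp
      tendsto_inv_nhdsGT_zero).congr' ?_
    filter_upwards [self_mem_nhdsWithin] with s hs
    rw [Function.comp_apply, invGammaKernel, Real.inv_rpow (mem_Ioi.1 hs).le,
      Real.rpow_neg (mem_Ioi.1 hs).le, div_eq_mul_inv]
  · exact (hasDerivAt_invGammaKernel hs).continuousAt.continuousWithinAt

lemma integral_Ioi_invGammaKernel_one (hν : 1 < ν) :
    ∫ s in Ioi (0 : ℝ), invGammaKernel ν 1 s = Real.Gamma (ν - 1) := by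
  rw [Real.Gamma_eq_integral (sub_pos.2 hν),
    ← integral_comp_rpow_Ioi (fun u => Real.exp (-u) * u ^ (ν - 1 - 1)) (neg_ne_zero.2 one_ne_zero)]
  refine setIntegral_congr_fun measurableSet_Ioi fun s hs => ?_
  have hs : 0 < s := hs
  have hpow : s ^ (-1 - 1 : ℝ) * (s ^ (-1 : ℝ)) ^ (ν - 1 - 1) = s ^ (-ν) := by
    rw [← Real.rpow_mul hs.le, ← Real.rpow_add hs]
    ring_nf
  simp only [invGammaKernel, smul_eq_mul, abs_neg, abs_one, one_mul]
  rw [← hpow, neg_div, one_div, Real.rpow_neg_one]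
  ring

lemma integrableOn_Ioi_invGammaKernel_one (hν : 1 < ν) :
    IntegrableOn (invGammaKernel ν 1) (Ioi 0) :=
  .of_integral_ne_zero <| by
    rw [integral_Ioi_invGammaKernel_one hν]
    exact (Real.Gamma_pos_of_pos (sub_pos.2 hν)).ne'

lemma rpow_mul_integral_invGammaKernel (ha : 0 < a) (ht : 0 ≤ t) :
    a ^ (ν - 1) * ∫ s in (0 : ℝ)..t, invGammaKernel ν a s =
      ∫ r in (0 : ℝ)..t / a, invGammaKernel ν 1 r := by
  have hsubst := intervalIntegral.mul_integral_comp_mul_left (f := invGammaKernel ν a)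
    (a := 0) (b := t / a) a
  have hscale : ∫ r in (0 : ℝ)..t / a, invGammaKernel ν a (a * r) =
      a ^ (-ν) * ∫ r in (0 : ℝ)..t / a, invGammaKernel ν 1 r := by
    rw [← intervalIntegral.integral_const_mul]
    refine intervalIntegral.integral_congr fun r hr => invGammaKernel_mul_right ha ?_
    rw [uIcc_of_le (by positivity)] at hr
    exact hr.1
  rw [mul_zero, mul_div_cancel₀ _ ha.ne'] at hsubst
  rw [← hsubst, hscale, ← mul_assoc, ← mul_assoc, ← Real.rpow_add_one ha.ne', ← Real.rpow_add ha,
    sub_add_cancel, add_neg_cancel, Real.rpow_zero, one_mul]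

lemma tendsto_rpow_mul_integral_invGammaKernel (hν : 1 < ν) (ht : 0 < t) :
    Tendsto (fun a => a ^ (ν - 1) * ∫ s in (0 : ℝ)..t, invGammaKernel ν a s) (𝓝[>] 0)
      (𝓝 (Real.Gamma (ν - 1))) := by
  have hupper : Tendsto (fun a : ℝ => t / a) (𝓝[>] 0) atTop :=
    tendsto_inv_nhdsGT_zero.const_mul_atTop ht
  have hlim := intervalIntegral_tendsto_integral_Ioi 0
    (integrableOn_Ioi_invGammaKernel_one hν) hupper
  rw [integral_Ioi_invGammaKernel_one hν] at hlim
  refine hlim.congr' ?_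
  filter_upwards [self_mem_nhdsWithin] with a ha
  exact (rpow_mul_integral_invGammaKernel ha ht.le).symm

lemma tendstoUniformlyOn_rpow_mul_invGammaKernel (hν : 1 < ν) (hb : 0 < b) (c : ℝ) :
    TendstoUniformlyOn (fun a s => a ^ (ν - 1) / c * invGammaKernel ν a s) 0 (𝓝[>] 0) (Ici b) := by
  have hbound : Tendsto (fun a : ℝ => |a ^ (ν - 1) / c| * b ^ (-ν)) (𝓝[>] 0) (𝓝 0) := by
    have hcont : ContinuousAt (fun a : ℝ => |a ^ (ν - 1) / c| * b ^ (-ν)) 0 :=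
      (((Real.continuous_rpow_const (sub_pos.2 hν).le).div_const c).abs.mul_const _).continuousAt
    simpa [ContinuousAt, Real.zero_rpow (sub_pos.2 hν).ne'] using
      hcont.tendsto.mono_left nhdsWithin_le_nhds
  rw [Metric.tendstoUniformlyOn_iff]
  intro ε hε
  filter_upwards [hbound.eventually_lt_const hε, self_mem_nhdsWithin] with a hlt ha s hs
  have hs0 : 0 ≤ s := hb.le.trans hs
  rw [Pi.zero_apply, dist_zero_left, norm_mul, Real.norm_eq_abs,
    Real.norm_of_nonneg (invGammaKernel_nonneg hs0)]
  refine lt_of_le_of_lt ?_ hlt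
  gcongr
  exact invGammaKernel_le_rpow_neg (by linarith) (mem_Ioi.1 ha).le hb hs

end Kernel

section BesselOp

variable {E : Type*} [NormedAddCommGroup E] [NormedSpace ℝ E]

/-- The Bessel operator `a f'' + ν f'`. In the variable `a = r² / 4` it is the Laplacian of radial
functions in dimension `2 ν`; the operators `DxC` are conjugate to it. -/
noncomputable def besselOp (ν : ℝ) (f : ℝ → E) (a : ℝ) : E :=
  a • iteratedDeriv 2 f a + ν • deriv f a

variable {ν a : ℝ} {f g : ℝ → E}

lemma iteratedDeriv_two_eq_of_hasDerivAt {f' : ℝ → E} {f'' : E}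
    (hf : ∀ᶠ b in 𝓝 a, HasDerivAt f (f' b) b) (hf' : HasDerivAt f' f'' a) :
    iteratedDeriv 2 f a = f'' := by
  rw [iteratedDeriv_succ, iteratedDeriv_one]
  exact (hf'.congr_of_eventuallyEq (hf.mono fun b hb => hb.deriv)).deriv

lemma besselOp_congr_of_eventuallyEq (h : f =ᶠ[𝓝 a] g) : besselOp ν f a = besselOp ν g a := by
  rw [besselOp, h.iteratedDeriv_eq, h.deriv_eq, besselOp]

lemma besselOp_add (hf : ContDiffAt ℝ 2 f a) (hg : ContDiffAt ℝ 2 g a) :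
    besselOp ν (f + g) a = besselOp ν f a + besselOp ν g a := by
  rw [besselOp, iteratedDeriv_add hf hg,
    deriv_add (hf.differentiableAt two_ne_zero) (hg.differentiableAt two_ne_zero),
    besselOp, besselOp]
  module

lemma contDiffOn_besselOp {s : Set ℝ} (hs : IsOpen s) (hf : ContDiffOn ℝ ∞ f s) :
    ContDiffOn ℝ ∞ (besselOp ν f) s := by
  have hf' := ((contDiffOn_infty_iff_deriv_of_isOpen hs).1 hf).2
  have hf'' := ((contDiffOn_infty_iff_deriv_of_isOpen hs).1 hf').2
  unfold besselOp
  simp only [iteratedDeriv_succ, iteratedDeriv_zero]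
  exact (contDiffOn_id.smul hf'').add (hf'.const_smul ν)

end BesselOp

section Reflection

lemma intervalIntegrable_comp_const_sub {E : Type*} [NormedAddCommGroup E] {h : ℝ → E} {t : ℝ}
    (hh : IntervalIntegrable h volume 0 t) :
    IntervalIntegrable (fun s => h (t - s)) volume 0 t := by
  simpa using (hh.comp_sub_left t).symm

lemma tendsto_comp_const_sub_nhdsGT_zero {X : Type*} {h : ℝ → X} {t : ℝ} {l : Filter X}
    (hh : Tendsto h (𝓝[<] t) l) : Tendsto (fun s => h (t - s)) (𝓝[>] 0) l := by
  refine hh.comp (tendsto_nhdsWithin_iff.2 ⟨?_, ?_⟩)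
  · have hsub : Tendsto (fun s => t - s) (𝓝 0) (𝓝 (t - 0)) := (continuous_sub_left t).tendsto 0
    rw [sub_zero] at hsub
    exact hsub.mono_left nhdsWithin_le_nhds
  · filter_upwards [self_mem_nhdsWithin] with s hs using sub_lt_self t hs

end Reflection

section Convolution

variable {E : Type*} [NormedAddCommGroup E] [NormedSpace ℝ E]

/-- The convolution on `[0, t]` of `invGammaKernel ν a` with `h`, evaluated at time `t` and regarded
as a function of the scale `a`. -/
noncomputable def invGammaConv (ν t : ℝ) (h : ℝ → E) (a : ℝ) : E :=
  ∫ s in (0 : ℝ)..t, invGammaKernel ν a s • h (t - s)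

variable {ν t a : ℝ} {h h' : ℝ → E}

lemma intervalIntegrable_invGammaKernel_smul (hν : ν ≠ 0) (ha : 0 < a) (ht : 0 ≤ t)
    (hh : IntervalIntegrable h volume 0 t) :
    IntervalIntegrable (fun s => invGammaKernel ν a s • h (t - s)) volume 0 t := by
  refine (intervalIntegrable_comp_const_sub hh).continuousOn_smul
    ((continuousOn_invGammaKernel hν ha).mono ?_)
  rw [uIcc_of_le ht]
  exact Icc_subset_Ici_self

lemma hasDerivAt_invGammaConv (hν : 0 < ν) (ht : 0 ≤ t) (ha : 0 < a)
    (hh : IntervalIntegrable h volume 0 t) :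
    HasDerivAt (invGammaConv ν t h) (-invGammaConv (ν + 1) t h a) a := by
  have hν1 : ν + 1 ≠ 0 := by positivity
  have hint {b : ℝ} (hb : 0 < b) := intervalIntegrable_invGammaKernel_smul hν1 hb ht hh
  have hpos {s : ℝ} (hs : s ∈ uIoc 0 t) : 0 < s := (uIoc_of_le ht ▸ hs).1
  have key := intervalIntegral.hasDerivAt_integral_of_dominated_loc_of_deriv_le
    (F := fun b s => invGammaKernel ν b s • h (t - s))
    (F' := fun b s => -invGammaKernel (ν + 1) b s • h (t - s))
    (bound := fun s => ‖invGammaKernel (ν + 1) (a / 2) s • h (t - s)‖)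
    (μ := volume) (Ioi_mem_nhds (half_lt_self ha)) ?_
    (intervalIntegrable_invGammaKernel_smul hν.ne' ha ht hh) ?_ ?_ (hint (half_pos ha)).norm ?_
  · simpa only [neg_smul, intervalIntegral.integral_neg] using! key.2
  · filter_upwards [Ioi_mem_nhds ha] with b hb
    exact (intervalIntegrable_invGammaKernel_smul hν.ne' hb ht
      hh).aestronglyMeasurable_restrict_uIoc
  · simpa only [neg_smul] using! (hint ha).neg.aestronglyMeasurable_restrict_uIoc
  · refine Eventually.of_forall fun s hs b hb => ?_
    have hs0 := (hpos hs).le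
    rw [norm_smul, norm_smul, norm_neg, Real.norm_of_nonneg (invGammaKernel_nonneg hs0),
      Real.norm_of_nonneg (invGammaKernel_nonneg hs0)]
    gcongr
    exact invGammaKernel_le_of_le (mem_Ioi.1 hb).le hs0
  · exact Eventually.of_forall fun s hs b _ =>
      (hasDerivAt_invGammaKernel_param (hpos hs)).smul_const _

lemma contDiffOn_invGammaConv (hν : 0 < ν) (ht : 0 ≤ t) (hh : IntervalIntegrable h volume 0 t) :
    ContDiffOn ℝ ∞ (invGammaConv ν t h) (Ioi 0) := by
  refine contDiffOn_infty.2 fun n => ?_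
  induction n generalizing ν with
  | zero =>
    exact contDiffOn_zero.2 fun a ha =>
      (hasDerivAt_invGammaConv hν ht ha hh).continuousAt.continuousWithinAt
  | succ n ih =>
    refine (contDiffOn_succ_iff_deriv_of_isOpen isOpen_Ioi).2 ⟨fun a ha =>
      (hasDerivAt_invGammaConv hν ht ha hh).differentiableAt.differentiableWithinAt,
      fun h => absurd h (WithTop.natCast_ne_top n), ?_⟩
    exact (ih (by positivity : 0 < ν + 1)).neg.congr fun a ha =>
      (hasDerivAt_invGammaConv hν ht ha hh).deriv

lemma besselOp_invGammaConv (hν : 0 < ν) (ht : 0 ≤ t) (ha : 0 < a)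
    (hh : IntervalIntegrable h volume 0 t) :
    besselOp ν (invGammaConv ν t h) a =
      a • invGammaConv (ν + 2) t h a - ν • invGammaConv (ν + 1) t h a := by
  have hderiv : ∀ᶠ b in 𝓝 a, HasDerivAt (invGammaConv ν t h) (-invGammaConv (ν + 1) t h b) b := by
    filter_upwards [Ioi_mem_nhds ha] with b hb using hasDerivAt_invGammaConv hν ht hb hh
  have hderiv₂ := (hasDerivAt_invGammaConv (ν := ν + 1) (by positivity) ht ha hh).neg
  rw [besselOp, iteratedDeriv_two_eq_of_hasDerivAt hderiv hderiv₂, hderiv.self_of_nhds.deriv,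
    show ν + 1 + 1 = ν + 2 by ring]
  module

lemma besselOp_invGammaConv_of_hasDerivAt [CompleteSpace E] (hν : 0 < ν) (ht : 0 ≤ t) (ha : 0 < a)
    (hc : ContinuousOn h (Icc 0 t)) (hd : ∀ s ∈ Ioo 0 t, HasDerivAt h (h' s) s)
    (hh' : IntervalIntegrable h' volume 0 t) :
    besselOp ν (invGammaConv ν t h) a = invGammaConv ν t h' a + invGammaKernel ν a t • h 0 := by
  have hmaps : MapsTo (fun s => t - s) (Icc 0 t) (Icc 0 t) := fun s hs =>
    ⟨sub_nonneg.2 hs.2, sub_le_self t hs.1⟩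
  have hcont : ContinuousOn (fun s => invGammaKernel ν a s • h (t - s)) (Icc 0 t) :=
    ((continuousOn_invGammaKernel hν.ne' ha).mono Icc_subset_Ici_self).smul
      (hc.comp (by fun_prop) hmaps)
  have hh := hc.intervalIntegrable_of_Icc (μ := volume) ht
  have hint₂ : IntervalIntegrable (fun s => a • invGammaKernel (ν + 2) a s • h (t - s))
      volume 0 t := (intervalIntegrable_invGammaKernel_smul (by positivity) ha ht hh).smul a
  have hint₁ : IntervalIntegrable (fun s => ν • invGammaKernel (ν + 1) a s • h (t - s))
      volume 0 t := (intervalIntegrable_invGammaKernel_smul (by positivity) ha ht hh).smul ν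
  have hint' := intervalIntegrable_invGammaKernel_smul hν.ne' ha ht hh'
  have hderiv : ∀ s ∈ Ioo 0 t, HasDerivAt (fun s => invGammaKernel ν a s • h (t - s))
      (a • invGammaKernel (ν + 2) a s • h (t - s) - ν • invGammaKernel (ν + 1) a s • h (t - s)
        - invGammaKernel ν a s • h' (t - s)) s := by
    intro s hs
    have hreflect := (hd (t - s) ⟨sub_pos.2 hs.2, sub_lt_self t hs.1⟩).comp_const_sub t s
    exact ((hasDerivAt_invGammaKernel hs.1).smul hreflect).congr_deriv (by module)
  have key := intervalIntegral.integral_eq_sub_of_hasDerivAt_of_le ht hcont hderiv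
    ((hint₂.sub hint₁).sub hint')
  rw [intervalIntegral.integral_sub (hint₂.sub hint₁) hint',
    intervalIntegral.integral_sub hint₂ hint₁, intervalIntegral.integral_smul,
    intervalIntegral.integral_smul, sub_self, invGammaKernel_zero_right hν.ne', zero_smul,
    sub_zero] at key
  rw [besselOp_invGammaConv hν ht ha hh]
  exact sub_eq_iff_eq_add'.1 key

lemma tendsto_rpow_smul_invGammaConv [CompleteSpace E] {c : E} (hν : 1 < ν) (ht : 0 < t)
    (hh : IntervalIntegrable h volume 0 t) (hc : Tendsto h (𝓝[<] t) (𝓝 c)) :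
    Tendsto (fun a => (a ^ (ν - 1) / Real.Gamma (ν - 1)) • invGammaConv ν t h a) (𝓝[>] 0)
      (𝓝 c) := by
  have hΓ : 0 < Real.Gamma (ν - 1) := Real.Gamma_pos_of_pos (sub_pos.2 hν)
  have key := tendsto_setIntegral_peak_smul_of_integrableOn_of_tendsto (μ := volume) (x₀ := (0 : ℝ))
    (φ := fun a s => a ^ (ν - 1) / Real.Gamma (ν - 1) * invGammaKernel ν a s)
    (g := fun s => h (t - s)) (l := 𝓝[>] 0) (s := Ioc 0 t) (a := c) measurableSet_Ioc
    measurableSet_Ioc subset_rfl self_mem_nhdsWithin measure_Ioc_lt_top.ne ?nonneg ?uniform ?mass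
    ?meas ((intervalIntegrable_iff_integrableOn_Ioc_of_le ht.le).1
      (intervalIntegrable_comp_const_sub hh)) ?lim
  · refine key.congr fun a => ?_
    rw [invGammaConv, intervalIntegral.integral_of_le ht.le, ← integral_smul]
    simp only [mul_smul]
  case nonneg =>
    filter_upwards [self_mem_nhdsWithin] with a ha s hs
    have := invGammaKernel_nonneg (ν := ν) (a := a) hs.1.le
    have : 0 < a := ha
    positivity
  case uniform =>
    intro u hu h0
    obtain ⟨b, hb, hball⟩ := Metric.isOpen_iff.1 hu 0 h0
    refine (tendstoUniformlyOn_rpow_mul_invGammaKernel hν hb _).mono fun s hs => ?_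
    by_contra hsb
    refine hs.2 (hball ?_)
    rw [mem_ball_zero_iff, Real.norm_of_nonneg hs.1.1.le]
    exact not_le.1 hsb
  case mass =>
    have hmass := (tendsto_rpow_mul_integral_invGammaKernel hν ht).div_const (Real.Gamma (ν - 1))
    rw [div_self hΓ.ne'] at hmass
    refine hmass.congr fun a => ?_
    rw [integral_const_mul, intervalIntegral.integral_of_le ht.le]
    ring
  case meas =>
    exact Eventually.of_forall fun a => (measurable_invGammaKernel.const_mul _).aestronglyMeasurable
  case lim =>
    rw [nhdsWithin_Ioc_eq_nhdsGT ht]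
    exact tendsto_comp_const_sub_nhdsGT_zero hc

lemma exists_contDiff_iterate_besselOp_invGammaConv [CompleteSpace E] {m : ℕ} (hν : 0 < ν)
    (ht : 0 < t) (hh : ContDiffOn ℝ m h (Icc 0 t)) :
    ∃ r : ℝ → E, ContDiff ℝ ∞ r ∧ EqOn ((besselOp ν)^[m] (invGammaConv ν t h))
      (invGammaConv ν t (iteratedDerivWithin m h (Icc 0 t)) + r) (Ioi 0) := by
  have hu := uniqueDiffOn_Icc ht
  induction m with
  | zero => exact ⟨0, contDiff_const, fun a _ => by simp⟩
  | succ m ih =>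
    obtain ⟨r, hr, heq⟩ := ih (hh.of_le (by exact_mod_cast m.le_succ))
    have hcm := hh.continuousOn_iteratedDerivWithin (m := m) (by exact_mod_cast m.le_succ) hu
    have hcm' := hh.continuousOn_iteratedDerivWithin (m := m + 1) le_rfl hu
    have hdm : ∀ s ∈ Ioo 0 t, HasDerivAt (iteratedDerivWithin m h (Icc 0 t))
        (iteratedDerivWithin (m + 1) h (Icc 0 t) s) s := by
      intro s hs
      have hdiff := hh.differentiableOn_iteratedDerivWithin (m := m)
        (by exact_mod_cast m.lt_succ_self) hu s (Ioo_subset_Icc_self hs)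
      rw [iteratedDerivWithin_succ]
      exact hdiff.hasDerivWithinAt.hasDerivAt (Icc_mem_nhds hs.1 hs.2)
    have him := hcm.intervalIntegrable_of_Icc (μ := volume) ht.le
    refine ⟨fun a => invGammaKernel ν a t • iteratedDerivWithin m h (Icc 0 t) 0 + besselOp ν r a,
      (contDiff_invGammaKernel_param.smul contDiff_const).add (contDiffOn_univ.1
        (contDiffOn_besselOp isOpen_univ hr.contDiffOn)), fun a ha => ?_⟩
    have hconv := (contDiffOn_infty.1 (contDiffOn_invGammaConv hν ht.le him) 2).contDiffAt
      (Ioi_mem_nhds ha)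
    rw [Function.iterate_succ_apply',
      besselOp_congr_of_eventuallyEq (heq.eventuallyEq_of_mem (Ioi_mem_nhds ha)),
      besselOp_add hconv (contDiff_infty.1 hr 2).contDiffAt,
      besselOp_invGammaConv_of_hasDerivAt hν ht.le ha hcm hdm
        (hcm'.intervalIntegrable_of_Icc ht.le), Pi.add_apply, add_assoc]

end Convolution

section Conjugation

/-- The self-similar variable `a = α² x^{2/α} / 4`, in which `DxC α` becomes the Bessel operator. -/
noncomputable def besselVar (α x : ℝ) : ℝ :=
  α ^ 2 / 4 * x ^ (2 / α)

variable {E : Type*} [NormedAddCommGroup E] [NormedSpace ℝ E] {α c t x : ℝ}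

lemma besselVar_pos (hα : α ≠ 0) (hx : 0 < x) : 0 < besselVar α x := by
  unfold besselVar; positivity

lemma tendsto_besselVar_nhdsGT_zero (hα : 0 < α) :
    Tendsto (besselVar α) (𝓝[>] 0) (𝓝[>] 0) := by
  refine tendsto_nhdsWithin_iff.2 ⟨?_, ?_⟩
  · have hcont : Continuous (besselVar α) :=
      (Real.continuous_rpow_const (by positivity)).const_mul _
    have hzero : besselVar α 0 = 0 := by
      rw [besselVar, Real.zero_rpow (by positivity), mul_zero]
    have hlim := hcont.tendsto 0
    rw [hzero] at hlim
    exact hlim.mono_left nhdsWithin_le_nhds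
  · filter_upwards [self_mem_nhdsWithin] with x hx using besselVar_pos hα.ne' hx

lemma hasDerivAt_besselVar (hx : 0 < x) :
    HasDerivAt (besselVar α) (2 / α * besselVar α x / x) x := by
  refine ((Real.hasDerivAt_rpow_const (p := 2 / α) (Or.inl hx.ne')).const_mul
    (α ^ 2 / 4)).congr_deriv ?_
  rw [Real.rpow_sub_one hx.ne', besselVar]
  ring

lemma besselVar_rpow_half (hα : 0 < α) (hx : 0 ≤ x) :
    besselVar α x ^ (α / 2) = (α / 2) ^ α * x := by
  have hx' : (x ^ (2 / α)) ^ (α / 2) = x := by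
    rw [← Real.rpow_mul hx, div_mul_div_cancel₀ hα.ne', div_self two_ne_zero, Real.rpow_one]
  have hα' : (α ^ 2 / 4) ^ (α / 2) = (α / 2) ^ α := by
    rw [show α ^ 2 / 4 = (α / 2) ^ (2 : ℝ) by rw [Real.rpow_two]; ring,
      ← Real.rpow_mul (by positivity), mul_div_cancel₀ _ two_ne_zero]
  rw [besselVar, Real.mul_rpow (by positivity) (by positivity), hα', hx']

lemma besselVar_rpow_half_div_Gamma (hα : 0 < α) (hx : 0 ≤ x) :
    besselVar α x ^ (α / 2) / Real.Gamma (α / 2) =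
      α ^ α / (2 ^ α * Real.Gamma (α / 2)) * x := by
  rw [besselVar_rpow_half hα hx, Real.div_rpow hα.le two_pos.le]
  field_simp

lemma rpow_mul_besselVar (hα : α ≠ 0) (hx : 0 < x) :
    x ^ (2 * (α - 1) / α) * besselVar α x = α ^ 2 / 4 * x ^ 2 := by
  rw [besselVar, mul_left_comm, ← Real.rpow_add hx, ← Real.rpow_two x]
  congr 2
  field_simp
  ring

lemma tendsto_mul_smul_comp_besselVar (hα : 0 < α) {r : ℝ → E} (hr : ContinuousAt r 0) :
    Tendsto (fun x => (c * x) • r (besselVar α x)) (𝓝[>] 0) (𝓝 0) := by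
  have hlim := (((continuous_const_mul c).tendsto 0).mono_left nhdsWithin_le_nhds).smul
    (hr.tendsto.comp ((tendsto_besselVar_nhdsGT_zero hα).mono_right nhdsWithin_le_nhds))
  rwa [mul_zero, zero_smul] at hlim

lemma hasDerivAt_mul_smul_comp_besselVar (hα : α ≠ 0) (hx : 0 < x) {f : ℝ → E} {f' : E}
    (hf : HasDerivAt f f' (besselVar α x)) :
    HasDerivAt (fun y => (c * y) • f (besselVar α y))
      (c • (f (besselVar α x) + (2 / α * besselVar α x) • f')) x := by
  refine (((hasDerivAt_id x).const_mul c).smul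
    (hf.scomp x (hasDerivAt_besselVar hx))).congr_deriv ?_
  simp only [id, Function.comp_apply]
  match_scalars <;> field_simp

lemma iteratedDeriv_two_mul_smul_comp_besselVar (hα : α ≠ 0) (hx : 0 < x) {f : ℝ → E}
    (hf : ContDiffOn ℝ 2 f (Ioi 0)) :
    iteratedDeriv 2 (fun y => (c * y) • f (besselVar α y)) x =
      (4 / α ^ 2 * besselVar α x / x ^ 2) • (c * x) • besselOp (α / 2 + 1) f (besselVar α x) := by
  have ha := besselVar_pos hα hx
  have hf' : HasDerivAt (deriv f) (iteratedDeriv 2 f (besselVar α x)) (besselVar α x) := by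
    rw [iteratedDeriv_succ, iteratedDeriv_one]
    exact (((hf.deriv_of_isOpen (m := 1) isOpen_Ioi (by norm_num)).contDiffAt
      (Ioi_mem_nhds ha)).differentiableAt one_ne_zero).hasDerivAt
  have hderiv : ∀ᶠ y in 𝓝 x, HasDerivAt (fun y => (c * y) • f (besselVar α y))
      (c • (f (besselVar α y) + (2 / α * besselVar α y) • deriv f (besselVar α y))) y := by
    filter_upwards [Ioi_mem_nhds hx] with y hy
    exact hasDerivAt_mul_smul_comp_besselVar hα hy ((hf.contDiffAt
      (Ioi_mem_nhds (besselVar_pos hα hy))).differentiableAt two_ne_zero).hasDerivAt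
  have hf₁ := ((hf.contDiffAt (Ioi_mem_nhds ha)).differentiableAt two_ne_zero).hasDerivAt
  have hderiv₂ := ((hf₁.add (((hasDerivAt_id (besselVar α x)).const_mul (2 / α)).smul
    hf')).const_smul c).scomp x (hasDerivAt_besselVar hx)
  rw [iteratedDeriv_two_eq_of_hasDerivAt hderiv hderiv₂, besselOp]
  simp only [id]
  match_scalars <;> (field_simp; ring)

lemma DxC_eqOn_of_eqOn_smul_comp (hα : α ≠ 0) {w f : ℝ → ℂ}
    (hw : EqOn w (fun x => (c * x) • f (besselVar α x)) (Ioi 0)) (hf : ContDiffOn ℝ 2 f (Ioi 0)) :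
    EqOn (DxC α w) (fun x => (c * x) • besselOp (α / 2 + 1) f (besselVar α x)) (Ioi 0) := by
  intro x hx
  have hx : 0 < x := hx
  have hcoef : x ^ (2 * (α - 1) / α) * (4 / α ^ 2 * besselVar α x / x ^ 2) = 1 := by
    calc x ^ (2 * (α - 1) / α) * (4 / α ^ 2 * besselVar α x / x ^ 2)
        = x ^ (2 * (α - 1) / α) * besselVar α x * (4 / (α ^ 2 * x ^ 2)) := by ring
      _ = 1 := by rw [rpow_mul_besselVar hα hx]; field_simp
  rw [DxC, ← Complex.real_smul, (hw.eventuallyEq_of_mem (Ioi_mem_nhds hx)).iteratedDeriv_eq,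
    iteratedDeriv_two_mul_smul_comp_besselVar hα hx hf, smul_smul, hcoef, one_smul]

lemma iterate_DxC_eqOn_of_eqOn_smul_comp (hα : α ≠ 0) {w f : ℝ → ℂ}
    (hw : EqOn w (fun x => (c * x) • f (besselVar α x)) (Ioi 0)) (hf : ContDiffOn ℝ ∞ f (Ioi 0))
    (m : ℕ) :
    EqOn ((DxC α)^[m] w)
      (fun x => (c * x) • (besselOp (α / 2 + 1))^[m] f (besselVar α x)) (Ioi 0) := by
  induction m generalizing w f with
  | zero => exact hw
  | succ _ ih =>
    exact ih (DxC_eqOn_of_eqOn_smul_comp hα hw (contDiffOn_infty.1 hf 2))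
      (contDiffOn_besselOp isOpen_Ioi hf)

lemma Tt_eq_smul_invGammaConv (ht : 0 ≤ t) (g : ℝ → ℂ) (x : ℝ) :
    Tt α t g x = (α ^ α / (2 ^ α * Real.Gamma (α / 2)) * x) •
      invGammaConv (α / 2 + 1) t g (besselVar α x) := by
  have hkernel (s : ℝ) : Kker α x s = α ^ α / (2 ^ α * Real.Gamma (α / 2)) * x *
      invGammaKernel (α / 2 + 1) (besselVar α x) s := by
    rw [Kker, invGammaKernel, besselVar, mul_assoc _ (s ^ _)]
    congr 3
    rw [← div_div]
    ring
  have hreflect := intervalIntegral.integral_comp_sub_left (a := 0) (b := t)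
    (fun τ => (Kker α x (t - τ) : ℂ) * g τ) t
  rw [sub_self, sub_zero] at hreflect
  rw [Tt, ← integral_Ioc_eq_integral_Ioo, ← intervalIntegral.integral_of_le ht, ← hreflect,
    invGammaConv, ← intervalIntegral.integral_smul]
  simp only [sub_sub_cancel, hkernel, ← Complex.real_smul, mul_smul]

end Conjugation

theorem stmt7_general {α t : ℝ} (hα : 0 < α) (ht : 0 < t) {m : ℕ} {g : ℝ → ℂ}
    (hg : ContDiffOn ℝ m g (Icc 0 t)) :
    Tendsto ((DxC α)^[m] (Tt α t g)) (𝓝[>] 0) (𝓝 (iteratedDerivWithin m g (Icc 0 t) t)) := by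
  have hν : 0 < α / 2 + 1 := by positivity
  have hgi := hg.continuousOn.intervalIntegrable_of_Icc (μ := volume) ht.le
  have hgm := hg.continuousOn_iteratedDerivWithin le_rfl (uniqueDiffOn_Icc ht)
  obtain ⟨r, hr, hiter⟩ := exists_contDiff_iterate_besselOp_invGammaConv hν ht hg
  have hconj := iterate_DxC_eqOn_of_eqOn_smul_comp hα.ne'
    (fun x _ => Tt_eq_smul_invGammaConv ht.le g x) (contDiffOn_invGammaConv hν ht.le hgi) m
  have hleft : Tendsto (iteratedDerivWithin m g (Icc 0 t)) (𝓝[<] t)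
      (𝓝 (iteratedDerivWithin m g (Icc 0 t) t)) :=
    ((hgm t (right_mem_Icc.2 ht.le)).mono Ioo_subset_Icc_self).tendsto.mono_left
      (nhdsWithin_Ioo_eq_nhdsLT ht).ge
  have hmain := (tendsto_rpow_smul_invGammaConv (by linarith : 1 < α / 2 + 1) ht
    (hgm.intervalIntegrable_of_Icc ht.le) hleft).comp (tendsto_besselVar_nhdsGT_zero hα)
  have hsum := hmain.add (tendsto_mul_smul_comp_besselVar
    (c := α ^ α / (2 ^ α * Real.Gamma (α / 2))) hα hr.continuous.continuousAt)
  rw [add_zero] at hsum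
  refine hsum.congr' ?_
  filter_upwards [self_mem_nhdsWithin] with x hx
  rw [hconj hx]
  beta_reduce
  rw [hiter (besselVar_pos hα.ne' hx), Pi.add_apply, smul_add, Function.comp_apply,
    add_sub_cancel_right, besselVar_rpow_half_div_Gamma hα (mem_Ioi.1 hx).le]

end

theorem stmt7 (α T : ℝ) (hα : 0 < α) (hT : 0 < T) (m : ℕ)
    (g : ℝ → ℂ) (hg : ContDiffOn ℝ (m : ℕ∞) g (Set.Icc 0 T))
    (t : ℝ) (ht : t ∈ Set.Ioo 0 T) :
    Tendsto (fun x => (DxC α)^[m] (Tt α t g) x) (nhdsWithin 0 (Set.Ioi 0))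
      (nhds (iteratedDeriv m g t)) := by
  rw [← iteratedDerivWithin_eq_iteratedDeriv (uniqueDiffOn_Icc ht.1)
    (hg.contDiffAt (Icc_mem_nhds ht.1 ht.2)) (right_mem_Icc.2 ht.1.le)]
  exact stmt7_general hα ht.1 (hg.mono (Icc_subset_Icc_right ht.2.le))
end

section
/- Fix 0 < α ≤ 2 and t > 0. For all z, w in the open sector Δ_α, t^{-α} ∫_0^t K_α(z,t-τ) · conj(K_α(w,t-τ)) · τ^α dτ = (4 z · conj(w) / (α B(α/2, α/2))) · exp(-(α²/(4t)) (z^{2/α} + conj(w)^{2/α})) · (z^{2/α} + conj(w)^{2/α})^{-(α+1)}, where B denotes the Beta function and the complex power (z^{2/α} + conj(w)^{2/α})^{-(α+1)} is taken with the principal branch (the base has positive real part). -/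
open MeasureTheory Filter Set Complex

/-- The open sector `Δ_α = {z ≠ 0 : |arg z| < πα/4}`. -/
def sector (α : ℝ) : Set ℂ :=
  {z : ℂ | z ≠ 0 ∧ |Complex.arg z| < Real.pi * α / 4}

/-- The complex kernel `K_α(z,s) = (α^α/(2^α Γ(α/2))) z s^{-(α/2+1)} exp(-α² z^{2/α}/(4s))`,
where `z^{2/α}` is taken with the principal branch. -/
noncomputable def Kc (α : ℝ) (z : ℂ) (s : ℝ) : ℂ :=
  ((α ^ α / (2 ^ α * Real.Gamma (α / 2)) : ℝ) : ℂ) * z * (((s ^ (-(α / 2 + 1)) : ℝ)) : ℂ) *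
    Complex.exp (-(α ^ 2 : ℂ) * z ^ (((2 / α : ℝ)) : ℂ) / (4 * (s : ℂ)))

/-- The transform `(L_t^α g)(z) = t^{-α} ∫_0^t K_α(z,t-τ) g(τ) τ^α dτ`. -/
noncomputable def Lc (α t : ℝ) (g : ℝ → ℂ) (z : ℂ) : ℂ :=
  ((t ^ (-α) : ℝ) : ℂ) *
    ∫ τ in Set.Ioo (0 : ℝ) t, Kc α z (t - τ) * g τ * ((τ ^ α : ℝ) : ℂ)

/-- The Beta function `B(a,b) = Γ(a)Γ(b)/Γ(a+b)`. -/
noncomputable def betaFn (a b : ℝ) : ℝ := Real.Gamma a * Real.Gamma b / Real.Gamma (a + b)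


/-!
The substitution `u = 1 / (t - τ) - 1 / t` maps `(0, t)` onto `(0, ∞)`. The powers of `t - τ`
coming from `τ ^ α`, from the two kernels and from the Jacobian then cancel, and the integral
becomes the Gamma integral of `u ^ α * exp (-c * u)` with the complex rate
`c = α² / 4 * (z ^ (2 / α) + conj (w ^ (2 / α)))`. It equals `Γ(α + 1) * c ^ (-(α + 1))` since both
sides are holomorphic in `c` on the right half-plane and agree on the positive reals. Membership of
`z` and `w` in the sector is what makes the real part of `c` positive.
-/

open Topology in
theorem eqOn_re_pos_of_eq_on_pos_real {f g : ℂ → ℂ}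
    (hf : DifferentiableOn ℂ f {z | 0 < z.re}) (hg : DifferentiableOn ℂ g {z | 0 < z.re})
    (hfg : ∀ x : ℝ, 0 < x → f x = g x) : EqOn f g {z | 0 < z.re} := by
  have hopen : IsOpen {z : ℂ | 0 < z.re} := isOpen_lt continuous_const continuous_re
  have hreal : Tendsto ((↑) : ℝ → ℂ) (𝓝[≠] 1) (𝓝[≠] ((1 : ℝ) : ℂ)) :=
    continuous_ofReal.continuousWithinAt.tendsto_nhdsWithin fun x hx ↦ by simpa using hx
  have hpos : ∀ᶠ x : ℝ in 𝓝[≠] 1, f x = g x :=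
    nhdsWithin_le_nhds ((lt_mem_nhds one_pos).mono hfg)
  exact (hf.analyticOnNhd hopen).eqOn_of_preconnected_of_frequently_eq (hg.analyticOnNhd hopen)
    (convex_halfSpace_re_gt 0).isPreconnected (by simp) (hreal.frequently hpos.frequently)

theorem norm_cpow_mul_exp_neg_mul (a r : ℂ) {x : ℝ} (hx : 0 < x) :
    ‖(x : ℂ) ^ a * exp (-(r * x))‖ = x ^ a.re * Real.exp (-r.re * x) := by
  rw [norm_mul, norm_cpow_eq_rpow_re_of_pos hx, norm_exp, neg_re, re_mul_ofReal, neg_mul]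

theorem aestronglyMeasurable_cpow_mul_exp_neg_mul (a r : ℂ) (μ : Measure ℝ) :
    AEStronglyMeasurable (fun x : ℝ ↦ (x : ℂ) ^ a * exp (-(r * x))) μ :=
  Measurable.aestronglyMeasurable (by fun_prop)

theorem integrableOn_rpow_mul_exp_neg_mul {p b : ℝ} (hp : -1 < p) (hb : 0 < b) :
    IntegrableOn (fun x : ℝ ↦ x ^ p * Real.exp (-b * x)) (Ioi 0) := by
  simpa only [Real.rpow_one] using integrableOn_rpow_mul_exp_neg_mul_rpow hp one_pos hb

theorem integrableOn_cpow_mul_exp_neg_mul {a r : ℂ} (ha : -1 < a.re) (hr : 0 < r.re) :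
    IntegrableOn (fun x : ℝ ↦ (x : ℂ) ^ a * exp (-(r * x))) (Ioi 0) := by
  refine (integrableOn_rpow_mul_exp_neg_mul ha hr).mono'
    (aestronglyMeasurable_cpow_mul_exp_neg_mul a r _) ?_
  filter_upwards [ae_restrict_mem measurableSet_Ioi] with x hx
  exact (norm_cpow_mul_exp_neg_mul a r hx).le

theorem hasDerivAt_cpow_mul_exp_neg_mul (a r : ℂ) {x : ℝ} (hx : x ≠ 0) :
    HasDerivAt (fun r : ℂ ↦ (x : ℂ) ^ a * exp (-(r * x)))
      (-((x : ℂ) ^ (a + 1) * exp (-(r * x)))) r := by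
  have hlin : HasDerivAt (fun r : ℂ ↦ -(r * x)) (-x : ℂ) r := (hasDerivAt_mul_const (x : ℂ)).neg
  refine (hlin.cexp.const_mul ((x : ℂ) ^ a)).congr_deriv ?_
  rw [cpow_add _ _ (ofReal_ne_zero.2 hx), cpow_one]
  ring

theorem hasDerivAt_integral_cpow_mul_exp_neg_mul {a r : ℂ} (ha : -1 < a.re) (hr : 0 < r.re) :
    HasDerivAt (fun r : ℂ ↦ ∫ x : ℝ in Ioi 0, (x : ℂ) ^ a * exp (-(r * x)))
      (∫ x : ℝ in Ioi 0, -((x : ℂ) ^ (a + 1) * exp (-(r * x)))) r := by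
  have hs : {q : ℂ | r.re / 2 < q.re} ∈ nhds r :=
    (isOpen_lt continuous_const continuous_re).mem_nhds (half_lt_self hr)
  have hbound : IntegrableOn (fun x : ℝ ↦ x ^ (a + 1).re * Real.exp (-(r.re / 2) * x)) (Ioi 0) :=
    integrableOn_rpow_mul_exp_neg_mul (by simp only [add_re, one_re]; linarith) (half_pos hr)
  refine (hasDerivAt_integral_of_dominated_loc_of_deriv_le
    (F' := fun q x ↦ -((x : ℂ) ^ (a + 1) * exp (-(q * x)))) hs
    (.of_forall fun q ↦ aestronglyMeasurable_cpow_mul_exp_neg_mul a q _)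
    (integrableOn_cpow_mul_exp_neg_mul ha hr)
    (aestronglyMeasurable_cpow_mul_exp_neg_mul (a + 1) r _).neg ?_ hbound ?_).2
  · filter_upwards [ae_restrict_mem measurableSet_Ioi] with x (hx : 0 < x) q (hq : r.re / 2 < q.re)
    rw [norm_neg, norm_cpow_mul_exp_neg_mul _ _ hx]
    gcongr
  · filter_upwards [ae_restrict_mem measurableSet_Ioi] with x (hx : 0 < x) q _
    exact hasDerivAt_cpow_mul_exp_neg_mul a q hx.ne'

theorem integral_cpow_mul_exp_neg_mul {a r : ℂ} (ha : -1 < a.re) (hr : 0 < r.re) :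
    ∫ x : ℝ in Ioi 0, (x : ℂ) ^ a * exp (-(r * x)) = Gamma (a + 1) * r ^ (-(a + 1)) := by
  refine eqOn_re_pos_of_eq_on_pos_real
    (f := fun r ↦ ∫ x : ℝ in Ioi 0, (x : ℂ) ^ a * exp (-(r * x)))
    (g := fun r ↦ Gamma (a + 1) * r ^ (-(a + 1)))
    (fun q hq ↦
      (hasDerivAt_integral_cpow_mul_exp_neg_mul ha hq).differentiableAt.differentiableWithinAt)
    (fun q hq ↦ ((differentiableAt_id.cpow_const (.inl hq)).const_mul _).differentiableWithinAt)
    (fun y hy ↦ ?_) hr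
  have ha' : 0 < (a + 1).re := by simp only [add_re, one_re]; linarith
  have h := integral_cpow_mul_exp_neg_mul_Ioi ha' hy
  rwa [add_sub_cancel_right, one_div, inv_cpow_ofReal_nonneg hy.le, ← cpow_neg, mul_comm] at h

theorem image_inv_add_inv_Ioi {t : ℝ} (ht : 0 < t) :
    (fun u : ℝ ↦ (u + t⁻¹)⁻¹) '' Ioi 0 = Ioo 0 t := by
  have h : (fun u : ℝ ↦ (u + t⁻¹)⁻¹) = Inv.inv ∘ (· + t⁻¹) := rfl
  rw [h, image_comp, image_add_const_Ioi, zero_add, image_inv_eq_inv,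
    inv_Ioi₀ (inv_pos.2 ht), inv_inv]

section ChangeOfVariables

variable {E : Type*} [NormedAddCommGroup E] [NormedSpace ℝ E] {t : ℝ}

theorem integral_Ioo_eq_integral_Ioi_inv_add_inv (ht : 0 < t) (f : ℝ → E) :
    ∫ s in Ioo 0 t, f s = ∫ u in Ioi 0, ((u + t⁻¹) ^ 2)⁻¹ • f (u + t⁻¹)⁻¹ := by
  have hderiv : ∀ u ∈ Ioi (0 : ℝ),
      HasDerivWithinAt (fun u : ℝ ↦ (u + t⁻¹)⁻¹) (-((u + t⁻¹) ^ 2)⁻¹) (Ioi 0) u := by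
    intro u (hu : 0 < u)
    have hne : u + t⁻¹ ≠ 0 := by positivity
    exact (((hasDerivAt_id u).add_const t⁻¹).inv hne).hasDerivWithinAt.congr_deriv
      (by simp only [id_eq, neg_div, one_div])
  have hinj : InjOn (fun u : ℝ ↦ (u + t⁻¹)⁻¹) (Ioi 0) :=
    (inv_injective.comp (add_left_injective t⁻¹)).injOn
  rw [← image_inv_add_inv_Ioi ht, integral_image_eq_integral_abs_deriv_smul measurableSet_Ioi
    hderiv hinj]
  simp only [abs_neg, abs_inv, abs_sq]

theorem integral_Ioo_comp_const_sub (ht : 0 ≤ t) (f : ℝ → E) :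
    ∫ τ in Ioo 0 t, f (t - τ) = ∫ s in Ioo 0 t, f s := by
  simp only [← integral_Ioc_eq_integral_Ioo, ← intervalIntegral.integral_of_le ht,
    intervalIntegral.integral_comp_sub_left, sub_self, sub_zero]

end ChangeOfVariables

theorem cpow_sub_mul_cpow_neg_inv_add_inv (a : ℂ) {t u : ℝ} (ht : 0 < t) (hu : 0 < u) :
    (((u + t⁻¹) ^ 2)⁻¹ : ℝ) *
        (((t - (u + t⁻¹)⁻¹ : ℝ) : ℂ) ^ a * (((u + t⁻¹)⁻¹ : ℝ) : ℂ) ^ (-(a + 2))) =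
      (t : ℂ) ^ a * (u : ℂ) ^ a := by
  have hτ : t - (u + t⁻¹)⁻¹ = t * u * (u + t⁻¹)⁻¹ := by field_simp; ring
  rw [hτ, ← inv_pow]
  have hs : 0 < (u + t⁻¹)⁻¹ := by positivity
  generalize (u + t⁻¹)⁻¹ = s at hs ⊢
  have hs0 : (s : ℂ) ≠ 0 := ofReal_ne_zero.2 hs.ne'
  rw [ofReal_mul, mul_cpow_ofReal_nonneg (by positivity) hs.le, ofReal_mul,
    mul_cpow_ofReal_nonneg ht.le hu.le, cpow_neg, cpow_add _ _ hs0, cpow_ofNat, ofReal_pow]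
  have hsa : (s : ℂ) ^ a ≠ 0 := by simp [cpow_eq_zero_iff, hs0]
  field_simp

theorem integral_cpow_mul_cpow_sub_mul_exp_neg_div_sub {a c : ℂ} {t : ℝ} (ha : -1 < a.re)
    (hc : 0 < c.re) (ht : 0 < t) :
    ∫ τ : ℝ in Ioo 0 t,
        (τ : ℂ) ^ a * ((t - τ : ℝ) : ℂ) ^ (-(a + 2)) * exp (-(c / ((t - τ : ℝ) : ℂ))) =
      Gamma (a + 1) * (t : ℂ) ^ a * exp (-(c / t)) * c ^ (-(a + 1)) := by
  have hsubst : ∀ u ∈ Ioi (0 : ℝ), ((u + t⁻¹) ^ 2)⁻¹ •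
        (((t - (u + t⁻¹)⁻¹ : ℝ) : ℂ) ^ a * (((u + t⁻¹)⁻¹ : ℝ) : ℂ) ^ (-(a + 2)) *
          exp (-(c / (((u + t⁻¹)⁻¹ : ℝ) : ℂ)))) =
      (t : ℂ) ^ a * exp (-(c / t)) * ((u : ℂ) ^ a * exp (-(c * u))) := by
    intro u hu
    have hexp : exp (-(c / (((u + t⁻¹)⁻¹ : ℝ) : ℂ))) = exp (-(c / t)) * exp (-(c * u)) := by
      rw [← Complex.exp_add]
      congr 1
      push_cast
      rw [div_inv_eq_mul]
      ring
    rw [real_smul, ← mul_assoc, cpow_sub_mul_cpow_neg_inv_add_inv a ht hu, hexp]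
    ring
  calc
    _ = ∫ s : ℝ in Ioo 0 t,
          ((t - s : ℝ) : ℂ) ^ a * (s : ℂ) ^ (-(a + 2)) * exp (-(c / s)) := by
      rw [← integral_Ioo_comp_const_sub ht.le]
      simp only [sub_sub_cancel]
    _ = (t : ℂ) ^ a * exp (-(c / t)) * ∫ u : ℝ in Ioi 0, (u : ℂ) ^ a * exp (-(c * u)) := by
      rw [integral_Ioo_eq_integral_Ioi_inv_add_inv ht,
        setIntegral_congr_fun measurableSet_Ioi hsubst, integral_const_mul]
    _ = Gamma (a + 1) * (t : ℂ) ^ a * exp (-(c / t)) * c ^ (-(a + 1)) := by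
      rw [integral_cpow_mul_exp_neg_mul ha hc]
      ring

theorem ofReal_mul_cpow_of_nonneg {r : ℝ} (hr : 0 ≤ r) (x p : ℂ) :
    ((r : ℂ) * x) ^ p = (r : ℂ) ^ p * x ^ p := by
  rcases eq_or_ne p 0 with rfl | hp
  · simp only [cpow_zero, mul_one]
  rcases hr.eq_or_lt with rfl | hr
  · simp only [ofReal_zero, zero_mul, zero_cpow hp]
  rcases eq_or_ne x 0 with rfl | hx
  · simp only [mul_zero, zero_cpow hp]
  have hr0 : (r : ℂ) ≠ 0 := ofReal_ne_zero.2 hr.ne'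
  rw [cpow_def_of_ne_zero (mul_ne_zero hr0 hx), log_ofReal_mul hr hx, ofReal_log hr.le, add_mul,
    Complex.exp_add, ← cpow_def_of_ne_zero hr0, ← cpow_def_of_ne_zero hx]

/-- The constant `α^α / (2^α Γ(α/2))` in front of the kernel `K_α`. -/
noncomputable def kernelConst (α : ℝ) : ℝ := α ^ α / (2 ^ α * Real.Gamma (α / 2))

/-- The rate `c = (α²/4) (z^{2/α} + conj(w^{2/α}))` for which `K_α(z,s) conj(K_α(w,s))` decays like
`exp(-c/s)` as `s → 0`. -/
noncomputable def kernelRate (α : ℝ) (z w : ℂ) : ℂ :=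
  ((α ^ 2 / 4 : ℝ) : ℂ) * (z ^ ((2 / α : ℝ) : ℂ) + (starRingEnd ℂ) (w ^ ((2 / α : ℝ) : ℂ)))

theorem Kc_mul_conj_Kc (α : ℝ) (z w : ℂ) {s : ℝ} (hs : 0 < s) :
    Kc α z s * (starRingEnd ℂ) (Kc α w s) =
      (kernelConst α : ℂ) ^ 2 * z * (starRingEnd ℂ) w *
        ((s : ℂ) ^ (-((α : ℂ) + 2)) * exp (-(kernelRate α z w / s))) := by
  have hpow : (s : ℂ) ^ (-((α : ℂ) + 2)) =
      ((s ^ (-(α / 2 + 1)) : ℝ) : ℂ) * ((s ^ (-(α / 2 + 1)) : ℝ) : ℂ) := by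
    rw [← ofReal_mul, ← Real.rpow_add hs, ofReal_cpow hs.le]
    congr 1
    push_cast
    ring
  have hexp : exp (-(kernelRate α z w / s)) =
      exp (-(α ^ 2 : ℂ) * z ^ ((2 / α : ℝ) : ℂ) / (4 * s)) *
        (starRingEnd ℂ) (exp (-(α ^ 2 : ℂ) * w ^ ((2 / α : ℝ) : ℂ) / (4 * s))) := by
    rw [← exp_conj, ← Complex.exp_add, kernelRate]
    congr 1
    simp only [map_div₀, map_mul, map_neg, map_pow, conj_ofReal, map_ofNat]
    push_cast
    ring
  rw [hpow, hexp, Kc, Kc, ← kernelConst]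
  simp only [map_mul, conj_ofReal]
  ring

theorem kernelConst_sq_mul_Gamma_mul_rpow {α : ℝ} (hα : 0 < α) :
    kernelConst α ^ 2 * Real.Gamma (α + 1) * (α ^ 2 / 4) ^ (-(α + 1)) =
      4 / (α * betaFn (α / 2) (α / 2)) := by
  have hpow : (α ^ 2 / 4) ^ (-(α + 1)) = (2 ^ α) ^ 2 * 4 / ((α ^ α) ^ 2 * α ^ 2) := by
    have hsq : α ^ 2 / 4 = (α / 2) ^ 2 := by ring
    rw [Real.rpow_neg (by positivity), Real.rpow_add_one (by positivity), hsq,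
      ← Real.rpow_pow_comm (by positivity), Real.div_rpow hα.le zero_le_two]
    field_simp
    norm_num
  have hΓhalf : Real.Gamma (α / 2) ≠ 0 := (Real.Gamma_pos_of_pos (half_pos hα)).ne'
  have hΓ : Real.Gamma α ≠ 0 := (Real.Gamma_pos_of_pos hα).ne'
  rw [hpow, kernelConst, betaFn, Real.Gamma_add_one hα.ne', add_halves]
  field_simp

theorem kernelConst_sq_mul_Gamma_mul_cpow {α : ℝ} (hα : 0 < α) :
    (kernelConst α : ℂ) ^ 2 * Gamma ((α : ℂ) + 1) *
        ((α ^ 2 / 4 : ℝ) : ℂ) ^ (-((α : ℂ) + 1)) = 4 / (α * (betaFn (α / 2) (α / 2) : ℝ)) := by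
  have h := congrArg ofReal (kernelConst_sq_mul_Gamma_mul_rpow hα)
  simpa only [ofReal_mul, ofReal_pow, ofReal_div, ofReal_cpow (by positivity : 0 ≤ α ^ 2 / 4),
    ← Gamma_ofReal, ofReal_add, ofReal_neg, ofReal_one, ofReal_ofNat] using h

theorem re_cpow_pos_of_mem_sector {α : ℝ} (hα : 0 < α) {z : ℂ} (hz : z ∈ sector α) :
    0 < (z ^ ((2 / α : ℝ) : ℂ)).re := by
  obtain ⟨hz0, harg⟩ := hz
  have hangle : |z.arg * (2 / α)| < Real.pi / 2 := by
    rw [abs_mul, abs_of_pos (by positivity : 0 < 2 / α)]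
    calc |z.arg| * (2 / α) < Real.pi * α / 4 * (2 / α) := by gcongr
      _ = Real.pi / 2 := by field_simp; norm_num
  rw [cpow_ofReal_re]
  exact mul_pos (Real.rpow_pos_of_pos (norm_pos_iff.2 hz0) _)
    (Real.cos_pos_of_mem_Ioo (abs_lt.1 hangle))

theorem integral_Kc_mul_conj_Kc_mul_rpow {α t : ℝ} (hα : -1 < α) (ht : 0 < t) {z w : ℂ}
    (hrate : 0 < (kernelRate α z w).re) :
    ∫ τ in Ioo (0 : ℝ) t,
        Kc α z (t - τ) * (starRingEnd ℂ) (Kc α w (t - τ)) * ((τ ^ α : ℝ) : ℂ) =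
      (kernelConst α : ℂ) ^ 2 * z * (starRingEnd ℂ) w * (Gamma ((α : ℂ) + 1) * (t : ℂ) ^ (α : ℂ) *
        exp (-(kernelRate α z w / t)) * kernelRate α z w ^ (-((α : ℂ) + 1))) := by
  rw [← integral_cpow_mul_cpow_sub_mul_exp_neg_div_sub (by rwa [ofReal_re]) hrate ht,
    ← integral_const_mul]
  refine setIntegral_congr_fun measurableSet_Ioo fun τ hτ ↦ ?_
  simp only [Kc_mul_conj_Kc α z w (sub_pos.2 hτ.2), ofReal_cpow hτ.1.le]
  ring

theorem stmt12_general (α t : ℝ) (hα : 0 < α) (ht : 0 < t) (z w : ℂ)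
    (hre : 0 < (z ^ ((2 / α : ℝ) : ℂ) + (starRingEnd ℂ) (w ^ ((2 / α : ℝ) : ℂ))).re) :
    ((t ^ (-α) : ℝ) : ℂ) *
        ∫ τ in Set.Ioo (0 : ℝ) t,
          Kc α z (t - τ) * (starRingEnd ℂ) (Kc α w (t - τ)) * ((τ ^ α : ℝ) : ℂ) =
      (4 * z * (starRingEnd ℂ) w / ((α : ℂ) * ((betaFn (α / 2) (α / 2) : ℝ) : ℂ))) *
        Complex.exp (-((α ^ 2 : ℂ) / (4 * (t : ℂ))) *
          (z ^ (((2 / α : ℝ)) : ℂ) + (starRingEnd ℂ) (w ^ (((2 / α : ℝ)) : ℂ)))) *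
        (z ^ (((2 / α : ℝ)) : ℂ) + (starRingEnd ℂ) (w ^ (((2 / α : ℝ)) : ℂ))) ^
          ((-(α + 1) : ℝ) : ℂ) := by
  have hrate : 0 < (kernelRate α z w).re := by rw [kernelRate, re_ofReal_mul]; positivity
  rw [integral_Kc_mul_conj_Kc_mul_rpow (by linarith) ht hrate, kernelRate]
  generalize z ^ ((2 / α : ℝ) : ℂ) + (starRingEnd ℂ) (w ^ ((2 / α : ℝ) : ℂ)) = S
  have ht_cancel : ((t ^ (-α) : ℝ) : ℂ) * (t : ℂ) ^ (α : ℂ) = 1 := by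
    rw [← ofReal_cpow ht.le, ← ofReal_mul, ← Real.rpow_add ht, neg_add_cancel, Real.rpow_zero,
      ofReal_one]
  have hexp : -(((α ^ 2 / 4 : ℝ) : ℂ) * S / t) = -((α ^ 2 : ℂ) / (4 * t)) * S := by
    push_cast
    ring
  have hexponent : ((-(α + 1) : ℝ) : ℂ) = -((α : ℂ) + 1) := by push_cast; rfl
  rw [ofReal_mul_cpow_of_nonneg (by positivity), hexp, hexponent, mul_assoc 4,
    mul_div_right_comm, ← kernelConst_sq_mul_Gamma_mul_cpow hα]
  linear_combination (kernelConst α : ℂ) ^ 2 * z * (starRingEnd ℂ) w * Gamma ((α : ℂ) + 1) *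
    exp (-((α ^ 2 : ℂ) / (4 * t)) * S) * ((α ^ 2 / 4 : ℝ) : ℂ) ^ (-((α : ℂ) + 1)) *
    S ^ (-((α : ℂ) + 1)) * ht_cancel

theorem stmt12 (α t : ℝ) (hα : 0 < α) (hα2 : α ≤ 2) (ht : 0 < t)
    (z w : ℂ) (hz : z ∈ sector α) (hw : w ∈ sector α) :
    ((t ^ (-α) : ℝ) : ℂ) *
        ∫ τ in Set.Ioo (0 : ℝ) t,
          Kc α z (t - τ) * (starRingEnd ℂ) (Kc α w (t - τ)) * ((τ ^ α : ℝ) : ℂ) =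
      (4 * z * (starRingEnd ℂ) w / ((α : ℂ) * ((betaFn (α / 2) (α / 2) : ℝ) : ℂ))) *
        Complex.exp (-((α ^ 2 : ℂ) / (4 * (t : ℂ))) *
          (z ^ (((2 / α : ℝ)) : ℂ) + (starRingEnd ℂ) (w ^ (((2 / α : ℝ)) : ℂ)))) *
        (z ^ (((2 / α : ℝ)) : ℂ) + (starRingEnd ℂ) (w ^ (((2 / α : ℝ)) : ℂ))) ^
          ((-(α + 1) : ℝ) : ℂ) := by
  refine stmt12_general α t hα ht z w ?_
  rw [add_re, conj_re]
  exact add_pos (re_cpow_pos_of_mem_sector hα hz) (re_cpow_pos_of_mem_sector hα hw)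
end

section
/- Fix α > 0 and t > 0. Let g : (0,t) → ℂ be measurable with ∫_0^t |g(τ)|² τ^α dτ < ∞. If ∫_0^t (t-τ)^{-(α/2+1)} exp(-z/(t-τ)) g(τ) τ^α dτ = 0 for every z ∈ ℂ with Re z > 0, then g = 0 almost everywhere on (0,t). -/
open MeasureTheory Filter Set

/-!
It is enough to know the vanishing for `z` in an arithmetic progression `c + n * d`. With
`X τ = exp (-d / (t - τ))` and `F τ = exp (-c / (t - τ)) (t - τ) ^ β τ ^ α g τ` it says that all
the moments `∫ X ^ n F` are zero. Since `X` extends to a continuous injective function on `[0, t]`,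
the polynomials in `X` are uniformly dense in `C([0, t])` by Stone-Weierstrass, so the integrable
function `F` is orthogonal to every continuous function and vanishes almost everywhere. Dividing by
the nowhere vanishing kernel gives `g = 0`.
-/

open scoped Topology

section Moments

variable {Y : Type*} [TopologicalSpace Y] {K : Set Y} {X φ : Y → ℝ}

theorem exists_polynomial_near_of_injOn (hK : IsCompact K) (hX : ContinuousOn X K)
    (hinj : InjOn X K) (hφ : ContinuousOn φ K) {ε : ℝ} (hε : 0 < ε) :
    ∃ p : Polynomial ℝ, ∀ y ∈ K, |p.eval (X y) - φ y| < ε := by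
  have : CompactSpace K := isCompact_iff_compactSpace.mp hK
  let X' : C(K, ℝ) := ⟨K.domRestrict X, hX.domRestrict⟩
  have hsep : (Algebra.adjoin ℝ {X'}).SeparatesPoints := fun x y hxy =>
    ⟨X', ⟨X', Algebra.subset_adjoin rfl, rfl⟩, fun h => hxy (hinj.injective h)⟩
  obtain ⟨⟨q, hq⟩, hqφ⟩ := ContinuousMap.exists_mem_subalgebra_near_continuous_of_separatesPoints
    _ hsep (K.domRestrict φ) hφ.domRestrict ε hε
  rw [Algebra.adjoin_singleton_eq_range_aeval] at hq
  obtain ⟨p, rfl⟩ := hq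
  refine ⟨p, fun y hy => ?_⟩
  simpa [Polynomial.aeval_continuousMap_apply, X'] using hqφ ⟨y, hy⟩

variable [T2Space Y] [MeasurableSpace Y] [OpensMeasurableSpace Y] {μ : Measure Y}
  {E : Type*} [NormedAddCommGroup E] [NormedSpace ℝ E] {f : Y → E}

theorem setIntegral_polynomial_smul_eq_zero (hK : IsCompact K) (hX : ContinuousOn X K)
    (hf : IntegrableOn f K μ) (hmom : ∀ n : ℕ, ∫ y in K, X y ^ n • f y ∂μ = 0)
    (p : Polynomial ℝ) : ∫ y in K, p.eval (X y) • f y ∂μ = 0 := by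
  have hint (q : Polynomial ℝ) : IntegrableOn (fun y => q.eval (X y) • f y) K μ :=
    hf.continuousOn_smul (q.continuous.comp_continuousOn hX) hK
  induction p using Polynomial.induction_on' with
  | add p q hp hq =>
    simp only [Polynomial.eval_add, add_smul]
    rw [integral_add (hint p) (hint q), hp, hq, add_zero]
  | monomial n a =>
    simp only [Polynomial.eval_monomial, mul_smul]
    rw [integral_smul, hmom, smul_zero]

theorem setIntegral_smul_eq_zero_of_forall_pow (hK : IsCompact K) (hX : ContinuousOn X K)
    (hinj : InjOn X K) (hf : IntegrableOn f K μ)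
    (hmom : ∀ n : ℕ, ∫ y in K, X y ^ n • f y ∂μ = 0) (hφ : ContinuousOn φ K) :
    ∫ y in K, φ y • f y ∂μ = 0 := by
  have hbound : ∀ ε > 0, ‖∫ y in K, φ y • f y ∂μ‖ ≤ ε * ∫ y in K, ‖f y‖ ∂μ := by
    intro ε hε
    obtain ⟨p, hp⟩ := exists_polynomial_near_of_injOn hK hX hinj hφ hε
    have hpX : ContinuousOn (fun y => p.eval (X y)) K := p.continuous.comp_continuousOn hX
    have hsub : ∫ y in K, φ y • f y ∂μ = ∫ y in K, (φ y - p.eval (X y)) • f y ∂μ := by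
      simp only [sub_smul]
      rw [integral_sub (hf.continuousOn_smul hφ hK) (hf.continuousOn_smul hpX hK),
        setIntegral_polynomial_smul_eq_zero hK hX hf hmom, sub_zero]
    rw [hsub, ← integral_const_mul]
    refine norm_integral_le_of_norm_le (hf.norm.const_mul ε) ?_
    filter_upwards [ae_restrict_mem hK.measurableSet] with y hy
    rw [norm_smul, Real.norm_eq_abs, abs_sub_comm]
    gcongr
    exact (hp y hy).le
  have hlim : Tendsto (fun ε : ℝ => ε * ∫ y in K, ‖f y‖ ∂μ) (𝓝[>] 0) (𝓝 0) :=
    (continuous_mul_const _).tendsto' 0 0 (zero_mul _) |>.mono_left nhdsWithin_le_nhds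
  exact norm_le_zero_iff.mp (ge_of_tendsto hlim (eventually_mem_nhdsWithin.mono hbound))

end Moments

section Uniqueness

variable {E : Type*} [NormedAddCommGroup E] [NormedSpace ℝ E] [CompleteSpace E]

theorem ae_eq_zero_of_forall_setIntegral_pow_smul_eq_zero
    {V : Type*} [NormedAddCommGroup V] [NormedSpace ℝ V] [FiniteDimensional ℝ V]
    [MeasurableSpace V] [BorelSpace V] {μ : Measure V} {K : Set V} {X : V → ℝ} {f : V → E}
    (hK : IsCompact K) (hX : ContinuousOn X K) (hinj : InjOn X K) (hf : IntegrableOn f K μ)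
    (hmom : ∀ n : ℕ, ∫ x in K, X x ^ n • f x ∂μ = 0) :
    ∀ᵐ x ∂μ.restrict K, f x = 0 :=
  ae_eq_zero_of_integral_contDiff_smul_eq_zero (Integrable.locallyIntegrable hf) fun _ hφ _ =>
    setIntegral_smul_eq_zero_of_forall_pow hK hX hinj hf hmom hφ.continuous.continuousOn

theorem injOn_expNegInvGlue : InjOn expNegInvGlue (Ici 0) := by
  intro x hx y hy hxy
  rcases eq_or_lt_of_le (mem_Ici.mp hx) with rfl | hx
  · rw [expNegInvGlue.zero, eq_comm, expNegInvGlue.zero_iff_nonpos] at hxy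
    exact le_antisymm hy hxy
  rcases eq_or_lt_of_le (mem_Ici.mp hy) with rfl | hy
  · rw [expNegInvGlue.zero, expNegInvGlue.zero_iff_nonpos] at hxy
    exact absurd hxy hx.not_ge
  · simpa [expNegInvGlue, hx.not_ge, hy.not_ge] using hxy

theorem ae_eq_zero_of_forall_setIntegral_exp_smul_eq_zero {a t c d : ℝ} (hd : 0 < d) {f : ℝ → E}
    (hf : IntegrableOn (fun τ => Real.exp (-c / (t - τ)) • f τ) (Ioo a t))
    (hzero : ∀ n : ℕ, ∫ τ in Ioo a t, Real.exp (-(c + n * d) / (t - τ)) • f τ = 0) :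
    ∀ᵐ τ ∂volume.restrict (Ioo a t), f τ = 0 := by
  let X : ℝ → ℝ := fun τ => expNegInvGlue ((t - τ) / d)
  have hX : Continuous X := (expNegInvGlue.contDiff (n := 0)).continuous.comp (by fun_prop)
  have hinj : InjOn X (Icc a t) := by
    intro x hx y hy hxy
    have hdiv := injOn_expNegInvGlue (mem_Ici.mpr (div_nonneg (sub_nonneg.mpr hx.2) hd.le))
      (mem_Ici.mpr (div_nonneg (sub_nonneg.mpr hy.2) hd.le)) hxy
    simpa [hd.ne'] using hdiv
  have hexp (n : ℕ) {τ : ℝ} (hτ : τ < t) :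
      X τ ^ n * Real.exp (-c / (t - τ)) = Real.exp (-(c + n * d) / (t - τ)) := by
    have hpos : 0 < (t - τ) / d := div_pos (sub_pos.mpr hτ) hd
    simp only [X, expNegInvGlue, hpos.not_ge, if_false, ← Real.exp_nat_mul, ← Real.exp_add]
    congr 1
    rw [inv_div]
    ring
  have hmom (n : ℕ) : ∫ τ in Icc a t, X τ ^ n • Real.exp (-c / (t - τ)) • f τ = 0 := by
    rw [integral_Icc_eq_integral_Ioo, ← hzero n]
    refine setIntegral_congr_fun measurableSet_Ioo fun τ hτ => ?_
    simp only [smul_smul, hexp n hτ.2]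
  have hae := ae_eq_zero_of_forall_setIntegral_pow_smul_eq_zero isCompact_Icc hX.continuousOn hinj
    ((integrableOn_Icc_iff_integrableOn_Ioo).mpr hf) hmom
  rw [← restrict_Ioo_eq_restrict_Icc] at hae
  simpa only [smul_eq_zero, Real.exp_ne_zero, false_or] using hae

end Uniqueness

section Integrability

variable {E : Type*} [NormedAddCommGroup E] [NormedSpace ℝ E]

theorem integrable_smul_of_integrable_norm_sq_mul {Y : Type*} [MeasurableSpace Y] {μ : Measure Y}
    {w : Y → ℝ} {g : Y → E} (hw : Integrable w μ) (hg : AEStronglyMeasurable g μ)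
    (hgw : Integrable (fun y => ‖g y‖ ^ 2 * w y) μ) : Integrable (fun y => w y • g y) μ := by
  refine (hgw.norm.add hw.norm).mono' (hw.aestronglyMeasurable.smul hg) (ae_of_all _ fun y => ?_)
  have hle : ‖g y‖ ≤ ‖g y‖ ^ 2 + 1 := by nlinarith [sq_nonneg (‖g y‖ - 1), norm_nonneg (g y)]
  calc ‖w y • g y‖ = ‖g y‖ * ‖w y‖ := by rw [norm_smul, mul_comm]
    _ ≤ (‖g y‖ ^ 2 + 1) * ‖w y‖ := by gcongr
    _ = ‖‖g y‖ ^ 2 * w y‖ + ‖w y‖ := by rw [norm_mul, norm_pow, norm_norm]; ring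

theorem rpow_mul_exp_neg_div_le (β : ℝ) {c s : ℝ} (hc : 0 < c) (hs : 0 < s) (n : ℕ) :
    s ^ β * Real.exp (-c / s) ≤ n.factorial / c ^ n * s ^ (β + n) := by
  have hexp : (c / s) ^ n / n.factorial ≤ Real.exp (c / s) :=
    Real.pow_div_factorial_le_exp _ (by positivity) n
  calc s ^ β * Real.exp (-c / s) = s ^ β * (Real.exp (c / s))⁻¹ := by rw [neg_div, Real.exp_neg]
    _ ≤ s ^ β * ((c / s) ^ n / n.factorial)⁻¹ := by gcongr
    _ = n.factorial / c ^ n * s ^ (β + n) := by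
      rw [Real.rpow_add hs, Real.rpow_natCast, div_pow]
      field_simp

theorem integrableOn_rpow_mul_exp_smul {a t c : ℝ} (β : ℝ) (hc : 0 < c) {f : ℝ → E}
    (hf : IntegrableOn f (Ioo a t)) :
    IntegrableOn (fun τ => ((t - τ) ^ β * Real.exp (-c / (t - τ))) • f τ) (Ioo a t) := by
  obtain ⟨n, hn⟩ := exists_nat_ge (-β)
  refine Integrable.bdd_smul hf (n.factorial / c ^ n * (t - a) ^ (β + n)) (by fun_prop) ?_
  filter_upwards [ae_restrict_mem measurableSet_Ioo] with τ hτ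
  have hs : 0 < t - τ := sub_pos.mpr hτ.2
  rw [Real.norm_of_nonneg (by positivity)]
  refine (rpow_mul_exp_neg_div_le β hc hs n).trans ?_
  gcongr
  exacts [by linarith, hτ.1.le]

end Integrability

theorem stmt13_general {E : Type*} [NormedAddCommGroup E] [NormedSpace ℝ E] [CompleteSpace E]
    {α β t c d : ℝ} (hα : -1 < α) (hc : 0 < c) (hd : 0 < d) {g : ℝ → E}
    (hg : AEStronglyMeasurable g (volume.restrict (Ioo 0 t)))
    (hint : IntegrableOn (fun τ => ‖g τ‖ ^ 2 * τ ^ α) (Ioo 0 t))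
    (hzero : ∀ n : ℕ, ∫ τ in Ioo 0 t,
      ((t - τ) ^ β * Real.exp (-(c + n * d) / (t - τ)) * τ ^ α) • g τ = 0) :
    ∀ᵐ τ ∂volume.restrict (Ioo 0 t), g τ = 0 := by
  have hweight : IntegrableOn (fun τ : ℝ => τ ^ α) (Ioo 0 t) :=
    (intervalIntegral.intervalIntegrable_rpow' hα).1.mono_set Ioo_subset_Ioc_self
  have hint' : IntegrableOn (fun τ => τ ^ α • g τ) (Ioo 0 t) :=
    integrable_smul_of_integrable_norm_sq_mul hweight hg hint
  have hae := ae_eq_zero_of_forall_setIntegral_exp_smul_eq_zero (c := c) hd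
    (f := fun τ => (t - τ) ^ β • τ ^ α • g τ)
    (by simpa only [smul_smul, mul_assoc, mul_comm, mul_left_comm] using
      integrableOn_rpow_mul_exp_smul β hc hint')
    (fun n => by simpa only [smul_smul, mul_assoc, mul_left_comm] using hzero n)
  filter_upwards [hae, ae_restrict_mem measurableSet_Ioo] with τ hgτ hτ
  have hs : (t - τ) ^ β ≠ 0 := (Real.rpow_pos_of_pos (sub_pos.mpr hτ.2) β).ne'
  have hw : τ ^ α ≠ 0 := (Real.rpow_pos_of_pos hτ.1 α).ne'
  simpa only [smul_eq_zero, hs, hw, false_or] using hgτ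

theorem stmt13 (α t : ℝ) (hα : 0 < α) (ht : 0 < t)
    (g : ℝ → ℂ) (hg : Measurable g)
    (hint : IntegrableOn (fun τ => ‖g τ‖ ^ 2 * τ ^ α) (Set.Ioo 0 t))
    (hzero : ∀ z : ℂ, 0 < z.re →
      ∫ τ in Set.Ioo (0 : ℝ) t,
        (((t - τ) ^ (-(α / 2 + 1)) : ℝ) : ℂ) *
          Complex.exp (-z / (((t - τ : ℝ)) : ℂ)) * g τ * ((τ ^ α : ℝ) : ℂ) = 0) :
    ∀ᵐ τ ∂(volume.restrict (Set.Ioo 0 t)), g τ = 0 := by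
  have hre (n : ℕ) : 0 < (1 + n * 1 : ℂ).re := by
    rw [mul_one, Complex.add_re, Complex.one_re, Complex.natCast_re]; positivity
  exact stmt13_general (by linarith) one_pos one_pos hg.aestronglyMeasurable hint fun n => by
    simpa [mul_right_comm] using hzero (1 + n * 1) (hre n)
end

section
/- Fix 0 < α ≤ 2 and t > 0, let g : (0,t) → ℂ be measurable with ∫_0^t |g(τ)|² τ^α dτ < ∞, and set F := L_t^α g. Then F satisfies the reproducing formula: for every w ∈ Δ_α, F(w) = ∫_{Δ_α} F(z) · (4 w · conj(z) / (α B(α/2, α/2))) · exp(-(α²/(4t)) (w^{2/α} + conj(z)^{2/α})) · (w^{2/α} + conj(z)^{2/α})^{-(α+1)} dμ_α^t(z), where the complex power of w^{2/α} + conj(z)^{2/α} (which has positive real part) is taken with the principal branch. -/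
open MeasureTheory Filter Set Complex

/-- The density of the measure `μ_α^t` with respect to the area measure on `Δ_α`. -/
noncomputable def muDens (α t : ℝ) (z : ℂ) : ℝ :=
  (Real.pi)⁻¹ * 2 ^ (α - 1) * betaFn (α / 2) (α / 2) * ‖z‖ ^ (4 * (1 - α) / α) *
    Real.exp (α ^ 2 / (2 * t) * (z ^ (((2 / α : ℝ)) : ℂ)).re) *
      ((z ^ (((2 / α : ℝ)) : ℂ)).re) ^ (α - 1)

/-!
The substitution `τ = t - q / (l + q / t)` with `q = α² / 4` turns `L_t^α g` into an elementary
factor times the Laplace transform, at `ζ = z ^ (2 / α)`, of a function in `L²((0, ∞), l ^ (-α)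
dl)`, and `ζ ↦ ζ ^ (α / 2)` maps the right half-plane onto `Δ_α`. So the formula is the
reproducing formula of the space of Laplace transforms of `L²(l ^ (-α) dl)` on the half-plane with
area measure weighted by `(Re ζ) ^ (α - 1)`. Plancherel on each vertical line, integrated against
`x ^ (α - 1) dx`, shows that the Laplace transform preserves inner products up to a constant.
Evaluation at `w` is the inner product with `l ^ α exp (- conj w l)`, whose own Laplace transform
at `z` is, up to a constant, `(conj w + z) ^ (-(α + 1))`; this is the reproducing kernel.
-/

open scoped FourierTransform SchwartzMap

/-! ### Plancherel and power measures -/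

section Plancherel

variable {V E : Type*} [NormedAddCommGroup V] [InnerProductSpace ℝ V] [FiniteDimensional ℝ V]
  [MeasurableSpace V] [BorelSpace V] [NormedAddCommGroup E] [InnerProductSpace ℂ E]
  {f g : V → E}

theorem continuous_fourier_of_integrable (hf : Integrable f) : Continuous (𝓕 f) :=
  VectorFourier.fourierIntegral_continuous Real.continuous_fourierChar continuous_inner hf

variable [CompleteSpace E]

-- Both sides are the Fourier transform of `f` as a tempered distribution.
theorem fourier_toLp_two_ae_eq (hf : Integrable f) (hf₂ : MemLp f 2) :
    ((𝓕 (hf₂.toLp f) : Lp (α := V) E 2 volume) : V → E) =ᵐ[volume] 𝓕 f := by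
  refine ae_eq_of_integral_contDiff_smul_eq ((Lp.memLp _).locallyIntegrable (by norm_num))
    (continuous_fourier_of_integrable hf).locallyIntegrable fun φ hφ hφ_supp => ?_
  let ψ : 𝓢(V, ℂ) := HasCompactSupport.toSchwartzMap (f := fun x => (φ x : ℂ))
    (hφ_supp.comp_left (g := fun x : ℝ => (x : ℂ)) Complex.ofReal_zero)
    (Complex.ofRealCLM.contDiff.comp hφ)
  have h_lp : ∫ x, (𝓕 ψ) x • (hf₂.toLp f) x =
      ∫ x, ψ x • (𝓕 (hf₂.toLp f) : Lp (α := V) E 2 volume) x := by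
    simpa only [TemperedDistribution.fourier_apply, Lp.toTemperedDistribution_apply] using
      congrArg (fun T => T ψ) (Lp.fourier_toTemperedDistribution_eq (hf₂.toLp f))
  have h_integral : ∫ x, (𝓕 (ψ : V → ℂ)) x • f x = ∫ x, ψ x • 𝓕 f x := by
    simpa using! VectorFourier.integral_fourierIntegral_smul_eq_flip (L := innerₗ V)
      Real.continuous_fourierChar continuous_inner ψ.integrable hf
  have h_ae : ∫ x, (𝓕 ψ) x • (hf₂.toLp f) x = ∫ x, (𝓕 (ψ : V → ℂ)) x • f x :=
    integral_congr_ae (hf₂.coeFn_toLp.mono fun x hx => by simp only [hx]; rfl)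
  have h_smul (x : V) (v : E) : φ x • v = ψ x • v := (Complex.coe_smul (φ x) v).symm
  simp only [h_smul, ← h_lp, h_ae, h_integral]

theorem memLp_two_fourier (hf : Integrable f) (hf₂ : MemLp f 2) : MemLp (𝓕 f) 2 :=
  (memLp_congr_ae (fourier_toLp_two_ae_eq hf hf₂)).1 (Lp.memLp _)

theorem integral_inner_fourier (hf : Integrable f) (hf₂ : MemLp f 2) (hg : Integrable g)
    (hg₂ : MemLp g 2) : ∫ ξ, inner ℂ (𝓕 f ξ) (𝓕 g ξ) = ∫ x, inner ℂ (f x) (g x) := by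
  have h := Lp.inner_fourier_eq (hf₂.toLp f) (hg₂.toLp g)
  rw [L2.inner_def, L2.inner_def] at h
  calc ∫ ξ, inner ℂ (𝓕 f ξ) (𝓕 g ξ)
      = ∫ ξ, inner ℂ ((𝓕 (hf₂.toLp f) : Lp (α := V) E 2 volume) ξ)
          ((𝓕 (hg₂.toLp g) : Lp (α := V) E 2 volume) ξ) := by
        refine integral_congr_ae ?_
        filter_upwards [fourier_toLp_two_ae_eq hf hf₂, fourier_toLp_two_ae_eq hg hg₂]
          with ξ hfξ hgξ
        rw [hfξ, hgξ]
    _ = ∫ x, inner ℂ ((hf₂.toLp f) x) ((hg₂.toLp g) x) := h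
    _ = ∫ x, inner ℂ (f x) (g x) := by
        refine integral_congr_ae ?_
        filter_upwards [hf₂.coeFn_toLp, hg₂.coeFn_toLp] with x hfx hgx
        rw [hfx, hgx]

end Plancherel

/-- The measure `l ^ s dl` on the half-line `(0, ∞)`. It is the weight both of the space
`L²(l ^ (-α) dl)` whose Laplace transforms are studied and, with `s = α - 1`, of the real parts in
the half-plane. -/
noncomputable def powerMeasure (s : ℝ) : Measure ℝ :=
  (volume.restrict (Ioi 0)).withDensity fun l => ENNReal.ofReal (l ^ s)

namespace powerMeasure

variable {E : Type*} [NormedAddCommGroup E] [NormedSpace ℝ E] {s : ℝ}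

instance : SFinite (powerMeasure s) := by unfold powerMeasure; infer_instance

theorem absolutelyContinuous_restrict : powerMeasure s ≪ volume.restrict (Ioi 0) :=
  withDensity_absolutelyContinuous _ _

theorem restrict_absolutelyContinuous : volume.restrict (Ioi 0) ≪ powerMeasure s := by
  refine withDensity_absolutelyContinuous' (by fun_prop) ?_
  filter_upwards [ae_restrict_mem measurableSet_Ioi] with l (hl : 0 < l)
  exact (ENNReal.ofReal_pos.2 (Real.rpow_pos_of_pos hl s)).ne'

theorem ae_pos : ∀ᵐ l ∂powerMeasure s, 0 < l :=
  absolutelyContinuous_restrict.ae_le (ae_restrict_mem measurableSet_Ioi)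

theorem integral_eq (f : ℝ → E) : ∫ l, f l ∂powerMeasure s = ∫ l in Ioi 0, l ^ s • f l := by
  rw [powerMeasure, integral_withDensity_eq_integral_toReal_smul (by fun_prop)
    (Eventually.of_forall fun _ => ENNReal.ofReal_lt_top)]
  refine setIntegral_congr_fun measurableSet_Ioi fun l (hl : 0 < l) => ?_
  simp only [ENNReal.toReal_ofReal (Real.rpow_nonneg hl.le s)]

theorem integrable_iff {f : ℝ → E} :
    Integrable f (powerMeasure s) ↔ IntegrableOn (fun l => l ^ s • f l) (Ioi 0) := by
  rw [powerMeasure, integrable_withDensity_iff_integrable_smul' (by fun_prop)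
    (Eventually.of_forall fun _ => ENNReal.ofReal_lt_top)]
  refine integrable_congr ?_
  filter_upwards [ae_restrict_mem measurableSet_Ioi] with l (hl : 0 < l)
  simp only [ENNReal.toReal_ofReal (Real.rpow_nonneg hl.le s)]

theorem integrable_exp_neg_mul (hs : -1 < s) {c : ℝ} (hc : 0 < c) :
    Integrable (fun l => Real.exp (-(c * l))) (powerMeasure s) := by
  simpa [integrable_iff] using integrableOn_rpow_mul_exp_neg_mul_rpow hs one_pos hc

theorem integral_exp_neg_mul (hs : -1 < s) {c : ℝ} (hc : 0 < c) :
    ∫ l, Real.exp (-(c * l)) ∂powerMeasure s = Real.Gamma (s + 1) * c ^ (-(s + 1)) := by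
  have h := Real.integral_rpow_mul_exp_neg_mul_Ioi (neg_lt_iff_pos_add.1 hs) hc
  rw [add_sub_cancel_right, one_div, Real.inv_rpow hc.le, ← Real.rpow_neg hc.le, mul_comm] at h
  simpa only [integral_eq, smul_eq_mul] using h

-- Analytic continuation of `integral_exp_neg_mul` from the real half-line.
theorem integral_cexp_neg_mul (hs : -1 < s) {c : ℂ} (hc : 0 < c.re) :
    ∫ l : ℝ, cexp (-(c * l)) ∂powerMeasure s =
      (Real.Gamma (s + 1) : ℂ) * c ^ ((-(s + 1) : ℝ) : ℂ) := by
  let U : Set ℂ := {z | z.re < 0}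
  let G : ℂ → ℂ := fun z => (Real.Gamma (s + 1) : ℂ) * (-z) ^ ((-(s + 1) : ℝ) : ℂ)
  have hU : IsOpen U := isOpen_lt Complex.continuous_re continuous_const
  have h_mgf : AnalyticOnNhd ℂ (ProbabilityTheory.complexMGF id (powerMeasure s)) U := by
    refine ProbabilityTheory.analyticOnNhd_complexMGF.mono fun z hz => ?_
    refine interior_maximal (fun x (hx : x < 0) => ?_) isOpen_Iio (show z.re ∈ Iio 0 from hz)
    simpa [ProbabilityTheory.integrableExpSet] using integrable_exp_neg_mul hs (neg_pos.2 hx)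
  have h_gamma : AnalyticOnNhd ℂ G U :=
    DifferentiableOn.analyticOnNhd (fun z (hz : z.re < 0) => ((DifferentiableAt.cpow
      (by fun_prop) (by fun_prop) (Or.inl (by simpa using hz))).const_mul _).differentiableWithinAt)
      hU
  have h_real (x : ℝ) (hx : x < 0) :
      ProbabilityTheory.complexMGF id (powerMeasure s) x = G x := by
    have h := integral_exp_neg_mul hs (neg_pos.2 hx)
    rw [ProbabilityTheory.complexMGF]
    simp only [neg_mul, neg_neg, G] at h ⊢
    rw [← Complex.ofReal_neg x, ← Complex.ofReal_cpow (neg_pos.2 hx).le, ← Complex.ofReal_mul, ← h,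
      ← integral_complex_ofReal]
    simp
  have h_tendsto : Tendsto (fun x : ℝ => (x : ℂ)) (nhdsWithin (-1) {-1}ᶜ)
      (nhdsWithin ((-1 : ℝ) : ℂ) {((-1 : ℝ) : ℂ)}ᶜ) :=
    Complex.continuous_ofReal.continuousWithinAt.tendsto_nhdsWithin fun x hx => by
      simpa only [mem_compl_iff, mem_singleton_iff, Complex.ofReal_inj] using hx
  have h_eqOn := h_mgf.eqOn_of_preconnected_of_frequently_eq h_gamma
    (convex_halfSpace_re_lt 0).isPreconnected (by simp [U] : ((-1 : ℝ) : ℂ) ∈ U)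
    (h_tendsto.frequently (Eventually.frequently (by
      filter_upwards [mem_nhdsWithin_of_mem_nhds (Iio_mem_nhds (by norm_num : (-1 : ℝ) < 0))]
        with x hx using h_real x hx)))
  simpa [ProbabilityTheory.complexMGF, G] using h_eqOn (show -c ∈ U by simpa [U] using hc)

end powerMeasure

/-! ### Laplace transforms on the half-plane -/

section LaplaceTransform

open scoped ComplexConjugate

/-- The Laplace transform `ζ ↦ ∫₀^∞ e^{-ζl} h(l) dl` of a function on the half-line; the values of
`h` on `(-∞, 0]` are ignored. -/
noncomputable def laplaceTransform (h : ℝ → ℂ) (ζ : ℂ) : ℂ :=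
  ∫ l : ℝ in Ioi 0, cexp (-(ζ * l)) * h l

/-- The representer, in `L²(l^{-α} dl)`, of the evaluation at `w` of Laplace transforms. -/
noncomputable def laplaceKernel (α : ℝ) (w : ℂ) (l : ℝ) : ℂ :=
  (l ^ α : ℝ) * cexp (-(conj w * l))

/-- The function `l ↦ e^{-xl} h(l)` extended by zero to `(-∞, 0]`. Its Fourier transform is the
Laplace transform of `h` on the vertical line of abscissa `x`. -/
noncomputable def expDamp (x : ℝ) (h : ℝ → ℂ) : ℝ → ℂ :=
  (Ioi 0).indicator fun l => cexp (-(x * l)) * h l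

variable {E : Type*} [NormedAddCommGroup E] [NormedSpace ℝ E] {α x : ℝ} {w : ℂ} {h k : ℝ → ℂ}

theorem laplaceTransform_eq_fourier (h : ℝ → ℂ) (x y : ℝ) :
    laplaceTransform h (x + (2 * Real.pi * y : ℝ) * I) = 𝓕 (expDamp x h) y := by
  have h_indicator (l : ℝ) : cexp ((-2 * Real.pi * l * y : ℝ) * I) • expDamp x h l =
      (Ioi 0).indicator (fun m : ℝ => cexp (-((x + (2 * Real.pi * y : ℝ) * I) * m)) * h m) l := by
    simp only [expDamp, indicator_apply, smul_eq_mul, mul_ite, mul_zero, ← mul_assoc,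
      ← Complex.exp_add]
    congr 3
    push_cast
    ring
  simp only [Real.fourier_real_eq_integral_exp_smul, h_indicator,
    integral_indicator measurableSet_Ioi, laplaceTransform]

theorem memLp_laplaceKernel (hα : -1 < α) (hw : 0 < w.re) :
    MemLp (laplaceKernel α w) 2 (powerMeasure (-α)) := by
  rw [memLp_two_iff_integrable_sq_norm (by unfold laplaceKernel; fun_prop),
    powerMeasure.integrable_iff]
  refine (powerMeasure.integrable_iff.1 (powerMeasure.integrable_exp_neg_mul hα
    (mul_pos two_pos hw))).congr_fun (fun l (hl : 0 < l) => ?_) measurableSet_Ioi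
  have h_rpow : l ^ (-α) * (l ^ α) ^ 2 = l ^ α := by
    rw [pow_two, ← mul_assoc, ← Real.rpow_add hl, neg_add_cancel, Real.rpow_zero, one_mul]
  have h_norm : ‖laplaceKernel α w l‖ = l ^ α * Real.exp (-(w.re * l)) := by
    simp [laplaceKernel, Complex.norm_exp, abs_of_nonneg (Real.rpow_nonneg hl.le α)]
  simp only [smul_eq_mul]
  rw [h_norm, mul_pow, ← mul_assoc, h_rpow, ← Real.exp_nat_mul]
  congr 2
  push_cast
  ring

theorem rpow_smul_mul_conj_laplaceKernel {l : ℝ} (hl : 0 < l) (a w : ℂ) :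
    l ^ (-α) • (a * conj (laplaceKernel α w l)) = cexp (-(w * l)) * a := by
  have h_rpow : ((l ^ (-α) : ℝ) : ℂ) * (l ^ α : ℝ) = 1 := by
    rw [← Complex.ofReal_mul, ← Real.rpow_add hl, neg_add_cancel, Real.rpow_zero,
      Complex.ofReal_one]
  simp only [laplaceKernel, map_mul, Complex.conj_ofReal, ← Complex.exp_conj, map_neg,
    Complex.conj_conj, Complex.real_smul]
  linear_combination a * cexp (-(w * l)) * h_rpow

theorem laplaceTransform_eq_integral_mul_conj_laplaceKernel (α : ℝ) (h : ℝ → ℂ) (w : ℂ) :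
    laplaceTransform h w = ∫ l, h l * conj (laplaceKernel α w l) ∂powerMeasure (-α) := by
  rw [powerMeasure.integral_eq]
  exact setIntegral_congr_fun measurableSet_Ioi fun l (hl : 0 < l) =>
    (rpow_smul_mul_conj_laplaceKernel hl _ w).symm

theorem conj_laplaceTransform_laplaceKernel (hα : -1 < α) {z : ℂ} (h : 0 < (w + conj z).re) :
    conj (laplaceTransform (laplaceKernel α w) z) =
      (Real.Gamma (α + 1) : ℂ) * (w + conj z) ^ ((-(α + 1) : ℝ) : ℂ) := by
  rw [← powerMeasure.integral_cexp_neg_mul hα h, powerMeasure.integral_eq, laplaceTransform,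
    ← integral_conj]
  refine integral_congr_ae (Eventually.of_forall fun l => ?_)
  simp only [laplaceKernel, map_mul, Complex.conj_ofReal, ← Complex.exp_conj, map_neg,
    Complex.conj_conj, Complex.real_smul]
  rw [mul_left_comm, ← Complex.exp_add]
  congr 2
  ring

theorem integrable_expDamp (hα : -1 < α) (hx : 0 < x) (hh : MemLp h 2 (powerMeasure (-α))) :
    Integrable (expDamp x h) := by
  have h_ker := memLp_laplaceKernel hα (w := x) (by simpa using hx)
  refine (integrable_indicator_iff measurableSet_Ioi).2
    ((powerMeasure.integrable_iff.1 (hh.integrable_mul h_ker.star)).congr_fun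
      (fun l hl => rpow_smul_mul_conj_laplaceKernel hl _ _) measurableSet_Ioi)

theorem memLp_two_expDamp (hα : 0 ≤ α) (hx : 0 < x) (hh : MemLp h 2 (powerMeasure (-α))) :
    MemLp (expDamp x h) 2 := by
  have h_meas : AEStronglyMeasurable h (volume.restrict (Ioi 0)) :=
    hh.1.mono_ac powerMeasure.restrict_absolutelyContinuous
  have h_sq := powerMeasure.integrable_iff.1 ((memLp_two_iff_integrable_sq_norm hh.1).1 hh)
  rw [expDamp, memLp_indicator_iff_restrict measurableSet_Ioi,
    memLp_two_iff_integrable_sq_norm (by fun_prop)]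
  refine (h_sq.const_mul ((α / (2 * x)) ^ α)).mono' (by fun_prop) ?_
  filter_upwards [ae_restrict_mem measurableSet_Ioi] with l (hl : 0 < l)
  have h_rpow : l ^ α ≤ (α / (2 * x)) ^ α * Real.exp (2 * x * l) := by
    simpa only [abs_of_pos hl, abs_of_pos (mul_pos two_pos hx)] using
      ProbabilityTheory.rpow_abs_le_mul_exp_abs l hα (mul_pos two_pos hx).ne'
  have h_exp : Real.exp (-(x * l)) ^ 2 ≤ (α / (2 * x)) ^ α * l ^ (-α) := by
    rw [← Real.exp_nat_mul, Real.rpow_neg hl.le, ← div_eq_mul_inv,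
      le_div_iff₀ (Real.rpow_pos_of_pos hl α)]
    calc Real.exp ((2 : ℕ) * -(x * l)) * l ^ α
        ≤ Real.exp ((2 : ℕ) * -(x * l)) * ((α / (2 * x)) ^ α * Real.exp (2 * x * l)) := by gcongr
      _ = (α / (2 * x)) ^ α := by
        rw [mul_left_comm, ← Real.exp_add]
        simp [mul_assoc]
  calc ‖‖cexp (-(x * l)) * h l‖ ^ 2‖ = Real.exp (-(x * l)) ^ 2 * ‖h l‖ ^ 2 := by
        simp [Complex.norm_exp, mul_pow]
    _ ≤ (α / (2 * x)) ^ α * l ^ (-α) * ‖h l‖ ^ 2 := by gcongr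
    _ = (α / (2 * x)) ^ α * (l ^ (-α) • ‖h l‖ ^ 2) := by rw [smul_eq_mul, mul_assoc]

theorem integral_laplaceTransform_mul_conj_vertical (hα : 0 ≤ α) (hx : 0 < x)
    (hh : MemLp h 2 (powerMeasure (-α))) (hk : MemLp k 2 (powerMeasure (-α))) :
    ∫ y : ℝ, laplaceTransform h (x + y * I) * conj (laplaceTransform k (x + y * I)) =
      (2 * Real.pi) • ∫ l in Ioi 0, Real.exp (-(2 * x * l)) • (h l * conj (k l)) := by
  have h_parseval := integral_inner_fourier
    (integrable_expDamp (by linarith) hx hk) (memLp_two_expDamp hα hx hk)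
    (integrable_expDamp (by linarith) hx hh) (memLp_two_expDamp hα hx hh)
  have h_inner (l : ℝ) : expDamp x h l * conj (expDamp x k l) =
      (Ioi 0).indicator (fun l => Real.exp (-(2 * x * l)) • (h l * conj (k l))) l := by
    simp only [expDamp, indicator_apply]
    split_ifs
    · simp only [map_mul, ← Complex.exp_conj, map_neg, Complex.conj_ofReal, Complex.real_smul,
        Complex.ofReal_exp]
      rw [mul_mul_mul_comm, ← Complex.exp_add]
      congr 2
      push_cast
      ring
    · simp
  simp only [← laplaceTransform_eq_fourier, RCLike.inner_apply, h_inner,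
    integral_indicator measurableSet_Ioi] at h_parseval
  rw [← h_parseval, Measure.integral_comp_mul_left (fun y : ℝ =>
      laplaceTransform h (x + y * I) * conj (laplaceTransform k (x + y * I))),
    abs_of_pos (by positivity), smul_inv_smul₀ (by positivity)]

theorem integrable_norm_laplaceTransform_vertical_sq (hα : 0 ≤ α) (hx : 0 < x)
    (hh : MemLp h 2 (powerMeasure (-α))) :
    Integrable fun y : ℝ => ‖laplaceTransform h (x + y * I)‖ ^ 2 := by
  have h_fourier := memLp_two_fourier (integrable_expDamp (by linarith) hx hh)
    (memLp_two_expDamp hα hx hh)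
  have h_sq := (memLp_two_iff_integrable_sq_norm h_fourier.1).1 h_fourier
  simp only [← laplaceTransform_eq_fourier] at h_sq
  exact (integrable_comp_mul_left_iff (fun y : ℝ => ‖laplaceTransform h (x + y * I)‖ ^ 2)
    (by positivity)).1 h_sq

theorem integral_norm_laplaceTransform_vertical_sq (hα : 0 ≤ α) (hx : 0 < x)
    (hh : MemLp h 2 (powerMeasure (-α))) :
    ∫ y : ℝ, ‖laplaceTransform h (x + y * I)‖ ^ 2 =
      (2 * Real.pi) • ∫ l in Ioi 0, Real.exp (-(2 * x * l)) • ‖h l‖ ^ 2 := by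
  have h_eq := integral_laplaceTransform_mul_conj_vertical hα hx hh hh
  simp only [Complex.mul_conj, Complex.normSq_eq_norm_sq, Complex.real_smul, ← Complex.ofReal_mul,
    integral_complex_ofReal] at h_eq
  exact Complex.ofReal_injective h_eq

theorem integral_exp_neg_two_mul_mul (hα : 0 < α) {l : ℝ} (hl : 0 < l) :
    ∫ x, Real.exp (-(2 * x * l)) ∂powerMeasure (α - 1) =
      2 ^ (-α) * Real.Gamma α * l ^ (-α) := by
  have h_gamma := powerMeasure.integral_exp_neg_mul (s := α - 1) (by linarith)
    (mul_pos two_pos hl)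
  rw [sub_add_cancel, Real.mul_rpow two_pos.le hl.le] at h_gamma
  simp only [mul_right_comm _ _ l, h_gamma]
  ring

theorem integrable_exp_smul_prod (hα : 0 < α) {f : ℝ → E}
    (hf : Integrable f (powerMeasure (-α))) :
    Integrable (fun p : ℝ × ℝ => Real.exp (-(2 * p.1 * p.2)) • f p.2)
      ((powerMeasure (α - 1)).prod (volume.restrict (Ioi 0))) := by
  have h_meas : AEStronglyMeasurable (fun p : ℝ × ℝ => Real.exp (-(2 * p.1 * p.2)) • f p.2)
      ((powerMeasure (α - 1)).prod (volume.restrict (Ioi 0))) :=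
    (Continuous.aestronglyMeasurable (by fun_prop)).smul
      (hf.1.mono_ac powerMeasure.restrict_absolutelyContinuous).comp_snd
  refine (integrable_prod_iff' h_meas).2 ⟨?_, ?_⟩
  · filter_upwards [ae_restrict_mem measurableSet_Ioi] with l (hl : 0 < l)
    have h_exp := powerMeasure.integrable_exp_neg_mul (s := α - 1) (by linarith)
      (mul_pos two_pos hl)
    simpa only [mul_right_comm _ _ l] using h_exp.smul_const (f l)
  · refine ((powerMeasure.integrable_iff.1 hf.norm).const_mul (2 ^ (-α) * Real.Gamma α)).congr ?_
    filter_upwards [ae_restrict_mem measurableSet_Ioi] with l (hl : 0 < l)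
    simp only [norm_smul, Real.norm_eq_abs, Real.abs_exp, integral_mul_const,
      integral_exp_neg_two_mul_mul hα hl, smul_eq_mul]
    ring

theorem integral_integral_exp_smul [CompleteSpace E] (hα : 0 < α) {f : ℝ → E}
    (hf : Integrable f (powerMeasure (-α))) :
    ∫ x, (∫ l in Ioi 0, Real.exp (-(2 * x * l)) • f l) ∂powerMeasure (α - 1) =
      (2 ^ (-α) * Real.Gamma α) • ∫ l, f l ∂powerMeasure (-α) := by
  rw [integral_integral_swap (integrable_exp_smul_prod hα hf), powerMeasure.integral_eq,
    ← integral_smul]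
  refine setIntegral_congr_fun measurableSet_Ioi fun l (hl : 0 < l) => ?_
  simp only [integral_smul_const, integral_exp_neg_two_mul_mul hα hl, mul_smul]

theorem memLp_two_laplaceTransform (hα : 0 < α) (hh : MemLp h 2 (powerMeasure (-α))) :
    MemLp (fun p : ℝ × ℝ => laplaceTransform h (p.1 + p.2 * I)) 2
      ((powerMeasure (α - 1)).prod volume) := by
  have h_meas : AEStronglyMeasurable (fun p : ℝ × ℝ => laplaceTransform h (p.1 + p.2 * I))
      ((powerMeasure (α - 1)).prod volume) :=
    AEStronglyMeasurable.integral_prod_right' (AEStronglyMeasurable.mul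
      (f := fun q : (ℝ × ℝ) × ℝ => cexp (-((q.1.1 + q.1.2 * I) * q.2))) (by fun_prop)
      (hh.1.mono_ac powerMeasure.restrict_absolutelyContinuous).comp_snd)
  rw [memLp_two_iff_integrable_sq_norm h_meas, integrable_prod_iff (by fun_prop)]
  constructor
  · filter_upwards [powerMeasure.ae_pos] with x hx
    exact integrable_norm_laplaceTransform_vertical_sq hα.le hx hh
  · have h_sq := (memLp_two_iff_integrable_sq_norm hh.1).1 hh
    refine ((integrable_exp_smul_prod hα h_sq).integral_prod_left.smul (2 * Real.pi)).congr ?_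
    filter_upwards [powerMeasure.ae_pos] with x hx
    simp only [norm_pow, norm_norm, integral_norm_laplaceTransform_vertical_sq hα.le hx hh,
      Pi.smul_apply]

theorem integral_laplaceTransform_mul_conj (hα : 0 < α) (hh : MemLp h 2 (powerMeasure (-α)))
    (hk : MemLp k 2 (powerMeasure (-α))) :
    ∫ p : ℝ × ℝ, laplaceTransform h (p.1 + p.2 * I) * conj (laplaceTransform k (p.1 + p.2 * I))
        ∂(powerMeasure (α - 1)).prod volume =
      (2 * Real.pi * (2 ^ (-α) * Real.Gamma α)) •
        ∫ l, h l * conj (k l) ∂powerMeasure (-α) := by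
  have h_prod : Integrable (fun l => h l * conj (k l)) (powerMeasure (-α)) :=
    hh.integrable_mul hk.star
  have h_integrable : Integrable (fun p : ℝ × ℝ =>
      laplaceTransform h (p.1 + p.2 * I) * conj (laplaceTransform k (p.1 + p.2 * I)))
      ((powerMeasure (α - 1)).prod volume) :=
    (memLp_two_laplaceTransform hα hh).integrable_mul (memLp_two_laplaceTransform hα hk).star
  rw [integral_prod _ h_integrable, mul_smul,
    ← integral_integral_exp_smul hα h_prod, ← integral_smul]
  refine integral_congr_ae ?_
  filter_upwards [powerMeasure.ae_pos] with x hx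
  exact integral_laplaceTransform_mul_conj_vertical hα.le hx hh hk

theorem setIntegral_re_pos_rpow_smul (s : ℝ) (f : ℂ → E) :
    ∫ z in {z : ℂ | 0 < z.re}, z.re ^ s • f z =
      ∫ p : ℝ × ℝ, f (p.1 + p.2 * I) ∂(powerMeasure s).prod volume := by
  have h_measure : (powerMeasure s).prod volume =
      ((volume : Measure (ℝ × ℝ)).restrict (Ioi 0 ×ˢ univ)).withDensity
        fun p => ENNReal.ofReal (p.1 ^ s) := by
    rw [powerMeasure, prod_withDensity_left (by fun_prop), Measure.volume_eq_prod,
      ← Measure.prod_restrict, Measure.restrict_univ]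
  have h_preimage : {z : ℂ | 0 < z.re} = measurableEquivRealProd ⁻¹' (Ioi 0 ×ˢ univ) := by
    ext z
    simp
  rw [h_measure, integral_withDensity_eq_integral_toReal_smul (by fun_prop)
      (Eventually.of_forall fun _ => ENNReal.ofReal_lt_top), h_preimage,
    ← volume_preserving_equiv_real_prod.setIntegral_preimage_emb
      measurableEquivRealProd.measurableEmbedding]
  refine setIntegral_congr_fun (measurableEquivRealProd.measurable
    (measurableSet_Ioi.prod MeasurableSet.univ)) fun z hz => ?_
  rw [← h_preimage] at hz
  simp only [measurableEquivRealProd_apply, Complex.re_add_im,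
    ENNReal.toReal_ofReal (Real.rpow_nonneg (le_of_lt hz) s)]

theorem setIntegral_re_pos_laplaceTransform_mul_cpow (hα : 0 < α)
    (hh : MemLp h 2 (powerMeasure (-α))) (hw : 0 < w.re) :
    ∫ z in {z : ℂ | 0 < z.re}, z.re ^ (α - 1) •
        (laplaceTransform h z * (w + conj z) ^ ((-(α + 1) : ℝ) : ℂ)) =
      (Real.pi * 2 ^ (1 - α) / α : ℝ) * laplaceTransform h w := by
  have h_conj {z : ℂ} (hz : 0 < z.re) : conj (laplaceTransform (laplaceKernel α w) z) =
      (Real.Gamma (α + 1) : ℂ) * (w + conj z) ^ ((-(α + 1) : ℝ) : ℂ) :=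
    conj_laplaceTransform_laplaceKernel (by linarith) (by simpa using add_pos hw hz)
  have h_pairing := integral_laplaceTransform_mul_conj hα hh (memLp_laplaceKernel (by linarith) hw)
  rw [← laplaceTransform_eq_integral_mul_conj_laplaceKernel, ← setIntegral_re_pos_rpow_smul
    (α - 1) fun z => laplaceTransform h z * conj (laplaceTransform (laplaceKernel α w) z)]
    at h_pairing
  have h_gamma : Real.Gamma (α + 1) ≠ 0 := (Real.Gamma_pos_of_pos (by linarith)).ne'
  refine smul_right_injective ℂ h_gamma ?_
  calc Real.Gamma (α + 1) • ∫ z in {z : ℂ | 0 < z.re}, z.re ^ (α - 1) •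
        (laplaceTransform h z * (w + conj z) ^ ((-(α + 1) : ℝ) : ℂ))
      = ∫ z in {z : ℂ | 0 < z.re}, z.re ^ (α - 1) •
          (laplaceTransform h z * conj (laplaceTransform (laplaceKernel α w) z)) := by
        rw [← integral_smul]
        refine setIntegral_congr_fun (measurableSet_lt measurable_const measurable_re)
          fun z (hz : 0 < z.re) => ?_
        simp only [h_conj hz, Complex.real_smul]
        ring
    _ = (2 * Real.pi * (2 ^ (-α) * Real.Gamma α)) • laplaceTransform h w := h_pairing
    _ = Real.Gamma (α + 1) • ((Real.pi * 2 ^ (1 - α) / α : ℝ) * laplaceTransform h w) := by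
        rw [Real.Gamma_add_one hα.ne', sub_eq_add_neg, Real.rpow_add two_pos, Real.rpow_one,
          ← Complex.real_smul, smul_smul]
        congr 1
        field_simp

end LaplaceTransform

/-! ### Powers between sectors -/

section Sector

variable {a β : ℝ} {z : ℂ}

theorem sector_two : sector 2 = {z : ℂ | 0 < z.re} := by
  ext z
  have h_angle : Real.pi * 2 / 4 = Real.pi / 2 := by ring
  rw [sector, mem_ofPred_eq, h_angle, abs_arg_lt_pi_div_two_iff, mem_ofPred_eq]
  constructor
  · rintro ⟨h_ne, h_re | rfl⟩
    exacts [h_re, (h_ne rfl).elim]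
  · intro h_re
    exact ⟨fun h => by simp [h] at h_re, Or.inl h_re⟩

theorem measurableSet_sector (β : ℝ) : MeasurableSet (sector β) :=
  (measurableSet_singleton 0).compl.inter
    (measurableSet_lt (continuous_abs.measurable.comp measurable_arg) measurable_const)

theorem sector_subset_slitPlane (hβ : β ≤ 4) : sector β ⊆ slitPlane := fun z hz => by
  refine mem_slitPlane_iff_arg.2 ⟨fun h_arg => ?_, hz.1⟩
  have h_lt := hz.2
  rw [h_arg, abs_of_pos Real.pi_pos] at h_lt
  nlinarith [Real.pi_pos]

theorem abs_log_mul_im_lt (ha : 0 < a) (hz : z ∈ sector β) :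
    |(Complex.log z * a).im| < Real.pi * (a * β) / 4 := by
  rw [Complex.im_mul_ofReal, Complex.log_im, abs_mul, abs_of_pos ha]
  linarith [mul_lt_mul_of_pos_right hz.2 ha]

theorem abs_log_mul_im_lt_pi (ha : 0 < a) (haβ : a * β ≤ 4) (hz : z ∈ sector β) :
    |(Complex.log z * a).im| < Real.pi :=
  (abs_log_mul_im_lt ha hz).trans_le (by nlinarith [Real.pi_pos])

theorem cpow_mem_sector (ha : 0 < a) (haβ : a * β ≤ 4) (hz : z ∈ sector β) :
    z ^ (a : ℂ) ∈ sector (a * β) := by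
  have h_im := abs_lt.1 (abs_log_mul_im_lt_pi ha haβ hz)
  rw [Complex.cpow_def_of_ne_zero hz.1]
  refine ⟨Complex.exp_ne_zero _, ?_⟩
  rw [← Complex.log_im, Complex.log_exp h_im.1 h_im.2.le]
  exact abs_log_mul_im_lt ha hz

theorem cpow_cpow_inv_of_mem_sector (ha : 0 < a) (haβ : a * β ≤ 4) (hz : z ∈ sector β) :
    (z ^ (a : ℂ)) ^ ((a⁻¹ : ℝ) : ℂ) = z := by
  have h_im := abs_lt.1 (abs_log_mul_im_lt_pi ha haβ hz)
  rw [← Complex.cpow_mul _ h_im.1 h_im.2.le, ← Complex.ofReal_mul, mul_inv_cancel₀ ha.ne',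
    Complex.ofReal_one, Complex.cpow_one]

theorem bijOn_cpow_sector (ha : 0 < a) (hβ : β ≤ 4) (haβ : a * β ≤ 4) :
    BijOn (fun z : ℂ => z ^ (a : ℂ)) (sector β) (sector (a * β)) := by
  have h_inv : a⁻¹ * (a * β) = β := inv_mul_cancel_left₀ ha.ne' β
  refine InvOn.bijOn (f' := fun z => z ^ ((a⁻¹ : ℝ) : ℂ))
    ⟨fun z hz => cpow_cpow_inv_of_mem_sector ha haβ hz, fun z hz => ?_⟩
    (fun z hz => cpow_mem_sector ha haβ hz) fun z hz => ?_
  · simpa only [inv_inv] using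
      cpow_cpow_inv_of_mem_sector (inv_pos.2 ha) (h_inv.trans_le hβ) hz
  · simpa only [h_inv] using cpow_mem_sector (inv_pos.2 ha) (h_inv.trans_le hβ) hz

variable {E : Type*} [NormedAddCommGroup E] [NormedSpace ℝ E]

theorem abs_det_smul_one (c : ℂ) : |(c • (1 : ℂ →L[ℝ] ℂ)).det| = ‖c‖ ^ 2 := by
  have h_norm : (c • (1 : ℂ →L[ℝ] ℂ)).det = Algebra.norm ℝ c := (Algebra.norm_apply ℝ c).symm
  rw [h_norm, Algebra.norm_complex_apply, Complex.normSq_eq_norm_sq, abs_of_nonneg (sq_nonneg _)]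

theorem setIntegral_image_eq_integral_norm_deriv_sq_smul {s : Set ℂ} (hs : MeasurableSet s)
    {f f' : ℂ → ℂ} (hf' : ∀ z ∈ s, HasDerivAt f (f' z) z) (hf : InjOn f s) (g : ℂ → E) :
    ∫ z in f '' s, g z = ∫ z in s, ‖f' z‖ ^ 2 • g (f z) := by
  rw [integral_image_eq_integral_abs_det_fderiv_smul volume hs
    (fun z hz => (hf' z hz).complexToReal_fderiv.hasFDerivWithinAt) hf]
  simp only [abs_det_smul_one]

theorem setIntegral_sector_mul (ha : 0 < a) (hβ : β ≤ 4) (haβ : a * β ≤ 4) (g : ℂ → E) :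
    ∫ z in sector (a * β), g z =
      ∫ z in sector β, (a ^ 2 * ‖z‖ ^ (2 * a - 2)) • g (z ^ (a : ℂ)) := by
  have h_bij := bijOn_cpow_sector ha hβ haβ
  have h_deriv (z : ℂ) (hz : z ∈ sector β) :
      HasDerivAt (fun z : ℂ => z ^ (a : ℂ)) (a * z ^ ((a : ℂ) - 1)) z := by
    simpa using (hasDerivAt_id z).cpow_const (c := a) (sector_subset_slitPlane hβ hz)
  rw [← h_bij.image_eq, setIntegral_image_eq_integral_norm_deriv_sq_smul (measurableSet_sector β)
    h_deriv h_bij.injOn]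
  refine setIntegral_congr_fun (measurableSet_sector β) fun z _ => ?_
  have h_jacobian : ‖(a : ℂ) * z ^ ((a : ℂ) - 1)‖ ^ 2 = a ^ 2 * ‖z‖ ^ (2 * a - 2) := by
    rw [norm_mul, mul_pow, Complex.norm_real, Real.norm_of_nonneg ha.le,
      ← Complex.ofReal_one, ← Complex.ofReal_sub, Complex.norm_cpow_real, ← Real.rpow_mul_natCast
      (norm_nonneg z)]
    congr 2
    push_cast
    ring
  simp only [h_jacobian]

end Sector

/-! ### The change of time -/

section TimeChange

/-- The increasing bijection `(0, ∞) → (0, t)` characterised by `q / (t - τ) = l + q / t`. For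
`q = α ^ 2 / 4` it turns the kernel `exp (-q ζ / (t - τ))` of `Lc` into a multiple of the Laplace
kernel `exp (-ζ l)`. -/
noncomputable def laplaceTime (q t l : ℝ) : ℝ := t - q / (l + q / t)

variable {q t : ℝ}

theorem sub_laplaceTime (q t l : ℝ) : t - laplaceTime q t l = q / (l + q / t) :=
  sub_sub_cancel _ _

theorem div_sub_laplaceTime (hq : q ≠ 0) (t l : ℝ) : q / (t - laplaceTime q t l) = l + q / t := by
  rw [sub_laplaceTime, div_div_cancel₀ hq]

theorem laplaceTime_mem_Ioo (hq : 0 < q) (ht : 0 < t) {l : ℝ} (hl : 0 < l) :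
    laplaceTime q t l ∈ Ioo 0 t := by
  refine ⟨sub_pos.2 ((div_lt_comm₀ (by positivity) ht).2 ?_), sub_lt_self t (by positivity)⟩
  exact lt_add_of_pos_left _ hl

theorem bijOn_laplaceTime (hq : 0 < q) (ht : 0 < t) :
    BijOn (laplaceTime q t) (Ioi 0) (Ioo 0 t) := by
  refine InvOn.bijOn (f' := fun τ => q / (t - τ) - q / t) ⟨fun l _ => ?_, fun τ _ => ?_⟩
    (fun l hl => laplaceTime_mem_Ioo hq ht hl) fun τ hτ => ?_
  · simp only [div_sub_laplaceTime hq.ne', add_sub_cancel_right]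
  · simp only [laplaceTime, sub_add_cancel, div_div_cancel₀ hq.ne', sub_sub_cancel]
  · exact sub_pos.2 (div_lt_div_of_pos_left hq (sub_pos.2 hτ.2) (sub_lt_self t hτ.1))

theorem hasDerivAt_laplaceTime (hq : 0 < q) (ht : 0 < t) {l : ℝ} (hl : 0 < l) :
    HasDerivAt (laplaceTime q t) ((t - laplaceTime q t l) ^ 2 / q) l := by
  have h_pos : 0 < l + q / t := by positivity
  refine ((((hasDerivAt_id l).add_const (q / t)).fun_inv h_pos.ne').const_mul q).const_sub t
    |>.congr_deriv ?_
  rw [sub_laplaceTime, id]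
  field_simp

variable {E : Type*} [NormedAddCommGroup E] [NormedSpace ℝ E]

theorem setIntegral_Ioo_eq_laplaceTime (hq : 0 < q) (ht : 0 < t) (f : ℝ → E) :
    ∫ τ in Ioo 0 t, f τ =
      ∫ l in Ioi 0, ((t - laplaceTime q t l) ^ 2 / q) • f (laplaceTime q t l) := by
  have h_bij := bijOn_laplaceTime hq ht
  rw [← h_bij.image_eq, integral_image_eq_integral_abs_deriv_smul measurableSet_Ioi
    (fun l hl => (hasDerivAt_laplaceTime hq ht hl).hasDerivWithinAt) h_bij.injOn]
  simp only [abs_of_nonneg (div_nonneg (sq_nonneg _) hq.le)]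

theorem integrableOn_Ioo_iff_laplaceTime (hq : 0 < q) (ht : 0 < t) (f : ℝ → E) :
    IntegrableOn f (Ioo 0 t) ↔
      IntegrableOn (fun l => ((t - laplaceTime q t l) ^ 2 / q) • f (laplaceTime q t l))
        (Ioi 0) := by
  have h_bij := bijOn_laplaceTime hq ht
  rw [← h_bij.image_eq, integrableOn_image_iff_integrableOn_abs_deriv_smul measurableSet_Ioi
    (fun l hl => (hasDerivAt_laplaceTime hq ht hl).hasDerivWithinAt) h_bij.injOn]
  simp only [abs_of_nonneg (div_nonneg (sq_nonneg _) hq.le)]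

end TimeChange

section LaplaceDensity

variable {α t : ℝ} {g : ℝ → ℂ}

/-- The factor `C (t - τ) ^ (1 - α / 2) τ ^ α` relating `g` to `laplaceDensity α t g`, as a function
of the time `τ`. -/
noncomputable def laplaceWeight (α t τ : ℝ) : ℝ :=
  t ^ (-α) * (α ^ α / (2 ^ α * Real.Gamma (α / 2))) / (α ^ 2 / 4) * (t - τ) ^ (1 - α / 2) * τ ^ α

/-- The function on the half-line whose Laplace transform at `z ^ (2 / α)` is `Lc α t g z`, up to an
elementary factor. -/
noncomputable def laplaceDensity (α t : ℝ) (g : ℝ → ℂ) (l : ℝ) : ℂ :=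
  laplaceWeight α t (laplaceTime (α ^ 2 / 4) t l) * g (laplaceTime (α ^ 2 / 4) t l)

theorem measurable_laplaceDensity (hg : Measurable g) : Measurable (laplaceDensity α t g) := by
  unfold laplaceDensity laplaceWeight laplaceTime
  fun_prop

theorem laplaceWeight_sq_mul_rpow (hα : 0 < α) {τ : ℝ} (hτ : τ ∈ Ioo 0 t) :
    (α ^ 2 / 4 / (t - τ) - α ^ 2 / 4 / t) ^ (-α) * laplaceWeight α t τ ^ 2 =
      t ^ (-α) * (α ^ α / (2 ^ α * Real.Gamma (α / 2))) ^ 2 * (α ^ 2 / 4) ^ (-α - 1) *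
        ((t - τ) ^ 2 / (α ^ 2 / 4) * τ ^ α) := by
  have hτ₀ : 0 < τ := hτ.1
  have hτt : 0 < t - τ := sub_pos.2 hτ.2
  have ht : 0 < t := hτ₀.trans hτ.2
  have hq : 0 < α ^ 2 / 4 := by positivity
  rw [laplaceWeight]
  generalize α ^ 2 / 4 = q at *
  generalize α ^ α / (2 ^ α * Real.Gamma (α / 2)) = c
  have h_sub : q / (t - τ) - q / t = q * τ / (t * (t - τ)) := by
    field_simp
    ring
  have h_pow : ((t - τ) ^ (1 - α / 2)) ^ 2 = (t - τ) ^ 2 / (t - τ) ^ α := by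
    rw [← Real.rpow_mul_natCast hτt.le, ← Real.rpow_natCast (t - τ) 2, ← Real.rpow_sub hτt]
    congr 1
    push_cast
    ring
  simp only [mul_pow, h_pow, h_sub, Real.div_rpow (mul_pos hq hτ₀).le (mul_pos ht hτt).le,
    Real.mul_rpow hq.le hτ₀.le, Real.mul_rpow ht.le hτt.le, Real.rpow_sub_one hq.ne', div_pow]
  simp only [Real.rpow_neg hq.le, Real.rpow_neg hτ₀.le, Real.rpow_neg ht.le, Real.rpow_neg hτt.le]
  field_simp

theorem memLp_laplaceDensity (hα : 0 < α) (ht : 0 < t) (hg : Measurable g)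
    (hint : IntegrableOn (fun τ => ‖g τ‖ ^ 2 * τ ^ α) (Ioo 0 t)) :
    MemLp (laplaceDensity α t g) 2 (powerMeasure (-α)) := by
  have hq : 0 < α ^ 2 / 4 := by positivity
  rw [memLp_two_iff_integrable_sq_norm (measurable_laplaceDensity hg).aestronglyMeasurable,
    powerMeasure.integrable_iff]
  rw [integrableOn_Ioo_iff_laplaceTime hq ht] at hint
  refine IntegrableOn.congr_fun (hint.const_mul (t ^ (-α) *
    (α ^ α / (2 ^ α * Real.Gamma (α / 2))) ^ 2 * (α ^ 2 / 4) ^ (-α - 1))) (fun l hl => ?_)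
    measurableSet_Ioi
  have h_weight := laplaceWeight_sq_mul_rpow hα (laplaceTime_mem_Ioo hq ht hl)
  rw [div_sub_laplaceTime hq.ne', add_sub_cancel_right] at h_weight
  simp only [laplaceDensity, norm_mul, mul_pow, Complex.norm_real, Real.norm_eq_abs, sq_abs,
    smul_eq_mul]
  linear_combination -‖g (laplaceTime (α ^ 2 / 4) t l)‖ ^ 2 * h_weight

theorem smul_Kc_mul_eq (g : ℝ → ℂ) (z : ℂ) {τ : ℝ} (hτ : τ < t) :
    (t ^ (-α) : ℝ) * (((t - τ) ^ 2 / (α ^ 2 / 4)) • (Kc α z (t - τ) * g τ * (τ ^ α : ℝ))) =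
      z * cexp (-((α ^ 2 / 4 / (t - τ) : ℝ) * z ^ ((2 / α : ℝ) : ℂ))) *
        (laplaceWeight α t τ * g τ) := by
  have h_pow : (t - τ) ^ (1 - α / 2) = (t - τ) ^ 2 * (t - τ) ^ (-(α / 2 + 1)) := by
    rw [← Real.rpow_natCast, ← Real.rpow_add (sub_pos.2 hτ)]
    congr 1
    push_cast
    ring
  have h_exp : -(α ^ 2 : ℂ) * z ^ ((2 / α : ℝ) : ℂ) / (4 * (t - τ : ℝ)) =
      -((α ^ 2 / 4 / (t - τ) : ℝ) * z ^ ((2 / α : ℝ) : ℂ)) := by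
    push_cast
    rw [← div_div]
    ring
  rw [Kc, laplaceWeight, h_pow, h_exp, Complex.real_smul]
  push_cast
  ring

theorem Lc_eq_laplaceTransform (hα : 0 < α) (ht : 0 < t) (g : ℝ → ℂ) (z : ℂ) :
    Lc α t g z = z * cexp (-((α ^ 2 / 4 / t : ℝ) * z ^ ((2 / α : ℝ) : ℂ))) *
      laplaceTransform (laplaceDensity α t g) (z ^ ((2 / α : ℝ) : ℂ)) := by
  have hq : 0 < α ^ 2 / 4 := by positivity
  rw [Lc, setIntegral_Ioo_eq_laplaceTime hq ht, laplaceTransform, ← integral_const_mul,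
    ← integral_const_mul]
  refine setIntegral_congr_fun measurableSet_Ioi fun l hl => ?_
  have h_exp : cexp (-((l + α ^ 2 / 4 / t : ℝ) * z ^ ((2 / α : ℝ) : ℂ))) =
      cexp (-((α ^ 2 / 4 / t : ℝ) * z ^ ((2 / α : ℝ) : ℂ))) *
        cexp (-(z ^ ((2 / α : ℝ) : ℂ) * l)) := by
    rw [← Complex.exp_add]
    congr 1
    push_cast
    ring
  simp only [smul_Kc_mul_eq g z (laplaceTime_mem_Ioo hq ht hl).2, div_sub_laplaceTime hq.ne',
    h_exp, laplaceDensity]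
  ring

end LaplaceDensity

/-! ### The reproducing formula -/

section Reproducing

open scoped ComplexConjugate

theorem betaFn_pos {a b : ℝ} (ha : 0 < a) (hb : 0 < b) : 0 < betaFn a b :=
  div_pos (mul_pos (Real.Gamma_pos_of_pos ha) (Real.Gamma_pos_of_pos hb))
    (Real.Gamma_pos_of_pos (add_pos ha hb))

/-- The reproducing kernel of the formula for `Lc`, with respect to the measure of density
`muDens α t` on `sector α`. -/
noncomputable def sectorKernel (α t : ℝ) (w z : ℂ) : ℂ :=
  4 * w * conj z / ((α : ℂ) * (betaFn (α / 2) (α / 2) : ℝ)) *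
    cexp (-((α ^ 2 : ℂ) / (4 * (t : ℂ))) *
      (w ^ ((2 / α : ℝ) : ℂ) + conj (z ^ ((2 / α : ℝ) : ℂ)))) *
    (w ^ ((2 / α : ℝ) : ℂ) + conj (z ^ ((2 / α : ℝ) : ℂ))) ^ ((-(α + 1) : ℝ) : ℂ)

variable {α t : ℝ}

theorem cpow_half_cpow_two_div (hα : 0 < α) (hα4 : α ≤ 4) {ζ : ℂ} (hζ : 0 < ζ.re) :
    (ζ ^ ((α / 2 : ℝ) : ℂ)) ^ ((2 / α : ℝ) : ℂ) = ζ := by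
  rw [← inv_div α 2]
  exact cpow_cpow_inv_of_mem_sector (a := α / 2) (β := 2) (by positivity) (by linarith)
    (by rwa [sector_two])

theorem re_cpow_two_div_pos (hα : 0 < α) {w : ℂ} (hw : w ∈ sector α) :
    0 < (w ^ ((2 / α : ℝ) : ℂ)).re := by
  have h_mul : 2 / α * α = 2 := div_mul_cancel₀ 2 hα.ne'
  have h_mem := cpow_mem_sector (a := 2 / α) (by positivity) (by rw [h_mul]; norm_num) hw
  rwa [h_mul, sector_two] at h_mem

theorem setIntegral_sector_eq_setIntegral_re_pos (hα : 0 < α) (hα4 : α ≤ 4) (f : ℂ → ℂ) :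
    ∫ z in sector α, f z = ∫ ζ in {ζ : ℂ | 0 < ζ.re},
      ((α / 2) ^ 2 * ‖ζ‖ ^ (α - 2)) • f (ζ ^ ((α / 2 : ℝ) : ℂ)) := by
  have h_mul : α / 2 * 2 = α := div_mul_cancel₀ α two_ne_zero
  have h := setIntegral_sector_mul (a := α / 2) (β := 2) (by positivity) (by norm_num)
    (by linarith) f
  rwa [h_mul, mul_comm 2 (α / 2), h_mul, sector_two] at h

theorem rpow_norm_sub_two_mul_muDens_cpow (hα : 0 < α) (hα4 : α ≤ 4) {ζ : ℂ} (hζ : 0 < ζ.re) :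
    ‖ζ‖ ^ (α - 2) * ‖ζ ^ ((α / 2 : ℝ) : ℂ)‖ ^ 2 * muDens α t (ζ ^ ((α / 2 : ℝ) : ℂ)) =
      Real.pi⁻¹ * 2 ^ (α - 1) * betaFn (α / 2) (α / 2) *
        Real.exp (α ^ 2 / (2 * t) * ζ.re) * ζ.re ^ (α - 1) := by
  have h_norm : 0 < ‖ζ‖ := hζ.trans_le (Complex.re_le_norm ζ)
  have h_cancel : ‖ζ‖ ^ (α - 2) * (‖ζ‖ ^ (α / 2)) ^ 2 * (‖ζ‖ ^ (α / 2)) ^ (4 * (1 - α) / α) =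
      1 := by
    rw [← Real.rpow_natCast, ← Real.rpow_mul h_norm.le, ← Real.rpow_mul h_norm.le,
      ← Real.rpow_add h_norm, ← Real.rpow_add h_norm]
    convert Real.rpow_zero ‖ζ‖ using 2
    field_simp
    push_cast
    ring
  rw [muDens, cpow_half_cpow_two_div hα hα4 hζ, Complex.norm_cpow_real]
  linear_combination Real.pi⁻¹ * 2 ^ (α - 1) * betaFn (α / 2) (α / 2) *
    Real.exp (α ^ 2 / (2 * t) * ζ.re) * ζ.re ^ (α - 1) * h_cancel

theorem cexp_mul_cexp_mul_exp (α t : ℝ) (W ζ : ℂ) :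
    cexp (-((α ^ 2 / 4 / t : ℝ) * ζ)) * cexp (-((α ^ 2 : ℂ) / (4 * (t : ℂ))) * (W + conj ζ)) *
      (Real.exp (α ^ 2 / (2 * t) * ζ.re) : ℝ) = cexp (-((α ^ 2 / 4 / t : ℝ) * W)) := by
  have h_conj := Complex.add_conj ζ
  rw [Complex.ofReal_exp, ← Complex.exp_add, ← Complex.exp_add]
  congr 1
  push_cast at h_conj ⊢
  linear_combination (-(α ^ 2 : ℂ) / (4 * t)) * h_conj

theorem smul_Lc_mul_sectorKernel_mul_muDens_cpow (hα : 0 < α) (hα4 : α ≤ 4) (ht : 0 < t)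
    (g : ℝ → ℂ) (w : ℂ) {ζ : ℂ} (hζ : 0 < ζ.re) :
    ((α / 2) ^ 2 * ‖ζ‖ ^ (α - 2)) • (Lc α t g (ζ ^ ((α / 2 : ℝ) : ℂ)) *
        sectorKernel α t w (ζ ^ ((α / 2 : ℝ) : ℂ)) * muDens α t (ζ ^ ((α / 2 : ℝ) : ℂ))) =
      w * cexp (-((α ^ 2 / 4 / t : ℝ) * w ^ ((2 / α : ℝ) : ℂ))) *
          (α * 2 ^ (α - 1) / Real.pi : ℝ) *
        ζ.re ^ (α - 1) • (laplaceTransform (laplaceDensity α t g) ζ *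
          (w ^ ((2 / α : ℝ) : ℂ) + conj ζ) ^ ((-(α + 1) : ℝ) : ℂ)) := by
  have h_dens := congrArg (fun r : ℝ => (r : ℂ))
    (rpow_norm_sub_two_mul_muDens_cpow (t := t) hα hα4 hζ)
  have h_beta : (betaFn (α / 2) (α / 2) : ℂ) ≠ 0 :=
    Complex.ofReal_ne_zero.2 (betaFn_pos (by positivity) (by positivity)).ne'
  have hα₀ : (α : ℂ) ≠ 0 := Complex.ofReal_ne_zero.2 hα.ne'
  rw [Lc_eq_laplaceTransform hα ht, sectorKernel, cpow_half_cpow_two_div hα hα4 hζ,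
    ← cexp_mul_cexp_mul_exp α t (w ^ ((2 / α : ℝ) : ℂ)) ζ]
  generalize cexp (-(_ * ζ)) = e₁, cexp (_ * (_ + conj ζ)) = e₂,
    (_ + conj ζ) ^ ((-(α + 1) : ℝ) : ℂ) = p, laplaceTransform _ ζ = v
  simp only [Complex.real_smul, Complex.ofReal_mul, Complex.ofReal_div, Complex.ofReal_pow,
    Complex.ofReal_inv, Complex.ofReal_ofNat, ← Complex.mul_conj'] at h_dens ⊢
  field_simp at h_dens ⊢
  linear_combination 4 * e₁ * e₂ * v * w * p * h_dens

theorem setIntegral_sector_Lc_mul_sectorKernel_mul_muDens (hα : 0 < α) (hα4 : α ≤ 4) (ht : 0 < t)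
    {g : ℝ → ℂ} (hg : Measurable g)
    (hint : IntegrableOn (fun τ => ‖g τ‖ ^ 2 * τ ^ α) (Ioo 0 t)) {w : ℂ} (hw : w ∈ sector α) :
    ∫ z in sector α, Lc α t g z * sectorKernel α t w z * muDens α t z = Lc α t g w := by
  have h_const : α * 2 ^ (α - 1) / Real.pi * (Real.pi * 2 ^ (1 - α) / α) = 1 := by
    have h_two : (2 : ℝ) ^ (α - 1) * 2 ^ (1 - α) = 1 := by
      rw [← Real.rpow_add two_pos, sub_add_sub_cancel, sub_self, Real.rpow_zero]
    field_simp
    exact h_two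
  rw [setIntegral_sector_eq_setIntegral_re_pos hα hα4,
    setIntegral_congr_fun (measurableSet_lt measurable_const measurable_re)
      fun ζ hζ => smul_Lc_mul_sectorKernel_mul_muDens_cpow hα hα4 ht g w hζ,
    integral_const_mul, setIntegral_re_pos_laplaceTransform_mul_cpow hα
      (memLp_laplaceDensity hα ht hg hint) (re_cpow_two_div_pos hα hw),
    Lc_eq_laplaceTransform hα ht, mul_assoc _ (Complex.ofReal _), ← mul_assoc (Complex.ofReal _),
    ← Complex.ofReal_mul, h_const, Complex.ofReal_one, one_mul]

end Reproducing

theorem stmt16_general (α t : ℝ) (hα : 0 < α) (hα4 : α ≤ 4) (ht : 0 < t)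
    (g : ℝ → ℂ) (hg : Measurable g)
    (hint : IntegrableOn (fun τ => ‖g τ‖ ^ 2 * τ ^ α) (Set.Ioo 0 t))
    (w : ℂ) (hw : w ∈ sector α) :
    Lc α t g w =
      ∫ z in sector α,
        Lc α t g z *
          (4 * w * (starRingEnd ℂ) z / ((α : ℂ) * ((betaFn (α / 2) (α / 2) : ℝ) : ℂ))) *
          Complex.exp (-((α ^ 2 : ℂ) / (4 * (t : ℂ))) *
            (w ^ (((2 / α : ℝ)) : ℂ) + (starRingEnd ℂ) (z ^ (((2 / α : ℝ)) : ℂ)))) *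
          (w ^ (((2 / α : ℝ)) : ℂ) + (starRingEnd ℂ) (z ^ (((2 / α : ℝ)) : ℂ))) ^
            ((-(α + 1) : ℝ) : ℂ) *
          ((muDens α t z : ℝ) : ℂ) := by
  simpa only [sectorKernel, ← mul_assoc] using
    (setIntegral_sector_Lc_mul_sectorKernel_mul_muDens hα hα4 ht hg hint hw).symm

theorem stmt16 (α t : ℝ) (hα : 0 < α) (hα2 : α ≤ 2) (ht : 0 < t)
    (g : ℝ → ℂ) (hg : Measurable g)
    (hint : IntegrableOn (fun τ => ‖g τ‖ ^ 2 * τ ^ α) (Set.Ioo 0 t))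
    (w : ℂ) (hw : w ∈ sector α) :
    Lc α t g w =
      ∫ z in sector α,
        Lc α t g z *
          (4 * w * (starRingEnd ℂ) z / ((α : ℂ) * ((betaFn (α / 2) (α / 2) : ℝ) : ℂ))) *
          Complex.exp (-((α ^ 2 : ℂ) / (4 * (t : ℂ))) *
            (w ^ (((2 / α : ℝ)) : ℂ) + (starRingEnd ℂ) (z ^ (((2 / α : ℝ)) : ℂ)))) *
          (w ^ (((2 / α : ℝ)) : ℂ) + (starRingEnd ℂ) (z ^ (((2 / α : ℝ)) : ℂ))) ^
            ((-(α + 1) : ℝ) : ℂ) *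
          ((muDens α t z : ℝ) : ℂ) :=
  stmt16_general α t hα (hα2.trans (by norm_num)) ht g hg hint w hw
end

section
/- Fix 0 < α ≤ 2 and an integer j ≥ 0. Let f be holomorphic on the open sector Δ_α and suppose ∫_{Δ_α} |f(z)|² (Re(z^{2/α}))^{α-1} |z|^{(α-2)(α-1)/α} dA(z) < ∞. Then lim_{x→∞} x^{j+(α+1)/2} f^{(j)}(x) = 0 and lim_{x→0⁺} x^{j+(α+1)/2} f^{(j)}(x) = 0, where f^{(j)} denotes the j-th complex derivative of f evaluated at the positive real number x. -/
open MeasureTheory Filter Set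

/-!
On the sector the weight equals `|z| ^ (α - 1) * cos (2 arg z / α) ^ (α - 1)`, so it is homogeneous
of degree `α - 1`. Hence there is one `δ` such that for every `x > 0` the weight is at least
`x ^ (α - 1) / 2` on the disc `B(x, δx)`. If `|f| ^ p` is integrable against the weight for some
`p ≥ 1`, the area mean value inequality and Cauchy's estimate on that disc bound
`x ^ (j + (α + 1) / p) * |f⁽ʲ⁾(x)|` by a constant times the `p`-th root of the weighted integral
over `B(x, δx)`. As `x → ∞` or `x → 0⁺` the discs leave every point behind, so these integrals tend
to zero by dominated convergence.
-/

open Metric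
open scoped Pointwise Topology

section MeanValue

variable {E : Type*} [NormedAddCommGroup E] [NormedSpace ℂ E] [CompleteSpace E]
  {f : ℂ → E} {c : ℂ} {r R κ p : ℝ} {w : ℂ → ℝ}

theorem two_pi_mul_enorm_le_lintegral_circleMap (hf : DiffContOnCl ℂ f (ball c |R|)) :
    ENNReal.ofReal (2 * Real.pi) * ‖f c‖ₑ ≤
      ∫⁻ θ in Ioc 0 (2 * Real.pi), ‖f (circleMap c R θ)‖ₑ := by
  have mean : ∫ θ in Ioc 0 (2 * Real.pi), f (circleMap c R θ) = (2 * Real.pi) • f c := by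
    rw [← hf.circleAverage, Real.circleAverage_def, smul_inv_smul₀ Real.two_pi_pos.ne',
      intervalIntegral.integral_of_le Real.two_pi_pos.le]
  calc ENNReal.ofReal (2 * Real.pi) * ‖f c‖ₑ = ‖(2 * Real.pi) • f c‖ₑ := by
        rw [enorm_smul, Real.enorm_of_nonneg Real.two_pi_pos.le]
    _ ≤ _ := mean ▸ enorm_integral_le_lintegral_enorm _

theorem setLIntegral_ball_eq_rotation (g : ℂ → ENNReal) (a : Circle) (c : ℂ) (R : ℝ) :
    ∫⁻ z in ball c R, g z = ∫⁻ u in ball 0 R, g (c + a * u) := by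
  have preserving : MeasurePreserving (fun u : ℂ => c + a * u) :=
    (measurePreserving_add_left volume c).comp (rotation a).measurePreserving
  have embedding : MeasurableEmbedding (fun u : ℂ => c + a * u) :=
    ((rotation a).toHomeomorph.trans (Homeomorph.addLeft c)).measurableEmbedding
  have preimage : (fun u : ℂ => c + a * u) ⁻¹' ball c R = ball 0 R := by
    ext u
    simp [Circle.norm_coe]
  rw [← preserving.setLIntegral_comp_preimage_emb embedding, preimage]

theorem add_mul_mem_ball {u v : ℂ} (hu : u ∈ ball 0 R) (hv : ‖v‖ ≤ 1) : c + v * u ∈ ball c R := by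
  rw [mem_ball_zero_iff] at hu
  rw [mem_ball_iff_norm, add_sub_cancel_left, norm_mul]
  exact (mul_le_of_le_one_left (norm_nonneg u) hv).trans_lt hu

theorem two_pi_mul_enorm_le_lintegral_exp_mul (hf : DifferentiableOn ℂ f (ball c R)) {u : ℂ}
    (hu : u ∈ ball 0 R) :
    ENNReal.ofReal (2 * Real.pi) * ‖f c‖ₑ ≤
      ∫⁻ θ in Ioc 0 (2 * Real.pi), ‖f (c + Circle.exp θ * u)‖ₑ := by
  have diff : DifferentiableOn ℂ (fun v => f (c + v * u)) (closedBall 0 1) :=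
    hf.comp (by fun_prop) fun v hv => add_mul_mem_ball hu (mem_closedBall_zero_iff.1 hv)
  have diffCont : DiffContOnCl ℂ (fun v => f (c + v * u)) (ball 0 |1|) := by
    rw [abs_one]
    exact (closure_ball (0 : ℂ) one_ne_zero ▸ diff).diffContOnCl
  simpa [circleMap] using two_pi_mul_enorm_le_lintegral_circleMap diffCont

/- Averaging the rotated integrals `∫ ‖f (c + exp (iθ) u)‖ du`, all equal to the right-hand side,
over `θ` reduces the inequality to the one on circles. -/
theorem volume_ball_mul_enorm_le_setLIntegral (hf : DifferentiableOn ℂ f (ball c R)) :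
    volume (ball c R) * ‖f c‖ₑ ≤ ∫⁻ z in ball c R, ‖f z‖ₑ := by
  have measurable : AEMeasurable (Function.uncurry fun (u : ℂ) (θ : ℝ) =>
      ‖f (c + Circle.exp θ * u)‖ₑ)
      ((volume.restrict (ball 0 R)).prod (volume.restrict (Ioc 0 (2 * Real.pi)))) := by
    rw [Measure.prod_restrict]
    refine (ContinuousOn.aestronglyMeasurable ?_ (measurableSet_ball.prod measurableSet_Ioc)).enorm
    exact hf.continuousOn.comp (by fun_prop) fun q hq =>
      add_mul_mem_ball hq.1 (Circle.norm_coe _).le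
  have averaged : ENNReal.ofReal (2 * Real.pi) * (volume (ball c R) * ‖f c‖ₑ) ≤
      ENNReal.ofReal (2 * Real.pi) * ∫⁻ z in ball c R, ‖f z‖ₑ :=
    calc _ = ∫⁻ _ in ball (0 : ℂ) R, ENNReal.ofReal (2 * Real.pi) * ‖f c‖ₑ := by
          rw [setLIntegral_const, Complex.volume_ball, Complex.volume_ball]
          ring
      _ ≤ ∫⁻ u in ball 0 R, ∫⁻ θ in Ioc 0 (2 * Real.pi), ‖f (c + Circle.exp θ * u)‖ₑ :=
          setLIntegral_mono' measurableSet_ball fun u hu =>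
            two_pi_mul_enorm_le_lintegral_exp_mul hf hu
      _ = ∫⁻ θ in Ioc 0 (2 * Real.pi), ∫⁻ u in ball 0 R, ‖f (c + Circle.exp θ * u)‖ₑ :=
          lintegral_lintegral_swap measurable
      _ = _ := by
          simp_rw [← setLIntegral_ball_eq_rotation (fun z => ‖f z‖ₑ)]
          rw [setLIntegral_const, Real.volume_Ioc, sub_zero, mul_comm]
  rwa [ENNReal.mul_le_mul_iff_right (by simpa using Real.pi_pos) ENNReal.ofReal_ne_top]
    at averaged

theorem volume_ball_mul_enorm_rpow_le_setLIntegral (hp : 1 ≤ p) (hR : 0 < R)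
    (hf : DifferentiableOn ℂ f (ball c R)) :
    volume (ball c R) * ‖f c‖ₑ ^ p ≤ ∫⁻ z in ball c R, ‖f z‖ₑ ^ p := by
  have p_pos : 0 < p := one_pos.trans_le hp
  set V := volume (ball c R) with hV
  set I := ∫⁻ z in ball c R, ‖f z‖ₑ ^ p with hI
  have V_ne_zero : V ≠ 0 := (measure_ball_pos volume c hR).ne'
  have V_ne_top : V ≠ ⊤ := measure_ball_ne_top
  have hoelder : V * ‖f c‖ₑ ≤ I ^ (1 / p) * V ^ (1 - 1 / p) := by
    refine (volume_ball_mul_enorm_le_setLIntegral hf).trans ?_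
    simpa [eLpNorm'_eq_lintegral_enorm, hV, hI, -Complex.volume_ball] using
      eLpNorm'_le_eLpNorm'_mul_rpow_measure_univ (μ := volume.restrict (ball c R)) one_pos hp
        (hf.continuousOn.aestronglyMeasurable measurableSet_ball)
  have powered : V ^ (p - 1) * (V * ‖f c‖ₑ ^ p) ≤ V ^ (p - 1) * I :=
    calc _ = (V * ‖f c‖ₑ) ^ p := by
          rw [ENNReal.mul_rpow_of_nonneg _ _ p_pos.le, ← mul_assoc]
          nth_rw 2 [← ENNReal.rpow_one V]
          rw [← ENNReal.rpow_add _ _ V_ne_zero V_ne_top, sub_add_cancel]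
      _ ≤ (I ^ (1 / p) * V ^ (1 - 1 / p)) ^ p := by gcongr
      _ = V ^ (p - 1) * I := by
          rw [ENNReal.mul_rpow_of_nonneg _ _ p_pos.le, ← ENNReal.rpow_mul, ← ENNReal.rpow_mul,
            one_div_mul_cancel p_pos.ne', ENNReal.rpow_one, sub_mul, one_mul,
            one_div_mul_cancel p_pos.ne', mul_comm]
  rwa [ENNReal.mul_le_mul_iff_right (ENNReal.rpow_pos V_ne_zero.bot_lt V_ne_top).ne'
    (ENNReal.rpow_ne_top_of_ne_zero V_ne_zero V_ne_top)] at powered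

theorem mul_norm_rpow_le_setIntegral_ball (hp : 1 ≤ p) (hR : 0 < R) (hκ : 0 ≤ κ)
    (hf : DifferentiableOn ℂ f (ball c R))
    (hint : IntegrableOn (fun z => ‖f z‖ ^ p * w z) (ball c R)) (hw : ∀ z ∈ ball c R, κ ≤ w z) :
    Real.pi * R ^ 2 * κ * ‖f c‖ ^ p ≤ ∫ z in ball c R, ‖f z‖ ^ p * w z := by
  have p_nonneg : 0 ≤ p := zero_le_one.trans hp
  have nonneg (z : ℂ) (hz : z ∈ ball c R) : 0 ≤ ‖f z‖ ^ p * w z :=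
    mul_nonneg (by positivity) (hκ.trans (hw z hz))
  have volume_eq : volume (ball c R) = ENNReal.ofReal (Real.pi * R ^ 2) := by
    rw [Complex.volume_ball, mul_comm, ENNReal.ofReal_mul Real.pi_nonneg,
      ENNReal.ofReal_pow hR.le, ENNReal.ofReal_coe_nnreal.symm, NNReal.coe_real_pi]
  rw [← ENNReal.ofReal_le_ofReal_iff (setIntegral_nonneg measurableSet_ball nonneg),
    ofReal_integral_eq_lintegral_ofReal hint
      ((ae_restrict_iff' measurableSet_ball).2 (ae_of_all _ nonneg))]
  calc ENNReal.ofReal (Real.pi * R ^ 2 * κ * ‖f c‖ ^ p)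
      = ENNReal.ofReal κ * (volume (ball c R) * ‖f c‖ₑ ^ p) := by
        rw [ENNReal.ofReal_mul (by positivity), mul_comm _ κ, ENNReal.ofReal_mul hκ, volume_eq,
          ← ENNReal.ofReal_rpow_of_nonneg (norm_nonneg _) p_nonneg, ofReal_norm, mul_assoc]
    _ ≤ ENNReal.ofReal κ * ∫⁻ z in ball c R, ‖f z‖ₑ ^ p := by
        gcongr
        exact volume_ball_mul_enorm_rpow_le_setLIntegral hp hR hf
    _ = ∫⁻ z in ball c R, ENNReal.ofReal κ * ‖f z‖ₑ ^ p :=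
        (lintegral_const_mul' _ _ ENNReal.ofReal_ne_top).symm
    _ ≤ ∫⁻ z in ball c R, ENNReal.ofReal (‖f z‖ ^ p * w z) := by
        refine setLIntegral_mono' measurableSet_ball fun z hz => ?_
        rw [ENNReal.ofReal_mul (by positivity), mul_comm,
          ← ENNReal.ofReal_rpow_of_nonneg (norm_nonneg _) p_nonneg, ofReal_norm]
        gcongr
        exact hw z hz

theorem norm_le_rpow_setIntegral_ball (hp : 1 ≤ p) (hr : 0 < r) (hκ : 0 < κ)
    (hf : DifferentiableOn ℂ f (ball c R))
    (hint : IntegrableOn (fun z => ‖f z‖ ^ p * w z) (ball c R)) (hw : ∀ z ∈ ball c R, κ ≤ w z)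
    {z : ℂ} (hz : ball z r ⊆ ball c R) :
    ‖f z‖ ≤ ((∫ u in ball c R, ‖f u‖ ^ p * w u) / (Real.pi * r ^ 2 * κ)) ^ p⁻¹ := by
  have nonneg (u : ℂ) (hu : u ∈ ball c R) : 0 ≤ ‖f u‖ ^ p * w u :=
    mul_nonneg (by positivity) (hκ.le.trans (hw u hu))
  rw [Real.le_rpow_inv_iff_of_pos (norm_nonneg _)
    (div_nonneg (setIntegral_nonneg measurableSet_ball nonneg) (by positivity))
    (one_pos.trans_le hp), le_div_iff₀' (by positivity)]
  calc _ ≤ ∫ u in ball z r, ‖f u‖ ^ p * w u :=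
        mul_norm_rpow_le_setIntegral_ball hp hr hκ.le (hf.mono hz) (hint.mono_set hz)
          fun u hu => hw u (hz hu)
    _ ≤ ∫ u in ball c R, ‖f u‖ ^ p * w u :=
        setIntegral_mono_set hint ((ae_restrict_iff' measurableSet_ball).2 (ae_of_all _ nonneg))
          hz.eventuallyLE

theorem norm_iteratedDeriv_le_rpow_setIntegral_ball (hp : 1 ≤ p) (hR : 0 < R) (hκ : 0 < κ)
    (hf : DifferentiableOn ℂ f (ball c R))
    (hint : IntegrableOn (fun z => ‖f z‖ ^ p * w z) (ball c R)) (hw : ∀ z ∈ ball c R, κ ≤ w z)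
    (j : ℕ) :
    ‖iteratedDeriv j f c‖ ≤ j.factorial *
      ((∫ z in ball c R, ‖f z‖ ^ p * w z) / (Real.pi * (R / 2) ^ 2 * κ)) ^ p⁻¹ / (R / 2) ^ j := by
  have diffCont : DiffContOnCl ℂ f (ball c (R / 2)) := by
    refine (hf.mono ?_).diffContOnCl
    rw [closure_ball _ (half_pos hR).ne']
    exact closedBall_subset_ball (half_lt_self hR)
  refine Complex.norm_iteratedDeriv_le_of_forall_mem_sphere_norm_le j (half_pos hR) diffCont
    fun z hz => norm_le_rpow_setIntegral_ball hp (half_pos hR) hκ hf hint hw ?_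
  exact ball_subset_ball' (by rw [mem_sphere.1 hz, add_halves])

theorem rpow_mul_norm_iteratedDeriv_ofReal_le {β δ x : ℝ} (hp : 1 ≤ p) (hδ : 0 < δ) (hκ : 0 < κ)
    (hx : 0 < x) (hf : DifferentiableOn ℂ f (ball x (δ * x)))
    (hint : IntegrableOn (fun z => ‖f z‖ ^ p * w z) (ball x (δ * x)))
    (hw : ∀ z ∈ ball (x : ℂ) (δ * x), κ * x ^ β ≤ w z) (j : ℕ) :
    x ^ (j + (β + 2) / p) * ‖iteratedDeriv j f x‖ ≤ j.factorial *
      ((∫ z in ball (x : ℂ) (δ * x), ‖f z‖ ^ p * w z) / (Real.pi * (δ / 2) ^ 2 * κ)) ^ p⁻¹ /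
        (δ / 2) ^ j := by
  set I := ∫ z in ball (x : ℂ) (δ * x), ‖f z‖ ^ p * w z
  set C := Real.pi * (δ / 2) ^ 2 * κ
  have I_nonneg : 0 ≤ I := setIntegral_nonneg measurableSet_ball fun z hz =>
    mul_nonneg (by positivity) ((by positivity : 0 ≤ κ * x ^ β).trans (hw z hz))
  have cauchy := norm_iteratedDeriv_le_rpow_setIntegral_ball hp (by positivity : 0 < δ * x)
    (by positivity : 0 < κ * x ^ β) hf hint hw j
  have scale : Real.pi * (δ * x / 2) ^ 2 * (κ * x ^ β) = C * x ^ (β + 2) := by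
    rw [Real.rpow_add hx, Real.rpow_two]
    ring
  calc x ^ (j + (β + 2) / p) * ‖iteratedDeriv j f x‖
      ≤ x ^ (j + (β + 2) / p) *
          (j.factorial * (I / (C * x ^ (β + 2))) ^ p⁻¹ / (δ * x / 2) ^ j) := by
        rw [← scale]
        gcongr
    _ = j.factorial * (I / C) ^ p⁻¹ / (δ / 2) ^ j := by
        rw [← div_div, Real.div_rpow (by positivity) (by positivity), ← Real.rpow_mul hx.le,
          Real.rpow_add hx, Real.rpow_natCast, ← div_eq_mul_inv, mul_div_right_comm δ, mul_pow]
        field_simp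

end MeanValue

theorem tendsto_setIntegral_zero_of_eventually_notMem {X ι G : Type*} [MeasurableSpace X]
    {μ : Measure X} [NormedAddCommGroup G] [NormedSpace ℝ G] {g : X → G} (hg : Integrable g μ)
    {l : Filter ι} [l.IsCountablyGenerated] {A : ι → Set X} (hA : ∀ i, MeasurableSet (A i))
    (hl : ∀ᵐ z ∂μ, ∀ᶠ i in l, z ∉ A i) :
    Tendsto (fun i => ∫ z in A i, g z ∂μ) l (𝓝 0) := by
  have dominated : Tendsto (fun i => ∫ z, (A i).indicator g z ∂μ) l (𝓝 (∫ _, (0 : G) ∂μ)) := by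
    refine tendsto_integral_filter_of_dominated_convergence (fun z => ‖g z‖)
      (.of_forall fun i => hg.aestronglyMeasurable.indicator (hA i))
      (.of_forall fun i => .of_forall fun z => norm_indicator_le_norm_self g z) hg.norm ?_
    filter_upwards [hl] with z hz
    exact tendsto_const_nhds.congr' (hz.mono fun i hi => (indicator_of_notMem hi g).symm)
  simpa only [integral_zero, integral_indicator (hA _)] using dominated

section Discs

variable {δ : ℝ} {z : ℂ}

theorem eventually_atTop_notMem_ball_mul (hδ : δ < 1) (z : ℂ) :
    ∀ᶠ x : ℝ in atTop, z ∉ ball (x : ℂ) (δ * x) := by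
  filter_upwards [eventually_ge_atTop 0, eventually_ge_atTop (‖z‖ / (1 - δ))] with x hx hzx
  rw [div_le_iff₀ (sub_pos.2 hδ)] at hzx
  rw [mem_ball_iff_norm', not_lt]
  have reverse_triangle := norm_sub_norm_le (x : ℂ) z
  rw [Complex.norm_of_nonneg hx] at reverse_triangle
  linarith

theorem eventually_nhdsGT_zero_notMem_ball_mul (hδ : 0 ≤ δ) (hz : z ≠ 0) :
    ∀ᶠ x : ℝ in 𝓝[>] 0, z ∉ ball (x : ℂ) (δ * x) := by
  have small : ∀ᶠ x : ℝ in 𝓝[>] 0, x < ‖z‖ / (1 + δ) :=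
    nhdsWithin_le_nhds (gt_mem_nhds (div_pos (norm_pos_iff.2 hz) (by linarith)))
  filter_upwards [self_mem_nhdsWithin, small] with x hx hxz
  rw [lt_div_iff₀ (by linarith)] at hxz
  rw [mem_ball_iff_norm, not_lt]
  have reverse_triangle := norm_sub_norm_le z (x : ℂ)
  rw [Complex.norm_of_nonneg (le_of_lt hx)] at reverse_triangle
  linarith

theorem exists_forall_mem_ball_mul_of_eventually {P : ℂ → Prop} (hP : ∀ᶠ u in 𝓝 1, P u) :
    ∃ δ ∈ Ioo (0 : ℝ) 1, ∀ x : ℝ, 0 < x → ∀ z ∈ ball (x : ℂ) (δ * x), ∃ u, P u ∧ z = x * u := by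
  obtain ⟨ε, ε_pos, hε⟩ := Metric.eventually_nhds_iff_ball.1 hP
  refine ⟨min ε (1 / 2), ⟨by positivity, by linarith [min_le_right ε (1 / 2)]⟩, fun x hx z hz => ?_⟩
  have dilation : (x : ℂ) • ball (1 : ℂ) (min ε (1 / 2)) = ball (x : ℂ) (min ε (1 / 2) * x) := by
    rw [_root_.smul_ball (Complex.ofReal_ne_zero.2 hx.ne'), smul_eq_mul, mul_one,
      Complex.norm_of_nonneg hx.le, mul_comm]
  obtain ⟨u, hu, rfl⟩ := mem_smul_set.1 (dilation ▸ hz)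
  exact ⟨u, hε u (ball_subset_ball (min_le_left _ _) hu), rfl⟩

end Discs

theorem tendsto_rpow_smul_iteratedDeriv_of_integrableOn {E : Type*} [NormedAddCommGroup E]
    [NormedSpace ℂ E] [CompleteSpace E] {f : ℂ → E} {w : ℂ → ℝ} {s : Set ℂ} {p β δ κ : ℝ}
    (hp : 1 ≤ p) (hδ : 0 < δ) (hκ : 0 < κ) (hf : DifferentiableOn ℂ f s)
    (hint : IntegrableOn (fun z => ‖f z‖ ^ p * w z) s)
    (hw : ∀ x : ℝ, 0 < x → ∀ z ∈ ball (x : ℂ) (δ * x), z ∈ s ∧ κ * x ^ β ≤ w z)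
    {l : Filter ℝ} [l.IsCountablyGenerated] (hl_pos : ∀ᶠ x in l, 0 < x)
    (hl : ∀ z : ℂ, z ≠ 0 → ∀ᶠ x : ℝ in l, z ∉ ball (x : ℂ) (δ * x)) (j : ℕ) :
    Tendsto (fun x : ℝ => x ^ (j + (β + 2) / p) • iteratedDeriv j f (x : ℂ)) l (𝓝 0) := by
  have p_pos : 0 < p := one_pos.trans_le hp
  set A : ℝ → Set ℂ := fun x => ball (x : ℂ) (δ * x)
  set I : ℝ → ℝ := fun x => ∫ z in A x, ‖f z‖ ^ p * w z
  set C : ℝ := Real.pi * (δ / 2) ^ 2 * κ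
  have hA (x : ℝ) (hx : 0 < x) : A x ⊆ s := fun z hz => (hw x hx z hz).1
  have I_tendsto : Tendsto I l (𝓝 0) := by
    refine (tendsto_setIntegral_zero_of_eventually_notMem hint (fun x => measurableSet_ball)
      (ae_restrict_of_ae ((Measure.ae_ne volume 0).mono hl))).congr' ?_
    filter_upwards [hl_pos] with x hx
    rw [Measure.restrict_restrict_of_subset (hA x hx)]
  have bound_tendsto : Tendsto (fun x => j.factorial * (I x / C) ^ p⁻¹ / (δ / 2) ^ j) l (𝓝 0) := by
    simpa [p_pos.ne'] using (((I_tendsto.div_const C).rpow_const (p := p⁻¹)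
      (.inr (by positivity))).const_mul (j.factorial : ℝ)).div_const ((δ / 2) ^ j)
  refine squeeze_zero_norm' ?_ bound_tendsto
  filter_upwards [hl_pos] with x hx
  rw [norm_smul, Real.norm_of_nonneg (by positivity)]
  exact rpow_mul_norm_iteratedDeriv_ofReal_le hp hδ hκ hx (hf.mono (hA x hx))
    (hint.mono_set (hA x hx)) (fun z hz => (hw x hx z hz).2) j

section SectorWeight

variable {α : ℝ} {z : ℂ}

/-- The weight `Re(z^{2/α})^{α-1} |z|^{(α-2)(α-1)/α}` of the Bergman-type space on `Δ_α`. -/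
noncomputable def sectorWeight (α : ℝ) (z : ℂ) : ℝ :=
  ((z ^ (((2 / α : ℝ)) : ℂ)).re) ^ (α - 1) * ‖z‖ ^ ((α - 2) * (α - 1) / α)

theorem cos_arg_mul_pos (hα : 0 < α) (hz : z ∈ sector α) : 0 < Real.cos (z.arg * (2 / α)) := by
  refine Real.cos_pos_of_mem_Ioo (abs_lt.1 ?_)
  calc |z.arg * (2 / α)| = |z.arg| * (2 / α) := by
        rw [abs_mul, abs_of_pos (div_pos two_pos hα)]
    _ < Real.pi * α / 4 * (2 / α) := by
        gcongr
        exact hz.2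
    _ = Real.pi / 2 := by
        field_simp
        norm_num

theorem sectorWeight_eq (hα : 0 < α) (hz : z ∈ sector α) :
    sectorWeight α z = ‖z‖ ^ (α - 1) * Real.cos (z.arg * (2 / α)) ^ (α - 1) := by
  have norm_pos : 0 < ‖z‖ := norm_pos_iff.2 hz.1
  have exponent : 2 / α * (α - 1) + (α - 2) * (α - 1) / α = α - 1 := by
    field_simp
    ring
  rw [sectorWeight, Complex.cpow_ofReal_re, Real.mul_rpow (by positivity)
    (cos_arg_mul_pos hα hz).le, ← Real.rpow_mul norm_pos.le, mul_right_comm,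
    ← Real.rpow_add norm_pos, exponent]

theorem ofReal_mul_mem_sector {x : ℝ} (hx : 0 < x) (hz : z ∈ sector α) :
    (x : ℂ) * z ∈ sector α :=
  ⟨mul_ne_zero (by exact_mod_cast hx.ne') hz.1, by rw [Complex.arg_real_mul z hx]; exact hz.2⟩

theorem sectorWeight_ofReal_mul (hα : 0 < α) {x : ℝ} (hx : 0 < x) (hz : z ∈ sector α) :
    sectorWeight α (x * z) = x ^ (α - 1) * sectorWeight α z := by
  rw [sectorWeight_eq hα hz, sectorWeight_eq hα (ofReal_mul_mem_sector hx hz),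
    Complex.arg_real_mul z hx, norm_mul, Complex.norm_of_nonneg hx.le,
    Real.mul_rpow hx.le (norm_nonneg z), mul_assoc]

theorem sector_mem_nhds_one (hα : 0 < α) : sector α ∈ 𝓝 1 := by
  have abs_arg_continuousAt : ContinuousAt (fun z : ℂ => |z.arg|) 1 :=
    (Complex.continuousAt_arg Complex.one_mem_slitPlane).abs
  have abs_arg_one_lt : |(1 : ℂ).arg| < Real.pi * α / 4 := by
    rw [Complex.arg_one, abs_zero]
    positivity
  exact (eventually_ne_nhds one_ne_zero).and
    (abs_arg_continuousAt.eventually (gt_mem_nhds abs_arg_one_lt))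

theorem continuousAt_sectorWeight_one (α : ℝ) : ContinuousAt (sectorWeight α) 1 := by
  have re_cpow : ContinuousAt (fun z : ℂ => (z ^ (((2 / α : ℝ)) : ℂ)).re) 1 :=
    Complex.continuous_re.continuousAt.comp
      (continuousAt_id.cpow continuousAt_const Complex.one_mem_slitPlane)
  exact (re_cpow.rpow_const (.inl (by simp))).mul
    (continuous_norm.continuousAt.rpow_const (.inl (by simp)))

theorem exists_ball_mul_subset_sector_sectorWeight_ge (hα : 0 < α) :
    ∃ δ ∈ Ioo (0 : ℝ) 1, ∀ x : ℝ, 0 < x → ∀ z ∈ ball (x : ℂ) (δ * x),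
      z ∈ sector α ∧ 1 / 2 * x ^ (α - 1) ≤ sectorWeight α z := by
  have weight_one : sectorWeight α 1 = 1 := by simp [sectorWeight]
  have weight_ge : ∀ᶠ u in 𝓝 1, 1 / 2 ≤ sectorWeight α u :=
    (continuousAt_sectorWeight_one α).eventually (le_mem_nhds (by rw [weight_one]; norm_num))
  obtain ⟨δ, hδ, hball⟩ := exists_forall_mem_ball_mul_of_eventually
    (P := fun u => u ∈ sector α ∧ 1 / 2 ≤ sectorWeight α u)
    (Filter.inter_mem (sector_mem_nhds_one hα) weight_ge)
  refine ⟨δ, hδ, fun x hx z hz => ?_⟩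
  obtain ⟨u, ⟨hu, hwu⟩, rfl⟩ := hball x hx z hz
  refine ⟨ofReal_mul_mem_sector hx hu, ?_⟩
  rw [sectorWeight_ofReal_mul hα hx hu, mul_comm]
  gcongr

end SectorWeight

theorem stmt19_general {E : Type*} [NormedAddCommGroup E] [NormedSpace ℂ E] [CompleteSpace E]
    {α p : ℝ} (hα : 0 < α) (hp : 1 ≤ p) (j : ℕ) {f : ℂ → E}
    (hf : DifferentiableOn ℂ f (sector α))
    (hfint : IntegrableOn
      (fun z => ‖f z‖ ^ p * ((z ^ (((2 / α : ℝ)) : ℂ)).re) ^ (α - 1) *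
        ‖z‖ ^ ((α - 2) * (α - 1) / α)) (sector α)) :
    Tendsto (fun x : ℝ => x ^ (j + (α + 1) / p) • iteratedDeriv j f (x : ℂ)) atTop (𝓝 0) ∧
    Tendsto (fun x : ℝ => x ^ (j + (α + 1) / p) • iteratedDeriv j f (x : ℂ)) (𝓝[>] 0) (𝓝 0) := by
  obtain ⟨δ, ⟨δ_pos, δ_lt_one⟩, hδ⟩ := exists_ball_mul_subset_sector_sectorWeight_ge hα
  have weighted : IntegrableOn (fun z => ‖f z‖ ^ p * sectorWeight α z) (sector α) := by
    simpa only [sectorWeight, mul_assoc] using hfint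
  rw [show α + 1 = α - 1 + 2 by ring]
  exact ⟨tendsto_rpow_smul_iteratedDeriv_of_integrableOn hp δ_pos one_half_pos hf weighted hδ
      (eventually_gt_atTop 0) (fun z _ => eventually_atTop_notMem_ball_mul δ_lt_one z) j,
    tendsto_rpow_smul_iteratedDeriv_of_integrableOn hp δ_pos one_half_pos hf weighted hδ
      self_mem_nhdsWithin (fun _ hz => eventually_nhdsGT_zero_notMem_ball_mul δ_pos.le hz) j⟩

theorem stmt19 (α : ℝ) (hα : 0 < α) (hα2 : α ≤ 2) (j : ℕ)
    (f : ℂ → ℂ) (hf : DifferentiableOn ℂ f (sector α))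
    (hfint : IntegrableOn
      (fun z => ‖f z‖ ^ 2 * ((z ^ (((2 / α : ℝ)) : ℂ)).re) ^ (α - 1) *
        ‖z‖ ^ ((α - 2) * (α - 1) / α)) (sector α)) :
    Tendsto (fun x : ℝ => ((x ^ ((j : ℝ) + (α + 1) / 2) : ℝ) : ℂ) *
        iteratedDeriv j f (x : ℂ)) atTop (nhds 0) ∧
    Tendsto (fun x : ℝ => ((x ^ ((j : ℝ) + (α + 1) / 2) : ℝ) : ℂ) *
        iteratedDeriv j f (x : ℂ)) (nhdsWithin 0 (Set.Ioi 0)) (nhds 0) := by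
  simpa only [Complex.real_smul] using
    stmt19_general hα one_le_two j hf (by simpa only [Real.rpow_two] using hfint)
end
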